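/- arXiv:2309.13768 — 2 statements merged into one kernel-verified Lean document; each statement's English description precedes it below -/
import Mathlib

section
/- Let p, q be integers with min(p,q) ≥ 2. Let Ω = {Z ∈ M_{p×q}(ℂ) : I_p − Z Z^H is positive definite} be the type I classical domain with generic norm N(Z) = det(I_p − Z Z^H), and let Σ = {(Z,ξ) ∈ Ω × ℂ : |ξ|² = N(Z)} and D = {(Z,ξ) ∈ Ω × ℂ : |ξ|² < N(Z)}, subsets of M_{p×q}(ℂ) × ℂ. Let U ⊆ M_{p×q}(ℂ) × ℂ be a connected open set with U ∩ Σ ≠ ∅ and let F : U → M_{p×q}(ℂ) × ℂ be a nonconstant holomorphic map with F(U ∩ Σ) ⊆ Σ. Then there exist a biholomorphism ψ : Ω → Ω and a holomorphic function φ : Ω → ℂ with φ(Z) ≠ 0 for all Z ∈ Ω, such that det(I_p − ψ(Z)ψ(Z)^H) = |φ(Z)|²·det(I_p − Z Z^H) for all Z ∈ Ω, and the map (Z,ξ) ↦ (ψ(Z), ξ·φ(Z)) coincides with F on some nonempty open subset of U; in particular this map is a biholomorphism from D onto D. -/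
noncomputable section

open Complex Matrix
open scoped ComplexOrder

/-- `Biholo f s t`: `f` is a biholomorphism from `s` onto `t`. -/
def Biholo {E F : Type*} [NormedAddCommGroup E] [NormedSpace ℂ E]
    [NormedAddCommGroup F] [NormedSpace ℂ F]
    (f : E → F) (s : Set E) (t : Set F) : Prop :=
  DifferentiableOn ℂ f s ∧ Set.MapsTo f s t ∧
    ∃ g : F → E, DifferentiableOn ℂ g t ∧ Set.MapsTo g t s ∧
      Set.LeftInvOn g f s ∧ Set.RightInvOn g f t

/-- The type I classical domain `D^I_{p,q} = {Z : I_p − Z Zᴴ is positive definite}`,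
with `p × q` matrices identified with `Fin p → Fin q → ℂ`. -/
def typeIDomain (p q : ℕ) : Set (Fin p → Fin q → ℂ) :=
  {Z | ((1 : Matrix (Fin p) (Fin p) ℂ) - Matrix.of Z * (Matrix.of Z)ᴴ).PosDef}

/-- The generic norm `N(Z) = det(I_p − Z Zᴴ)` of the type I domain (its real part;
the determinant is real on the domain since `I_p − Z Zᴴ` is Hermitian). -/
def genNormI {p q : ℕ} (Z : Fin p → Fin q → ℂ) : ℝ :=
  (((1 : Matrix (Fin p) (Fin p) ℂ) - Matrix.of Z * (Matrix.of Z)ᴴ).det).re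

/-- The circle bundle `Σ = {(Z,ξ) ∈ Ω × ℂ : |ξ|² = N(Z)}`. -/
def circTypeI (p q : ℕ) : Set ((Fin p → Fin q → ℂ) × ℂ) :=
  {P | P.1 ∈ typeIDomain p q ∧ Complex.normSq P.2 = genNormI P.1}

/-- The disc bundle `D = {(Z,ξ) ∈ Ω × ℂ : |ξ|² < N(Z)}`. -/
def discTypeI (p q : ℕ) : Set ((Fin p → Fin q → ℂ) × ℂ) :=
  {P | P.1 ∈ typeIDomain p q ∧ Complex.normSq P.2 < genNormI P.1}

open Filter Topology

set_option linter.unusedSectionVars false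

section SeveralVariables

variable {E F : Type*} [NormedAddCommGroup E] [NormedSpace ℂ E]
  [NormedAddCommGroup F] [NormedSpace ℂ F]

/-- Identity theorem on a convex open set, in any number of variables. -/
lemma eqOn_zero_of_convex_of_eventually [CompleteSpace F] {B : Set E} (hB : Convex ℝ B)
    (hBo : IsOpen B)
    {G : E → F} (hG : DifferentiableOn ℂ G B) {y : E} (hy : y ∈ B)
    (h0 : ∀ᶠ x in 𝓝 y, G x = 0) {z : E} (hz : z ∈ B) : G z = 0 := by
  let l : ℂ → E := fun t => y + t • (z - y)
  have hl : Continuous l := by fun_prop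
  have hld : Differentiable ℂ l := by fun_prop
  have hTo : IsOpen (l ⁻¹' B) := hBo.preimage hl
  have hTc : Convex ℝ (l ⁻¹' B) := by
    intro s hs t ht a b ha hb hab
    have : l (a • s + b • t) = a • l s + b • l t := by
      simp only [l, smul_add, add_smul, smul_assoc]
      have : y = a • y + b • y := by rw [← add_smul, hab, one_smul]
      nth_rewrite 1 [this]
      abel
    change l (a • s + b • t) ∈ B
    rw [this]
    exact hB hs ht ha hb hab
  have hd : DifferentiableOn ℂ (fun t => G (l t)) (l ⁻¹' B) :=
    hG.comp hld.differentiableOn (fun t ht => ht)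
  have hl0 : l 0 = y := by simp [l]
  have hl1 : l 1 = z := by simp [l]
  have hev : (fun t => G (l t)) =ᶠ[𝓝 (0 : ℂ)] 0 := by
    have : Tendsto l (𝓝 0) (𝓝 y) := by
      have := hl.tendsto 0
      rwa [hl0] at this
    exact this.eventually h0
  have := (hd.analyticOnNhd hTo).eqOn_zero_of_preconnected_of_eventuallyEq_zero
    hTc.isPreconnected (by simpa [hl0] using hy : (0 : ℂ) ∈ l ⁻¹' B) hev
    (by simpa [hl1] using hz : (1 : ℂ) ∈ l ⁻¹' B)
  simpa [hl1] using this

/-- Identity theorem on a connected open set, in any number of variables. -/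
lemma eqOn_const_of_eventually [CompleteSpace F] {U : Set E} (hU : IsOpen U)
    (hUc : IsPreconnected U) {G : E → F} (hG : DifferentiableOn ℂ G U) {y : E} (hy : y ∈ U)
    {c : F} (h0 : ∀ᶠ x in 𝓝 y, G x = c) : Set.EqOn G (fun _ => c) U := by
  let A : Set E := {x | ∀ᶠ x' in 𝓝 x, G x' = c}
  have hA : IsOpen A := isOpen_setOfPred_eventually_nhds
  have hsub : U ⊆ A := by
    apply hUc.subset_of_closure_inter_subset hA ⟨y, hy, h0⟩
    rintro x ⟨hx, hxU⟩
    obtain ⟨r, hr, hrU⟩ := Metric.isOpen_iff.1 hU x hxU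
    obtain ⟨w, hwA, hwx⟩ := Metric.mem_closure_iff.1 hx r hr
    have hwb : w ∈ Metric.ball x r := by rwa [Metric.mem_ball, dist_comm]
    have hw : ∀ᶠ x' in 𝓝 w, G x' - c = 0 := by
      filter_upwards [hwA] with x' hx'
      simp [hx']
    have hd : DifferentiableOn ℂ (fun x => G x - c) (Metric.ball x r) :=
      (hG.mono hrU).sub_const c
    filter_upwards [Metric.ball_mem_nhds x hr] with z hz
    exact sub_eq_zero.1 (eqOn_zero_of_convex_of_eventually (convex_ball x r) Metric.isOpen_ball hd
      hwb hw hz)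
  exact fun x hx => (hsub hx).self_of_nhds

/-- A holomorphic function vanishing at the fixed points of a conjugation vanishes. -/
lemma eventually_eq_zero_of_fixed [CompleteSpace F] (σ : E ≃ₗᵢ⋆[ℂ] E) (hσ : ∀ x, σ (σ x) = x)
    {x₀ : E} (hx₀ : σ x₀ = x₀) {K : E → F} (hK : ∀ᶠ x in 𝓝 x₀, DifferentiableAt ℂ K x)
    (h0 : ∀ᶠ x in 𝓝 x₀, σ x = x → K x = 0) : ∀ᶠ x in 𝓝 x₀, K x = 0 := by
  obtain ⟨r, hr, hball⟩ := Metric.eventually_nhds_iff_ball.1 (hK.and h0)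
  have hr4 : 0 < r / 4 := by positivity
  filter_upwards [Metric.ball_mem_nhds x₀ hr4] with z hz
  let a : E := (1 / 2 : ℂ) • (z + σ z)
  let b : E := (-I / 2) • (z - σ z)
  have hσa : σ a = a := by
    simp only [a, map_smulₛₗ, map_add, hσ]
    rw [add_comm]; congr 1; simp [Complex.conj_ofNat]
  have hσb : σ b = b := by
    simp only [b, map_smulₛₗ, map_sub, hσ]
    rw [← neg_sub, smul_neg, ← neg_smul]; congr 1; simp [neg_div, Complex.conj_ofNat]
  have hab : a + I • b = z := by
    simp only [a, b, smul_smul]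
    have : I * (-I / 2) = 1 / 2 := by
      linear_combination (-1 / 2) * I_mul_I
    rw [this, ← smul_add]
    have : z + σ z + (z - σ z) = (2 : ℂ) • z := by rw [two_smul]; abel
    rw [this, smul_smul]; norm_num
  have hσz : ‖σ z - x₀‖ < r / 4 := by
    rw [← hx₀, ← map_sub, LinearIsometryEquiv.norm_map]
    simpa [dist_eq_norm] using hz
  have hz' : ‖z - x₀‖ < r / 4 := by simpa [dist_eq_norm] using hz
  have ha : ‖a - x₀‖ < r / 4 := by
    have : a - x₀ = (1 / 2 : ℂ) • ((z - x₀) + (σ z - x₀)) := by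
      simp only [a]
      have : x₀ = (1 / 2 : ℂ) • (x₀ + x₀) := by
        rw [← two_smul ℂ, smul_smul]; norm_num
      nth_rewrite 1 [this]
      rw [← smul_sub]; congr 1; abel
    rw [this, norm_smul]
    have := norm_add_le (z - x₀) (σ z - x₀)
    have h2 : ‖(1 / 2 : ℂ)‖ = 1 / 2 := by simp
    rw [h2]
    linarith
  have hb : ‖b‖ < r / 4 := by
    have : b = (-I / 2) • ((z - x₀) - (σ z - x₀)) := by simp [b]
    rw [this, norm_smul]
    have := norm_sub_le (z - x₀) (σ z - x₀)
    have h2 : ‖(-I / 2 : ℂ)‖ = 1 / 2 := by simp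
    rw [h2]
    linarith
  let l : ℂ → E := fun t => a + t • b
  have hl : Differentiable ℂ l := by fun_prop
  have hmem : ∀ t ∈ Metric.ball (0 : ℂ) 2, l t ∈ Metric.ball x₀ r := by
    intro t ht
    rw [mem_ball_zero_iff] at ht
    rw [Metric.mem_ball, dist_eq_norm]
    have h1 : l t - x₀ = (a - x₀) + t • b := by simp only [l]; abel
    have h2 := norm_add_le (a - x₀) (t • b)
    rw [norm_smul] at h2
    have h3 : ‖t‖ * ‖b‖ ≤ 2 * ‖b‖ := mul_le_mul_of_nonneg_right ht.le (norm_nonneg b)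
    rw [h1]; linarith
  have hd : DifferentiableOn ℂ (fun t => K (l t)) (Metric.ball 0 2) := fun t ht =>
    ((hball _ (hmem t ht)).1.comp t (hl t)).differentiableWithinAt
  have hreal : ∀ t : ℝ, |t| < 2 → K (l t) = 0 := by
    intro t ht
    refine (hball _ (hmem t (by simpa using ht))).2 ?_
    simp only [l, map_add, hσa, map_smulₛₗ, hσb, Complex.conj_ofReal]
  have hfreq : ∃ᶠ t in 𝓝[≠] (0 : ℂ), K (l t) = 0 := by
    have ht : Tendsto (fun t : ℝ => (t : ℂ)) (𝓝[≠] 0) (𝓝[≠] 0) := by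
      apply tendsto_nhdsWithin_iff.2 ⟨?_, ?_⟩
      · exact (Complex.continuous_ofReal.tendsto' 0 0 (by simp)).mono_left nhdsWithin_le_nhds
      · filter_upwards [self_mem_nhdsWithin] with t ht
        simpa using ht
    refine ht.frequently (Eventually.frequently ?_)
    have : ∀ᶠ t : ℝ in 𝓝 0, |t| < 2 := by
      have := Metric.ball_mem_nhds (0 : ℝ) (by norm_num : (0 : ℝ) < 2)
      filter_upwards [this] with t ht
      simpa using ht
    exact (this.filter_mono nhdsWithin_le_nhds).mono fun t ht => hreal t ht
  have := (hd.analyticOnNhd Metric.isOpen_ball).eqOn_zero_of_preconnected_of_frequently_eq_zero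
    (convex_ball (0 : ℂ) 2).isPreconnected (by simp) hfreq (by simp : I ∈ Metric.ball (0 : ℂ) 2)
  simpa [l, hab] using this

lemma norm_fderiv_le_of_ball {f : E → F} {y : E} {ρ C : ℝ} (hρ : 0 < ρ)
    (hd : ∀ x ∈ Metric.closedBall y ρ, DifferentiableAt ℂ f x)
    (hC : ∀ x ∈ Metric.closedBall y ρ, ‖f x‖ ≤ C) : ‖fderiv ℂ f y‖ ≤ C / ρ := by
  have hC0 : 0 ≤ C := (norm_nonneg _).trans (hC y (by simp [hρ.le]))
  refine ContinuousLinearMap.opNorm_le_bound _ (by positivity) fun w => ?_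
  rcases eq_or_ne w 0 with rfl | hw
  · simp
  have hw' : 0 < ‖w‖ := norm_pos_iff.2 hw
  let l : ℂ → E := fun t => y + t • w
  have hl : Differentiable ℂ l := by fun_prop
  have hmem : ∀ t ∈ Metric.closedBall (0 : ℂ) (ρ / ‖w‖), l t ∈ Metric.closedBall y ρ := by
    intro t ht
    rw [mem_closedBall_zero_iff, le_div_iff₀ hw'] at ht
    simpa [l, dist_eq_norm, norm_smul] using ht
  have hdl : ∀ t ∈ Metric.closedBall (0 : ℂ) (ρ / ‖w‖), DifferentiableAt ℂ (fun t => f (l t)) t :=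
    fun t ht => (hd _ (hmem t ht)).comp t (hl t)
  have hdc : DiffContOnCl ℂ (fun t => f (l t)) (Metric.ball 0 (ρ / ‖w‖)) := by
    apply DifferentiableOn.diffContOnCl
    rw [closure_ball _ (by positivity)]
    exact fun t ht => (hdl t ht).differentiableWithinAt
  have h1 := Complex.norm_deriv_le_of_forall_mem_sphere_norm_le (by positivity) hdc
    (fun z hz => hC _ (hmem z (Metric.sphere_subset_closedBall hz)))
  have h2 : HasDerivAt (fun t => f (l t)) (fderiv ℂ f y w) 0 := by
    have hy : DifferentiableAt ℂ f (l 0) := hd _ (hmem 0 (by simp; positivity))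
    have hl' : HasDerivAt l w 0 := by
      simpa [l] using ((hasDerivAt_id (0 : ℂ)).smul_const w).const_add y
    have := hy.hasFDerivAt.comp_hasDerivAt (0 : ℂ) hl'
    simpa [l, Function.comp_def] using this
  rw [h2.deriv] at h1
  calc _ ≤ _ := h1
    _ = _ := by field_simp

/-- The differential of a holomorphic map is holomorphic. -/
lemma differentiableAt_fderiv_of_eventually [FiniteDimensional ℂ E] [CompleteSpace F]
    [FiniteDimensional ℂ F]
    {f : E → F} {x₀ : E} (hf : ∀ᶠ x in 𝓝 x₀, DifferentiableAt ℂ f x) :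
    DifferentiableAt ℂ (fderiv ℂ f) x₀ := by
  suffices h : ∀ v : E, DifferentiableAt ℂ (fun x => fderiv ℂ f x v) x₀ by
    let d := Module.finrank ℂ E
    let e₁ : E ≃L[ℂ] Fin d → ℂ := ContinuousLinearEquiv.ofFinrankEq (by simp [d])
    let e₂ : (E →L[ℂ] F) ≃L[ℂ] (Fin d → F) :=
      (e₁.arrowCongr (ContinuousLinearEquiv.refl ℂ F)).trans (ContinuousLinearEquiv.piRing (Fin d))
    rw [← e₂.comp_differentiableAt_iff, differentiableAt_pi]
    exact fun i => h _
  intro v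
  have hbd : ∀ᶠ x in 𝓝 x₀, ‖f x‖ ≤ ‖f x₀‖ + 1 := by
    have := hf.self_of_nhds.continuousAt.norm
    filter_upwards [this.eventually (gt_mem_nhds (lt_add_one ‖f x₀‖))] with x hx using hx.le
  obtain ⟨r, hr, hball⟩ := Metric.eventually_nhds_iff_ball.1 (hf.and hbd)
  set C := ‖f x₀‖ + 1
  have hC : 0 ≤ C := by positivity
  let ρ := r / 4
  have hρ : 0 < ρ := by positivity
  have hfd : ∀ y ∈ Metric.ball x₀ (2 * ρ), ‖fderiv ℂ f y‖ ≤ C / ρ := by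
    intro y hy
    have hsub : Metric.closedBall y ρ ⊆ Metric.ball x₀ r := by
      intro x hx
      have := dist_triangle x y x₀
      rw [Metric.mem_ball] at *
      rw [Metric.mem_closedBall] at hx
      have : 4 * ρ = r := by simp only [ρ]; ring
      linarith
    exact norm_fderiv_le_of_ball hρ (fun x hx => (hball x (hsub hx)).1)
      (fun x hx => (hball x (hsub hx)).2)
  let M : NNReal := (C / ρ).toNNReal
  have hM : (M : ℝ) = C / ρ := Real.coe_toNNReal _ (by positivity)
  have hlip : LipschitzOnWith M f (Metric.ball x₀ (2 * ρ)) := by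
    apply (convex_ball x₀ (2 * ρ)).lipschitzOnWith_of_nnnorm_fderiv_le (𝕜 := ℂ)
    · intro x hx
      exact (hball x (Metric.ball_subset_ball (by simp only [ρ]; linarith) hx)).1
    · intro x hx
      rw [← NNReal.coe_le_coe, hM]
      exact hfd x hx
  let ε := ρ / (‖v‖ + 1)
  have hε : 0 < ε := by positivity
  have hεv : ε * ‖v‖ ≤ ρ := by
    simp only [ε]
    rw [div_mul_eq_mul_div, div_le_iff₀ (by positivity)]
    nlinarith
  have hmem : ∀ x ∈ Metric.ball x₀ ρ, ∀ z : ℂ, ‖z‖ ≤ ε → x + z • v ∈ Metric.ball x₀ (2 * ρ) := by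
    intro x hx z hz
    rw [Metric.mem_ball, dist_eq_norm] at *
    have h1 : x + z • v - x₀ = (x - x₀) + z • v := by abel
    have h2 := norm_add_le (x - x₀) (z • v)
    rw [norm_smul] at h2
    have : ‖z‖ * ‖v‖ ≤ ε * ‖v‖ := by gcongr
    rw [h1]; linarith
  have hdiff : ∀ x ∈ Metric.ball x₀ (2 * ρ), DifferentiableAt ℂ f x := fun x hx =>
    (hball x (Metric.ball_subset_ball (by simp only [ρ]; linarith) hx)).1
  -- Cauchy formula for the directional derivative
  have hcauchy : ∀ x ∈ Metric.ball x₀ ρ, fderiv ℂ f x v =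
      (2 * Real.pi * I : ℂ)⁻¹ • ∮ z in C(0, ε), ((z - 0) ^ 2)⁻¹ • f (x + z • v) := by
    intro x hx
    let l : ℂ → E := fun t => x + t • v
    have hl : Differentiable ℂ l := by fun_prop
    have hUo : IsOpen (l ⁻¹' Metric.ball x₀ (2 * ρ)) := Metric.isOpen_ball.preimage hl.continuous
    have := Complex.two_pi_I_inv_smul_circleIntegral_sub_sq_inv_smul_of_differentiable hUo
      (c := 0) (w₀ := 0) (R := ε) (f := fun t => f (l t))
      (fun z hz => hmem x hx z (by simpa using hz))
      (fun z hz => ((hdiff _ hz).comp z (hl z)).differentiableWithinAt) (by simpa using hε)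
    rw [this]
    have hl' : HasDerivAt l v 0 := by
      simpa [l] using ((hasDerivAt_id (0 : ℂ)).smul_const v).const_add x
    have hxd : DifferentiableAt ℂ f (l 0) :=
      hdiff _ (hmem x hx 0 (by simpa using hε.le))
    have := hxd.hasFDerivAt.comp_hasDerivAt (0 : ℂ) hl'
    rw [Function.comp_def] at this
    rw [this.deriv]
    simp [l]
  have hev : (fun x => fderiv ℂ f x v) =ᶠ[𝓝 x₀] fun x =>
      (2 * Real.pi * I : ℂ)⁻¹ • ∮ z in C(0, ε), ((z - 0) ^ 2)⁻¹ • f (x + z • v) := by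
    filter_upwards [Metric.ball_mem_nhds x₀ hρ] with x hx using hcauchy x hx
  refine DifferentiableAt.congr_of_eventuallyEq ?_ hev
  apply DifferentiableAt.const_smul
  simp only [circleIntegral]
  let k : ℝ → ℂ := fun θ => deriv (circleMap 0 ε) θ * ((circleMap 0 ε θ - 0) ^ 2)⁻¹
  have hk : Continuous k := by
    have h1 : Continuous (circleMap 0 ε) := continuous_circleMap 0 ε
    simp only [k, deriv_circleMap, sub_zero]
    refine ((h1.mul continuous_const)).mul (Continuous.inv₀ (h1.pow 2) fun θ => ?_)
    exact pow_ne_zero _ (circleMap_ne_center hε.ne')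
  have hkn : ∀ θ, ‖k θ‖ = 1 / ε := by
    intro θ
    simp only [k, deriv_circleMap, sub_zero, norm_mul, norm_inv, norm_pow, norm_circleMap_zero,
      norm_I, abs_of_pos hε]
    field_simp
  have hcz : ∀ θ, ‖circleMap 0 ε θ‖ ≤ ε := fun θ => by simp [abs_of_pos hε]
  have hcont : ∀ x ∈ Metric.ball x₀ ρ, Continuous fun θ => f (x + circleMap 0 ε θ • v) := by
    intro x hx
    rw [continuous_iff_continuousAt]
    intro θ
    have h1 : ContinuousAt f (x + circleMap 0 ε θ • v) :=
      (hdiff _ (hmem x hx _ (hcz θ))).continuousAt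
    have h2 : ContinuousAt (fun θ => x + circleMap 0 ε θ • v) θ := by
      have := (continuous_circleMap 0 ε).continuousAt (x := θ)
      fun_prop
    exact ContinuousAt.comp (f := fun θ => x + circleMap 0 ε θ • v) h1 h2
  have hx₀ : x₀ ∈ Metric.ball x₀ ρ := Metric.mem_ball_self hρ
  have hFD : ∀ θ, HasFDerivAt (fun x => f (x + circleMap 0 ε θ • v))
      (fderiv ℂ f (x₀ + circleMap 0 ε θ • v)) x₀ := fun θ =>
    (hasFDerivAt_comp_add_right (𝕜 := ℂ) (circleMap 0 ε θ • v)).2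
      (hdiff _ (hmem x₀ hx₀ _ (hcz θ))).hasFDerivAt
  have key := intervalIntegral.hasFDerivAt_integral_of_dominated_loc_of_lip (𝕜 := ℂ)
    (μ := MeasureTheory.volume) (a := 0) (b := 2 * Real.pi)
    (F := fun x θ => k θ • f (x + circleMap 0 ε θ • v))
    (F' := fun θ => k θ • fderiv ℂ f (x₀ + circleMap 0 ε θ • v)) (x₀ := x₀)
    (bound := fun _ => (1 / ε) * (C / ρ)) (s := Metric.ball x₀ ρ) (Metric.ball_mem_nhds x₀ hρ)
    (by
      filter_upwards [Metric.ball_mem_nhds x₀ hρ] with x hx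
      exact (hk.smul (hcont x hx)).aestronglyMeasurable)
    ((hk.smul (hcont x₀ hx₀)).intervalIntegrable _ _)
    (by
      borelize E
      borelize (E →L[ℂ] F)
      have : FiniteDimensional ℂ (E →L[ℂ] F) := inferInstance
      have : ProperSpace (E →L[ℂ] F) := FiniteDimensional.proper ℂ _
      have hm : Measurable fun θ => fderiv ℂ f (x₀ + circleMap 0 ε θ • v) := by
        refine (measurable_fderiv ℂ f).comp (Continuous.measurable ?_)
        have := continuous_circleMap 0 ε
        fun_prop
      exact hk.aestronglyMeasurable.smul hm.aestronglyMeasurable)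
    (by
      refine Filter.Eventually.of_forall fun θ _ => ?_
      intro x hx y hy
      have h1 := hlip (hmem x hx _ (hcz θ)) (hmem y hy _ (hcz θ))
      rw [edist_smul₀]
      rw [edist_add_right] at h1
      have h2 : (‖k θ‖₊ : ENNReal) * (M : ENNReal) =
          ((Real.nnabs (1 / ε * (C / ρ)) : NNReal) : ENNReal) := by
        rw [← ENNReal.coe_mul]
        congr 1
        ext
        simp only [NNReal.coe_mul, coe_nnnorm, hkn, hM, Real.coe_nnabs]
        rw [abs_of_nonneg (by positivity)]
      rw [← h2, mul_assoc]
      exact mul_le_mul_right h1 _)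
    (intervalIntegrable_const)
    (by
      refine Filter.Eventually.of_forall fun θ _ => ?_
      exact (hFD θ).const_smul (k θ))
  have := key.2.differentiableAt
  refine this.congr_of_eventuallyEq (Eventually.of_forall fun x => ?_)
  simp only [k, mul_smul]

end SeveralVariables

section TracePairing

variable {m n : Type*} [Fintype m] [Fintype n] [DecidableEq m] [DecidableEq n]

/-- The trace pairing `(v, S) ↦ tr (v S)`. -/
def trPair : (m → n → ℂ) →ₗ[ℂ] Matrix n m ℂ →ₗ[ℂ] ℂ :=
  LinearMap.mk₂ ℂ (fun v S => (of v * S).trace)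
    (fun v w S => by rw [← of_add_of, Matrix.add_mul, trace_add])
    (fun c v S => by rw [← smul_of, Matrix.smul_mul, trace_smul])
    (fun v S T => by rw [Matrix.mul_add, trace_add])
    (fun c v S => by rw [Matrix.mul_smul, trace_smul])

lemma trPair_apply (v : m → n → ℂ) (S : Matrix n m ℂ) : trPair v S = (of v * S).trace := rfl

/-- The elementary matrix with entry `1` at `(i, j)`. -/
def elem (i : m) (j : n) : m → n → ℂ := Pi.single i (Pi.single j 1)

lemma of_elem (i : m) (j : n) : of (elem i j) = Matrix.single i j (1 : ℂ) := by
  ext a b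
  simp only [elem, of_apply, Matrix.single_apply, Pi.single_apply]
  split_ifs with h1 h2 h2 <;> simp_all

lemma trPair_elem (i : m) (j : n) (S : Matrix n m ℂ) : trPair (elem i j) S = S j i := by
  rw [trPair_apply, of_elem, trace_mul_comm, trace_mul_single]
  simp

lemma trPair_single (v : m → n → ℂ) (i : m) (j : n) (c : ℂ) :
    trPair v (Matrix.single j i c) = c * v i j := by
  rw [trPair_apply, trace_mul_single]
  simp [mul_comm]

lemma eq_of_trPair_eq {S T : Matrix n m ℂ} (h : ∀ v, trPair v S = trPair v T) : S = T := by
  ext j i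
  simpa only [trPair_elem] using h (elem i j)

lemma eq_zero_of_trPair_eq_zero {v : m → n → ℂ} (h : ∀ S, trPair v S = 0) : v = 0 := by
  ext i j
  simpa [trPair_single] using h (Matrix.single j i 1)

lemma sum_elem (v : m → n → ℂ) : v = ∑ i, ∑ j, v i j • elem i j := by
  ext a b
  simp [elem, Finset.sum_apply, Pi.single_apply, ite_apply, Finset.sum_ite_eq]

lemma exists_trPair_eq (l : (m → n → ℂ) →ₗ[ℂ] ℂ) : ∃ S, ∀ v, l v = trPair v S := by
  refine ⟨of fun j i => l (elem i j), fun v => ?_⟩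
  rw [sum_elem v]
  simp only [map_sum, map_smul, LinearMap.sum_apply, LinearMap.smul_apply, trPair_elem, of_apply]

/-- The transpose of a linear map with respect to the trace pairing. -/
def trAdj (A : (m → n → ℂ) →ₗ[ℂ] (m → n → ℂ)) : Matrix n m ℂ →ₗ[ℂ] Matrix n m ℂ where
  toFun S := of fun j i => trPair (A (elem i j)) S
  map_add' S T := by ext; simp
  map_smul' c S := by ext; simp

lemma trPair_trAdj (A : (m → n → ℂ) →ₗ[ℂ] (m → n → ℂ)) (v : m → n → ℂ) (S : Matrix n m ℂ) :
    trPair v (trAdj A S) = trPair (A v) S := by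
  rw [sum_elem v]
  simp only [map_sum, map_smul, LinearMap.sum_apply, LinearMap.smul_apply, trPair_elem, trAdj,
    LinearMap.coe_mk, AddHom.coe_mk, of_apply]

end TracePairing

section TransformationLaw

variable {m n : Type*} [Fintype m] [Fintype n] [DecidableEq m] [DecidableEq n]

/-- The tangent vector in direction `v` of a graph with slope `-S`. -/
def graphVec (v : m → n → ℂ) (S : Matrix n m ℂ) : (m → n → ℂ) × ℂ := (v, -trPair v S)

/-- The first and second order conditions for the map with differential `L` and second
differential `(Bf, BG)` to carry the graph of a solution of slope `-S` to one of slope `-R`. -/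
structure IsTransformed (L : ((m → n → ℂ) × ℂ) →ₗ[ℂ] ((m → n → ℂ) × ℂ))
    (Bf : ((m → n → ℂ) × ℂ) →ₗ[ℂ] ((m → n → ℂ) × ℂ) →ₗ[ℂ] (m → n → ℂ))
    (BG : ((m → n → ℂ) × ℂ) →ₗ[ℂ] ((m → n → ℂ) × ℂ) →ₗ[ℂ] ℂ) (S R : Matrix n m ℂ) : Prop where
  first : ∀ v, (L (graphVec v S)).2 + trPair (L (graphVec v S)).1 R = 0
  second : ∀ v, BG (graphVec v S) (graphVec v S) - (of v * S * (of v * S)).trace * (L (0, 1)).2 +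
    trPair (Bf (graphVec v S) (graphVec v S) - (of v * S * (of v * S)).trace • (L (0, 1)).1) R +
    (of (L (graphVec v S)).1 * R * (of (L (graphVec v S)).1 * R)).trace = 0

variable {L : ((m → n → ℂ) × ℂ) →ₗ[ℂ] ((m → n → ℂ) × ℂ)}
    {Bf : ((m → n → ℂ) × ℂ) →ₗ[ℂ] ((m → n → ℂ) × ℂ) →ₗ[ℂ] (m → n → ℂ)}
    {BG : ((m → n → ℂ) × ℂ) →ₗ[ℂ] ((m → n → ℂ) × ℂ) →ₗ[ℂ] ℂ} {S₀ : Matrix n m ℂ}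

lemma IsTransformed.apply {S R : Matrix n m ℂ} (h : IsTransformed L Bf BG S R)
    (x : (m → n → ℂ) × ℂ) : (L x).2 + trPair (L x).1 R =
      ((L (0, 1)).2 + trPair (L (0, 1)).1 R) * (x.2 + trPair x.1 S) := by
  have hx : x = graphVec x.1 S + (x.2 + trPair x.1 S) • ((0, 1) : (m → n → ℂ) × ℂ) := by
    ext <;> simp [graphVec]
  have h1 := h.first x.1
  set c := x.2 + trPair x.1 S
  rw [hx, map_add, map_smul]
  simp only [Prod.snd_add, Prod.fst_add, Prod.smul_snd, Prod.smul_fst, map_add, map_smul,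
    LinearMap.add_apply, LinearMap.smul_apply, smul_eq_mul]
  linear_combination h1

lemma injective_of_isTransformed
    (h : ∀ᶠ S in 𝓝 S₀, ∃ R, IsTransformed L Bf BG S R ∧
      (L (0, 1)).2 + trPair (L (0, 1)).1 R ≠ 0) : Function.Injective L := by
  rw [← LinearMap.ker_eq_bot, LinearMap.ker_eq_bot']
  intro x hx
  have h1 : ∀ᶠ S in 𝓝 S₀, x.2 + trPair x.1 S = 0 := by
    filter_upwards [h] with S ⟨R, hR, hμ⟩
    have := hR.apply x
    rw [hx] at this
    simpa [hμ] using this.symm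
  have hx1 : x.1 = 0 := by
    refine eq_zero_of_trPair_eq_zero fun A => ?_
    have hc : Tendsto (fun t : ℂ => S₀ + t • A) (𝓝[≠] 0) (𝓝 S₀) := by
      have : Continuous fun t : ℂ => S₀ + t • A := by fun_prop
      exact (this.tendsto' 0 S₀ (by simp)).mono_left nhdsWithin_le_nhds
    obtain ⟨t, ht, ht0⟩ := ((hc.eventually h1).and self_mem_nhdsWithin).exists
    have h0 := h1.self_of_nhds
    simp only [map_add, map_smul, smul_eq_mul] at ht
    have : t * trPair x.1 A = 0 := by linear_combination ht - h0
    exact (mul_eq_zero.1 this).resolve_left ht0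
  have h0 := h1.self_of_nhds
  rw [hx1] at h0
  ext1
  · exact hx1
  · simpa using h0

/-- The transformation law, cleared of denominators, holds for all slopes. -/
lemma polynomial_law_of_isTransformed
    (h : ∀ᶠ S in 𝓝 S₀, ∃ R, IsTransformed L Bf BG S R ∧
      (L (0, 1)).2 + trPair (L (0, 1)).1 R ≠ 0)
    {S E : Matrix n m ℂ} {D : ℂ}
    (hDE : ∀ x, D * (L x).2 + trPair (L x).1 E = x.2 + trPair x.1 S) (v : m → n → ℂ) :
    D ^ 2 * BG (graphVec v S) (graphVec v S) + D * trPair (Bf (graphVec v S) (graphVec v S)) E -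
      D * (of v * S * (of v * S)).trace +
      (of (L (graphVec v S)).1 * E * (of (L (graphVec v S)).1 * E)).trace = 0 := by
  let e : ((m → n → ℂ) × ℂ) ≃ₗ[ℂ] ((m → n → ℂ) × ℂ) :=
    LinearEquiv.ofInjectiveEndo L (injective_of_isTransformed h)
  have he : ∀ x, L (e.symm x) = x := fun x => e.apply_symm_apply x
  let A : (m → n → ℂ) →ₗ[ℂ] (m → n → ℂ) :=
    LinearMap.fst ℂ _ _ ∘ₗ e.symm.toLinearMap ∘ₗ LinearMap.inl ℂ _ _
  obtain ⟨E₀, hE₀⟩ := exists_trPair_eq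
    (LinearMap.snd ℂ _ _ ∘ₗ e.symm.toLinearMap ∘ₗ LinearMap.inl ℂ (m → n → ℂ) ℂ)
  let EE : Matrix n m ℂ → Matrix n m ℂ := fun T => E₀ + trAdj A T
  let DD : Matrix n m ℂ → ℂ := fun T => (e.symm (0, 1)).2 + trPair (e.symm (0, 1)).1 T
  have huniq : ∀ (T E : Matrix n m ℂ) (D : ℂ),
      (∀ x, D * (L x).2 + trPair (L x).1 E = x.2 + trPair x.1 T) → D = DD T ∧ E = EE T := by
    intro T E D hT
    constructor
    · have := hT (e.symm (0, 1))
      rw [he] at this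
      simpa [DD] using this
    · refine eq_of_trPair_eq fun w => ?_
      have := hT (e.symm (w, 0))
      rw [he] at this
      simp only [EE, map_add, trPair_trAdj, ← hE₀]
      simpa [A] using this
  obtain ⟨rfl, rfl⟩ := huniq S E D hDE
  let T : ℂ → Matrix n m ℂ := fun t => S₀ + t • (S - S₀)
  let P : Matrix n m ℂ → ℂ := fun S =>
    (DD S) ^ 2 * BG (graphVec v S) (graphVec v S) +
      DD S * trPair (Bf (graphVec v S) (graphVec v S)) (EE S) -
      DD S * (of v * S * (of v * S)).trace +
      (of (L (graphVec v S)).1 * EE S * (of (L (graphVec v S)).1 * EE S)).trace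
  have hev : ∀ᶠ S in 𝓝 S₀, P S = 0 := by
    filter_upwards [h] with S ⟨R, hR, hμ⟩
    set μ := (L (0, 1)).2 + trPair (L (0, 1)).1 R with hμd
    obtain ⟨hD, hE⟩ := huniq S (μ⁻¹ • R) μ⁻¹ (by
      intro x
      have := hR.apply x
      rw [map_smul, smul_eq_mul, ← mul_add, this, ← hμd, inv_mul_cancel_left₀ hμ])
    have h2 := hR.second v
    simp only [P, ← hD, ← hE, map_smul, smul_eq_mul, Matrix.mul_smul, Matrix.smul_mul, trace_smul]
    simp only [map_sub, map_smul, LinearMap.sub_apply, LinearMap.smul_apply, smul_eq_mul] at h2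
    have hμ1 : μ⁻¹ * μ = 1 := inv_mul_cancel₀ hμ
    set X := (of v * S * (of v * S)).trace
    linear_combination μ⁻¹ ^ 2 * h2 - μ⁻¹ ^ 2 * X * hμd + μ⁻¹ * X * hμ1
  have hT : Tendsto T (𝓝 0) (𝓝 S₀) := by
    have : Continuous T := by fun_prop
    exact this.tendsto' 0 S₀ (by simp [T])
  have hTE : ∀ t, EE (T t) = EE S₀ + t • trAdj A (S - S₀) := by
    intro t; simp only [EE, T, map_add, map_smul]; abel
  have hTD : ∀ t, DD (T t) = DD S₀ + t * trPair (e.symm (0, 1)).1 (S - S₀) := by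
    intro t; simp only [DD, T, map_add, map_smul, smul_eq_mul]; ring
  have hTg : ∀ t, graphVec v (T t) = graphVec v S₀ + t • (0, -trPair v (S - S₀)) := by
    intro t; ext1
    · simp [graphVec]
    · simp only [graphVec, T, map_add, map_smul, smul_eq_mul, Prod.snd_add, Prod.smul_snd]; ring
  have hTL : ∀ t, of (L (graphVec v (T t))).1 =
      of (L (graphVec v S₀)).1 + t • of (L (0, -trPair v (S - S₀))).1 := by
    intro t; rw [hTg, map_add, map_smul]; rfl
  have hTT : ∀ t, of v * T t = of v * S₀ + t • (of v * (S - S₀)) := by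
    intro t; simp only [T, Matrix.mul_add, Matrix.mul_smul]
  have hdiff : Differentiable ℂ fun t => P (T t) := by
    simp only [P, hTE, hTD, hTL, hTT]
    simp only [hTg, map_add, map_smul, LinearMap.add_apply, LinearMap.smul_apply, Matrix.mul_add,
      Matrix.add_mul, Matrix.mul_smul, Matrix.smul_mul, trace_add, trace_smul, smul_eq_mul]
    fun_prop
  have := eqOn_zero_of_convex_of_eventually convex_univ isOpen_univ hdiff.differentiableOn
    (Set.mem_univ (0 : ℂ)) (hT.eventually hev) (Set.mem_univ (1 : ℂ))
  simpa [P, T] using this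

/-- The differential preserves the vertical direction. -/
lemma fst_vertical_eq_zero_of_isTransformed [Nontrivial m] [Nontrivial n]
    (h : ∀ᶠ S in 𝓝 S₀, ∃ R, IsTransformed L Bf BG S R ∧
      (L (0, 1)).2 + trPair (L (0, 1)).1 R ≠ 0) : (L (0, 1)).1 = 0 := by
  by_contra ha
  set a := (L (0, 1)).1
  obtain ⟨i, j, hij⟩ : ∃ i j, a i j ≠ 0 := by
    by_contra! hc
    exact ha (by ext i j; exact hc i j)
  obtain ⟨k, hk⟩ := exists_ne i
  obtain ⟨l, hl⟩ := exists_ne j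
  obtain ⟨b, hb0, hb⟩ : ∃ b : ℂ, b ≠ 0 ∧ 1 - b * a k l ≠ 0 := by
    by_cases h1 : a k l = 1
    · exact ⟨2, by norm_num, by rw [h1]; norm_num⟩
    · exact ⟨1, one_ne_zero, by rw [one_mul]; exact sub_ne_zero.2 (Ne.symm h1)⟩
  let c : ℂ := (1 - b * a k l) / a i j
  have hc : c ≠ 0 := div_ne_zero hb hij
  let E : Matrix n m ℂ := Matrix.single j i c + Matrix.single l k b
  let w : m → n → ℂ := c⁻¹ • elem i j - b⁻¹ • elem k l
  have hwE : of w * E = Matrix.single i i 1 - Matrix.single k k 1 := by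
    have : of w = c⁻¹ • Matrix.single i j (1 : ℂ) - b⁻¹ • Matrix.single k l (1 : ℂ) := by
      rw [← of_elem, ← of_elem]; rfl
    rw [this]
    simp [E, Matrix.mul_add, Matrix.sub_mul, hl, hl.symm, hc, hb0,
      Matrix.single_mul_single_of_ne]
    rw [← sub_eq_add_neg]
  have haE : trPair a E = 1 := by
    simp only [E, map_add, trPair_single, c]
    field_simp
    ring
  obtain ⟨S, hS⟩ := exists_trPair_eq
    ((trPair (m := m) (n := n)).flip E ∘ₗ LinearMap.fst ℂ _ _ ∘ₗ L ∘ₗ LinearMap.inl ℂ _ _)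
  have hDE : ∀ x, (0 : ℂ) * (L x).2 + trPair (L x).1 E = x.2 + trPair x.1 S := by
    intro x
    have hx : x = (x.1, 0) + x.2 • ((0, 1) : (m → n → ℂ) × ℂ) := by ext <;> simp
    have hL : (L x).1 = (L (x.1, 0)).1 + x.2 • a := by
      nth_rewrite 1 [hx]
      rw [map_add L, map_smul L]
      rfl
    rw [← hS, hL, zero_mul, zero_add, LinearMap.map_add₂, LinearMap.map_smul₂, haE]
    simp [add_comm]
  let e := LinearEquiv.ofInjectiveEndo L (injective_of_isTransformed h)
  have he : ∀ x, L (e.symm x) = x := fun x => e.apply_symm_apply x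
  have hx := hDE (e.symm (w, 0))
  rw [he, trPair_apply, hwE] at hx
  have hg : graphVec (e.symm (w, 0)).1 S = e.symm (w, 0) := by
    ext1
    · rfl
    · simp at hx
      simp only [graphVec]
      linear_combination hx
  have hp := polynomial_law_of_isTransformed h hDE (e.symm (w, 0)).1
  rw [hg, he, hwE] at hp
  simp [Matrix.sub_mul, Matrix.mul_sub, hk, hk.symm, Matrix.single_mul_single_of_ne] at hp

end TransformationLaw

section Compound

variable {m n : Type*} [Fintype m] [Fintype n] [DecidableEq m] [DecidableEq n]

lemma exists_nat_mul_eq_two_of_compound [Nontrivial m] [Nontrivial n]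
    (T : (m → n → ℂ) ≃ₗ[ℂ] (m → n → ℂ)) (B : Matrix n m ℂ ≃ₗ[ℂ] Matrix n m ℂ) {c : ℂ}
    (htr : ∀ v S, trPair (T v) (B S) = trPair v S)
    (hδ : ∀ v S, c * (trPair (T v) (B S) ^ 2 - (of (T v) * B S * (of (T v) * B S)).trace) =
      trPair v S ^ 2 - (of v * S * (of v * S)).trace) : ∃ k : ℕ, (2 - c) * k = 2 := by
  obtain ⟨i, k, hik⟩ := exists_pair_ne m
  obtain ⟨j, l, hjl⟩ := exists_pair_ne n
  let w : m → n → ℂ := elem i j + elem k l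
  let X : Matrix n m ℂ := Matrix.single j i 1 + Matrix.single l k 1
  have hw : of w = Matrix.single i j (1 : ℂ) + Matrix.single k l (1 : ℂ) := by
    rw [← of_elem, ← of_elem]; rfl
  have hwX : of w * X = Matrix.single i i 1 + Matrix.single k k 1 := by
    rw [hw]
    simp [X, Matrix.mul_add, Matrix.add_mul, hjl, hjl.symm, Matrix.single_mul_single_of_ne]
  have hwXw : of w * X * of w = of w := by
    rw [hwX, hw]
    simp [Matrix.mul_add, Matrix.add_mul, hik, hik.symm, Matrix.single_mul_single_of_ne]
  have htr2 : trPair w X = 2 := by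
    rw [trPair_apply, hwX]
    simp; norm_num
  set v := T.symm w
  set Y := B.symm X
  have hTv : T v = w := T.apply_symm_apply w
  have hBY : B Y = X := B.apply_symm_apply X
  have hpol : ∀ S, (2 - c) * trPair v S = (of v * Y * of v * S).trace := by
    intro S
    have h1 := hδ v (Y + S)
    have h2 := hδ v Y
    have h3 := hδ v S
    rw [htr] at h1 h2 h3
    have hvY : trPair v Y = 2 := by rw [← htr, hTv, hBY, htr2]
    have e1 : (of v * S * (of v * Y)).trace = (of v * Y * of v * S).trace := by
      rw [trace_mul_comm, Matrix.mul_assoc (of v * Y)]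
    have e2 : (of v * Y * (of v * S)).trace = (of v * Y * of v * S).trace := by
      rw [Matrix.mul_assoc (of v * Y)]
    have e3 : (of w * X * (of w * B S)).trace = trPair v S := by
      rw [← Matrix.mul_assoc, hwXw, ← trPair_apply, ← htr v S, hTv]
    have e4 : (of w * B S * (of w * X)).trace = trPair v S := by rw [trace_mul_comm, e3]
    simp only [hTv, hBY, map_add, Matrix.mul_add, Matrix.add_mul, trace_add, e1, e2, e3, e4]
      at h1 h2 h3
    linear_combination (h2 + h3 - h1) / 2 + (c - 1) * trPair v S * hvY
  have hvYv : of v * Y * of v = (2 - c) • of v := by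
    have : of.symm (of v * Y * of v - (2 - c) • of v) = 0 := by
      refine eq_zero_of_trPair_eq_zero fun S => ?_
      rw [trPair_apply, Equiv.apply_symm_apply, Matrix.sub_mul, trace_sub, ← hpol,
        Matrix.smul_mul, trace_smul, trPair_apply, smul_eq_mul, sub_self]
    have h2 : of v * Y * of v - (2 - c) • of v = 0 := this
    exact sub_eq_zero.1 h2
  set N := of v * Y
  have hNN : N * N = (2 - c) • N := by
    simp only [N]
    rw [← Matrix.mul_assoc, hvYv, Matrix.smul_mul]
  have hNtr : N.trace = 2 := by
    simp only [N]
    rw [← trPair_apply, ← htr, hTv, hBY, htr2]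
  by_cases hc : 2 - c = 0
  · rw [hc, zero_smul] at hNN
    have hnil : IsNilpotent N := ⟨2, by rw [pow_two, hNN]⟩
    have := (Matrix.isNilpotent_trace_of_isNilpotent hnil).eq_zero
    rw [hNtr] at this
    norm_num at this
  · have hid : IsIdempotentElem ((2 - c)⁻¹ • N) := by
      rw [IsIdempotentElem, Matrix.smul_mul, Matrix.mul_smul, hNN, smul_smul (2 - c)⁻¹ (2 - c),
        inv_mul_cancel₀ hc, one_smul]
    have hid' : IsIdempotentElem (Matrix.toLin' ((2 - c)⁻¹ • N)) := by
      rw [IsIdempotentElem, Module.End.mul_eq_comp, ← Matrix.toLin'_mul, hid]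
    have := (LinearMap.isProj_range_iff_isIdempotentElem _).2 hid'
    have h2 := LinearMap.IsProj.trace this
    rw [Matrix.trace_toLin'_eq, trace_smul, hNtr, smul_eq_mul] at h2
    exact ⟨_, by rw [← h2, mul_inv_cancel_left₀ hc]⟩

/-- The vertical derivative of a transformation fixing the vertical direction is `1`. -/
lemma snd_vertical_eq_one_of_isTransformed [Nontrivial m] [Nontrivial n]
    {L : ((m → n → ℂ) × ℂ) →ₗ[ℂ] ((m → n → ℂ) × ℂ)}
    {Bf : ((m → n → ℂ) × ℂ) →ₗ[ℂ] ((m → n → ℂ) × ℂ) →ₗ[ℂ] (m → n → ℂ)}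
    {BG : ((m → n → ℂ) × ℂ) →ₗ[ℂ] ((m → n → ℂ) × ℂ) →ₗ[ℂ] ℂ} {S₀ : Matrix n m ℂ}
    (h : ∀ᶠ S in 𝓝 S₀, ∃ R, IsTransformed L Bf BG S R ∧
      (L (0, 1)).2 + trPair (L (0, 1)).1 R ≠ 0)
    (hB1 : ∀ x, Bf (0, 1) x = 0) (hB2 : ∀ x, Bf x (0, 1) = 0) : (L (0, 1)).2 = 1 := by
  have hL0 := fst_vertical_eq_zero_of_isTransformed h
  have hinj := injective_of_isTransformed h
  set c := (L (0, 1)).2 with hcd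
  have hL1 : L (0, 1) = (0, c) := Prod.ext hL0 rfl
  have hc : c ≠ 0 := by
    obtain ⟨R, -, hR⟩ := h.self_of_nhds
    simpa [hL0] using hR
  have hLx : ∀ (v : m → n → ℂ) (u : ℂ), L (v, u) = L (v, 0) + (0, u * c) := by
    intro v u
    have : ((v, u) : (m → n → ℂ) × ℂ) = (v, 0) + u • (0, 1) := by ext <;> simp
    rw [this, map_add, map_smul, hL1]
    simp
  let T₀ : (m → n → ℂ) →ₗ[ℂ] (m → n → ℂ) := LinearMap.fst ℂ _ _ ∘ₗ L ∘ₗ LinearMap.inl ℂ _ _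
  have hT₀ : ∀ v, T₀ v = (L (v, 0)).1 := fun v => rfl
  have hT₀i : Function.Injective T₀ := by
    rw [← LinearMap.ker_eq_bot, LinearMap.ker_eq_bot']
    intro v hv
    have : L (v, - (L (v, 0)).2 / c) = 0 := by
      rw [hLx]
      ext1
      · simpa [hT₀] using hv
      · simp [hc]
    have := hinj (this.trans (map_zero L).symm)
    exact (Prod.ext_iff.1 this).1
  let T : (m → n → ℂ) ≃ₗ[ℂ] (m → n → ℂ) := LinearEquiv.ofInjectiveEndo T₀ hT₀i
  have hT : ∀ v, T v = (L (v, 0)).1 := fun v => rfl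
  let B : Matrix n m ℂ ≃ₗ[ℂ] Matrix n m ℂ := LinearEquiv.ofLinearMap (trAdj T.symm.toLinearMap)
    (trAdj T.toLinearMap)
    (by
      ext1 S
      refine eq_of_trPair_eq fun v => ?_
      simp [trPair_trAdj])
    (by
      ext1 S
      refine eq_of_trPair_eq fun v => ?_
      simp [trPair_trAdj])
  have hB : ∀ v S, trPair (T v) (B S) = trPair v S := by
    intro v S
    simp [B, trPair_trAdj]
  obtain ⟨SG, hSG⟩ := exists_trPair_eq (LinearMap.snd ℂ _ _ ∘ₗ L ∘ₗ LinearMap.inl ℂ (m → n → ℂ) ℂ)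
  set E₀ := - (c⁻¹ • B SG)
  have hlaw : ∀ v S, c⁻¹ ^ 2 * BG (0, 1) (0, 1) * trPair v S ^ 2 -
      c⁻¹ * (of v * S * (of v * S)).trace + (of (T v) * B S * (of (T v) * B S)).trace = 0 := by
    intro v S
    have hS : ∀ S x, c⁻¹ * (L x).2 + trPair (L x).1 (E₀ + B S) = x.2 + trPair x.1 S := by
      rintro S ⟨v, u⟩
      rw [hLx]
      have h1 := hB v S
      have h2 := hB v SG
      have h3 := hSG v
      simp only [LinearMap.coe_comp, LinearMap.coe_snd, LinearMap.coe_inl, Function.comp_apply,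
        hT] at h1 h2 h3
      simp only [E₀, Prod.snd_add, Prod.fst_add, add_zero, map_add, map_neg, map_smul, h1, h2,
        smul_eq_mul, h3]
      field_simp
      ring
    have hg1 : ∀ S, (L (graphVec v S)).1 = T v := by
      intro S; rw [graphVec, hLx, hT]; simp
    have hg : ∀ S, graphVec v S = (v, 0) + (-trPair v S) • ((0, 1) : (m → n → ℂ) × ℂ) := by
      intro S; ext <;> simp [graphVec]
    have p0 := polynomial_law_of_isTransformed h (hS 0) v
    have p1 := polynomial_law_of_isTransformed h (hS S) v
    have p2 := polynomial_law_of_isTransformed h (hS (-S)) v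
    rw [hg1, hg] at p0 p1 p2
    simp only [map_add, map_smul, map_neg, LinearMap.add_apply, LinearMap.smul_apply, smul_eq_mul,
      hB1, hB2, smul_zero, add_zero, Matrix.mul_add, Matrix.add_mul, trace_add, Matrix.mul_neg,
      Matrix.neg_mul, trace_neg, map_zero, Matrix.mul_zero, trace_zero] at p0 p1 p2
    linear_combination (p1 + p2 - 2 * p0) / 2
  have hκ : c⁻¹ ^ 2 * BG (0, 1) (0, 1) = c⁻¹ - 1 := by
    obtain ⟨i⟩ : Nonempty m := inferInstance
    obtain ⟨j⟩ : Nonempty n := inferInstance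
    have hne : T (elem i j) ≠ 0 := by
      intro h0
      have := T.injective (h0.trans (map_zero T).symm)
      have := congrFun (congrFun this i) j
      simp [elem] at this
    obtain ⟨i', j', hij⟩ : ∃ i' j', T (elem i j) i' j' ≠ 0 := by
      by_contra! hc
      exact hne (by ext i j; exact hc i j)
    have h1 := hlaw (elem i j) (B.symm (Matrix.single j' i' 1))
    have h2 : (of (elem i j) * B.symm (Matrix.single j' i' 1) *
        (of (elem i j) * B.symm (Matrix.single j' i' 1))).trace =
        trPair (elem i j) (B.symm (Matrix.single j' i' 1)) ^ 2 := by
      rw [trPair_elem, of_elem, ← Matrix.mul_assoc, trace_mul_comm,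
        Matrix.single_mul_mul_single, Matrix.trace_mul_single]
      simp [pow_two]
    have h3 : (of (T (elem i j)) * Matrix.single j' i' (1 : ℂ) *
        (of (T (elem i j)) * Matrix.single j' i' (1 : ℂ))).trace = T (elem i j) i' j' ^ 2 := by
      rw [Matrix.mul_assoc, ← Matrix.mul_assoc (Matrix.single j' i' (1 : ℂ)),
        Matrix.single_mul_mul_single, Matrix.trace_mul_single]
      simp [pow_two]
    rw [h2, ← hB, LinearEquiv.apply_symm_apply, h3, trPair_single] at h1
    have h4 : (T (elem i j) i' j' ^ 2) * (c⁻¹ ^ 2 * BG (0, 1) (0, 1) - (c⁻¹ - 1)) = 0 := by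
      linear_combination h1
    exact sub_eq_zero.1 ((mul_eq_zero.1 h4).resolve_left (pow_ne_zero 2 hij))
  have hδ : ∀ v S, c * (trPair (T v) (B S) ^ 2 - (of (T v) * B S * (of (T v) * B S)).trace) =
      trPair v S ^ 2 - (of v * S * (of v * S)).trace := by
    intro v S
    have h1 := hlaw v S
    rw [hκ] at h1
    rw [hB]
    have h2 : c * c⁻¹ = 1 := mul_inv_cancel₀ hc
    linear_combination (trPair v S ^ 2 - (of v * S * (of v * S)).trace) * h2 - c * h1
  obtain ⟨k, hk⟩ := exists_nat_mul_eq_two_of_compound T B hB hδ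
  obtain ⟨k', hk'⟩ := exists_nat_mul_eq_two_of_compound T.symm B.symm (c := c⁻¹)
    (fun v S => by rw [← hB]; simp)
    (fun v S => by
      have := hδ (T.symm v) (B.symm S)
      simp only [LinearEquiv.apply_symm_apply] at this
      rw [← this, inv_mul_cancel_left₀ hc])
  have h2 : c * c⁻¹ = 1 := mul_inv_cancel₀ hc
  have hkk : (k : ℂ) * k' * 3 + 4 = 4 * k + 4 * k' := by
    linear_combination (2 * k' - 2 : ℂ) * hk + c * k * hk' + (k : ℂ) * k' * h2
  have hkk' : k * k' * 3 + 4 = 4 * k + 4 * k' := by exact_mod_cast hkk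
  have hk0 : k ≠ 0 := by rintro rfl; simp at hk
  have hk0' : k' ≠ 0 := by rintro rfl; simp at hk'
  have hk2 : k = 2 := by
    have h1 : k ≠ 1 := by rintro rfl; omega
    have h1' : k' ≠ 1 := by rintro rfl; omega
    obtain ⟨a, rfl⟩ : ∃ a, k = a + 2 := ⟨k - 2, by omega⟩
    obtain ⟨b, rfl⟩ : ∃ b, k' = b + 2 := ⟨k' - 2, by omega⟩
    nlinarith
  rw [hk2] at hk
  push_cast at hk
  linear_combination -hk / 2

end Compound

section MatrixCalculus

variable {m n : Type*} [Fintype m] [Fintype n] [DecidableEq m] [DecidableEq n]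

/-- The polarized generic norm `det (1 - Z Wᵀ)`. -/
def polNorm (Z W : m → n → ℂ) : ℂ := (1 - of Z * (of W)ᵀ).det

/-- The logarithmic gradient `Wᵀ (1 - Z Wᵀ)⁻¹` of `polNorm`, up to sign. -/
def logSlope (Z W : m → n → ℂ) : Matrix n m ℂ := (of W)ᵀ * (1 - of Z * (of W)ᵀ)⁻¹

lemma polNorm_comm (Z W : m → n → ℂ) : polNorm Z W = polNorm W Z := by
  rw [polNorm, polNorm, ← det_transpose]
  simp

lemma isUnit_det_left {Z W : m → n → ℂ} (h : polNorm Z W ≠ 0) :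
    IsUnit (1 - of Z * (of W)ᵀ).det := isUnit_iff_ne_zero.2 h

lemma isUnit_det_right {Z W : m → n → ℂ} (h : polNorm Z W ≠ 0) :
    IsUnit (1 - (of W)ᵀ * of Z).det := by
  rw [polNorm, det_one_sub_mul_comm] at h
  exact isUnit_iff_ne_zero.2 h

lemma logSlope_eq_inv_mul {Z W : m → n → ℂ} (h : polNorm Z W ≠ 0) :
    logSlope Z W = (1 - (of W)ᵀ * of Z)⁻¹ * (of W)ᵀ := by
  have h1 := isUnit_det_left h
  have h2 := isUnit_det_right h
  have : (1 - (of W)ᵀ * of Z) * logSlope Z W = (of W)ᵀ := by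
    have : (1 - (of W)ᵀ * of Z) * (of W)ᵀ = (of W)ᵀ * (1 - of Z * (of W)ᵀ) := by
      simp [Matrix.sub_mul, Matrix.mul_sub, Matrix.mul_assoc]
    rw [logSlope, ← Matrix.mul_assoc, this, Matrix.mul_assoc, mul_nonsing_inv _ h1, Matrix.mul_one]
  have h3 := congrArg ((1 - (of W)ᵀ * of Z)⁻¹ * ·) this
  simpa only [← Matrix.mul_assoc, nonsing_inv_mul _ h2, Matrix.one_mul] using h3

lemma logSlope_sub_logSlope_left {Z Z' W : m → n → ℂ} (h : polNorm Z W ≠ 0) (h' : polNorm Z' W ≠ 0) :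
    logSlope Z' W - logSlope Z W = logSlope Z' W * of (Z' - Z) * logSlope Z W := by
  have h1 := isUnit_det_left h
  have h1' := isUnit_det_left h'
  have e : of (Z' - Z) * (of W)ᵀ = (1 - of Z * (of W)ᵀ) - (1 - of Z' * (of W)ᵀ) := by
    rw [← of_sub_of, Matrix.sub_mul]; abel
  simp only [logSlope]
  set X := 1 - of Z * (of W)ᵀ
  set X' := 1 - of Z' * (of W)ᵀ
  rw [Matrix.mul_assoc, ← Matrix.mul_assoc (of (Z' - Z)), e, Matrix.mul_assoc, ← Matrix.mul_sub,
    Matrix.sub_mul, mul_nonsing_inv _ h1, Matrix.mul_sub X'⁻¹, ← Matrix.mul_assoc X'⁻¹ X',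
    nonsing_inv_mul _ h1', Matrix.mul_one, Matrix.one_mul]

lemma logSlope_sub_logSlope_right {Z W W' : m → n → ℂ} (h : polNorm Z W ≠ 0) (h' : polNorm Z W' ≠ 0) :
    logSlope Z W' - logSlope Z W =
      (1 - (of W')ᵀ * of Z)⁻¹ * (of (W' - W))ᵀ * (1 - of Z * (of W)ᵀ)⁻¹ := by
  have h1 := isUnit_det_left h
  have h2' := isUnit_det_right h'
  have e : (of (W' - W))ᵀ = (of W')ᵀ * (1 - of Z * (of W)ᵀ) - (1 - (of W')ᵀ * of Z) * (of W)ᵀ := by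
    rw [← of_sub_of, transpose_sub]
    simp [Matrix.sub_mul, Matrix.mul_sub, Matrix.mul_assoc]
  rw [e, Matrix.mul_sub, Matrix.sub_mul, logSlope_eq_inv_mul h', logSlope, ← Matrix.mul_assoc,
    ← Matrix.mul_assoc _ (1 - _), nonsing_inv_mul _ h2', Matrix.one_mul,
    Matrix.mul_assoc _ (1 - _), mul_nonsing_inv _ h1, Matrix.mul_one]

variable {E : Type*} [NormedAddCommGroup E] [NormedSpace ℂ E]

lemma differentiableAt_det {A : E → Matrix m m ℂ} {x : E}
    (hA : ∀ i j, DifferentiableAt ℂ (fun y => A y i j) x) :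
    DifferentiableAt ℂ (fun y => (A y).det) x := by
  simp only [det_apply']
  fun_prop

lemma differentiableAt_inv_apply {A : E → Matrix m m ℂ} {x : E}
    (hA : ∀ i j, DifferentiableAt ℂ (fun y => A y i j) x) (h : (A x).det ≠ 0) (i j : m) :
    DifferentiableAt ℂ (fun y => (A y)⁻¹ i j) x := by
  have h1 : ∀ y, (A y)⁻¹ i j = (A y).det⁻¹ * (A y).adjugate i j := by
    intro y; rw [Matrix.inv_def, Ring.inverse_eq_inv']; rfl
  simp only [h1, adjugate_apply]
  refine ((differentiableAt_det hA).inv h).mul (differentiableAt_det fun k l => ?_)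
  simp only [updateRow_apply]
  split_ifs
  · fun_prop
  · exact hA k l

lemma differentiableAt_polNorm {a b : E → m → n → ℂ} {x : E} (ha : DifferentiableAt ℂ a x)
    (hb : DifferentiableAt ℂ b x) : DifferentiableAt ℂ (fun y => polNorm (a y) (b y)) x := by
  refine differentiableAt_det fun i j => ?_
  simp only [Matrix.sub_apply, mul_apply, transpose_apply, of_apply]
  fun_prop

lemma differentiableAt_logSlope_apply {a b : E → m → n → ℂ} {x : E} (ha : DifferentiableAt ℂ a x)
    (hb : DifferentiableAt ℂ b x) (h : polNorm (a x) (b x) ≠ 0) (j : n) (i : m) :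
    DifferentiableAt ℂ (fun y => logSlope (a y) (b y) j i) x := by
  have h1 : ∀ i j, DifferentiableAt ℂ (fun y => ((1 - of (a y) * (of (b y))ᵀ)⁻¹ : Matrix m m ℂ) i j) x := by
    refine differentiableAt_inv_apply (fun i j => ?_) h
    simp only [Matrix.sub_apply, mul_apply, transpose_apply, of_apply]
    fun_prop
  have h2 : ∀ i j, DifferentiableAt ℂ (fun y => b y i j) x := by fun_prop
  simp only [logSlope, Matrix.mul_apply, transpose_apply, of_apply]
  exact DifferentiableAt.fun_sum fun k _ => (h2 k j).mul (h1 k i)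

lemma trPair_eq_sum (v : m → n → ℂ) (S : Matrix n m ℂ) : trPair v S = ∑ i, ∑ j, v i j * S j i := by
  simp [trPair_apply, trace, mul_apply]

lemma differentiableAt_trPair_logSlope {w a b : E → m → n → ℂ} {x : E} (hw : DifferentiableAt ℂ w x)
    (ha : DifferentiableAt ℂ a x) (hb : DifferentiableAt ℂ b x) (h : polNorm (a x) (b x) ≠ 0) :
    DifferentiableAt ℂ (fun y => trPair (w y) (logSlope (a y) (b y))) x := by
  have := differentiableAt_logSlope_apply ha hb h
  simp only [trPair_eq_sum]
  fun_prop

/-- The derivative of the logarithm of the polarized generic norm. -/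
lemma hasDerivAt_log_polNorm {a : ℂ → m → n → ℂ} {a' W : m → n → ℂ} {t : ℂ}
    (ha : HasDerivAt a a' t) (h : polNorm (a t) W ∈ slitPlane) :
    HasDerivAt (fun s => log (polNorm (a s) W)) (-trPair a' (logSlope (a t) W)) t := by
  have h0 := slitPlane_ne_zero h
  have hd : DifferentiableAt ℂ (fun Z => polNorm Z W) (a t) :=
    differentiableAt_polNorm differentiableAt_id (differentiableAt_const _)
  have hline : HasDerivAt (fun s : ℂ => polNorm (a t + s • a') W)
      (-trPair a' (logSlope (a t) W) * polNorm (a t) W) 0 := by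
    set X := 1 - of (a t) * (of W)ᵀ
    have hX : IsUnit X.det := isUnit_det_left h0
    set M := - (of a' * (of W)ᵀ * X⁻¹)
    have e : ∀ s : ℂ, polNorm (a t + s • a') W = (1 + s • M).det * polNorm (a t) W := by
      intro s
      rw [polNorm, polNorm, ← det_mul]
      congr 1
      rw [← of_add_of, ← smul_of, Matrix.add_mul, Matrix.smul_mul, Matrix.add_mul, Matrix.smul_mul,
        Matrix.one_mul]
      simp only [M, Matrix.neg_mul]
      rw [Matrix.mul_assoc _ X⁻¹, nonsing_inv_mul _ hX, Matrix.mul_one, smul_neg]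
      abel
    rw [show (fun s : ℂ => polNorm (a t + s • a') W) = _ from funext fun s => by
      rw [e, det_one_add_smul]]
    set P := (1 + (Polynomial.X : Polynomial ℂ) • M.map ⇑Polynomial.C).det.divX.divX
    have hM : M.trace = -trPair a' (logSlope (a t) W) := by
      simp only [M, trace_neg, trPair_apply, logSlope, X, Matrix.mul_assoc]
    have h1 : HasDerivAt (fun s : ℂ => 1 + M.trace * s + P.eval s * s ^ 2)
        (M.trace * 1 + (P.derivative.eval 0 * 0 ^ 2 + P.eval 0 * (2 * 0))) 0 := by
      refine HasDerivAt.add (((hasDerivAt_id (0 : ℂ)).const_mul M.trace).const_add 1) ?_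
      refine (P.hasDerivAt 0).mul ?_
      simpa using hasDerivAt_pow 2 (0 : ℂ)
    have := h1.mul_const (polNorm (a t) W)
    simpa [hM] using this
  have hfd : fderiv ℂ (fun Z => polNorm Z W) (a t) a' =
      -trPair a' (logSlope (a t) W) * polNorm (a t) W := by
    have hl : HasDerivAt (fun s : ℂ => a t + s • a') a' 0 := by
      simpa using ((hasDerivAt_id (0 : ℂ)).smul_const a').const_add (a t)
    have hd' : DifferentiableAt ℂ (fun Z => polNorm Z W) (a t + (0 : ℂ) • a') := by simpa using hd
    have := hd'.hasFDerivAt.comp_hasDerivAt (0 : ℂ) hl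
    simpa using this.unique hline
  have h1 := hd.hasFDerivAt.comp_hasDerivAt t ha
  rw [hfd] at h1
  have := h1.clog h
  simp only [Function.comp_apply] at this
  rwa [mul_div_cancel_right₀ _ h0] at this

lemma hasDerivAt_trPair_logSlope {w a : ℂ → m → n → ℂ} {w' a' W : m → n → ℂ} {t : ℂ}
    (hw : HasDerivAt w w' t) (ha : HasDerivAt a a' t) (h : polNorm (a t) W ≠ 0) :
    HasDerivAt (fun s => trPair (w s) (logSlope (a s) W))
      (trPair w' (logSlope (a t) W) +
        (of (w t) * logSlope (a t) W * (of a' * logSlope (a t) W)).trace) t := by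
  have hev : ∀ᶠ s in 𝓝 t, polNorm (a s) W ≠ 0 := by
    have := (differentiableAt_polNorm ha.differentiableAt
      (differentiableAt_const W)).continuousAt
    exact this.eventually_ne h
  have hS := differentiableAt_logSlope_apply ha.differentiableAt (differentiableAt_const W) h
  have key : ∀ j i, HasDerivAt (fun s => logSlope (a s) W j i)
      ((logSlope (a t) W * of a' * logSlope (a t) W) j i) t := by
    intro j i
    have e : (fun s => logSlope (a s) W j i) =ᶠ[𝓝 t]
        fun s => logSlope (a t) W j i + ∑ k, (∑ l, logSlope (a s) W j l * (a s l k - a t l k)) *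
          logSlope (a t) W k i := by
      filter_upwards [hev] with s hs
      have := congrFun (congrFun (logSlope_sub_logSlope_left h hs) j) i
      rw [Matrix.sub_apply] at this
      rw [eq_add_of_sub_eq' this]
      simp [mul_apply]
    refine HasDerivAt.congr_of_eventuallyEq ?_ e
    refine HasDerivAt.const_add _ ?_
    simp only [mul_apply]
    refine HasDerivAt.fun_sum fun k _ => ?_
    refine HasDerivAt.mul_const ?_ _
    refine HasDerivAt.fun_sum fun l _ => ?_
    have h1 := (hS j l).hasDerivAt
    have h2 : HasDerivAt (fun s => a s l k - a t l k) (a' l k) t :=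
      ((hasDerivAt_pi.1 (hasDerivAt_pi.1 ha l)) k).sub_const _
    simpa using h1.fun_mul h2
  have hw' : ∀ i j, HasDerivAt (fun s => w s i j) (w' i j) t :=
    fun i j => hasDerivAt_pi.1 (hasDerivAt_pi.1 hw i) j
  have e2 : (of (w t) * logSlope (a t) W * (of a' * logSlope (a t) W)).trace =
      trPair (w t) (logSlope (a t) W * of a' * logSlope (a t) W) := by
    rw [trPair_apply]; simp only [Matrix.mul_assoc]
  rw [e2]
  simp only [trPair_eq_sum, ← Finset.sum_add_distrib]
  exact HasDerivAt.fun_sum fun i _ => HasDerivAt.fun_sum fun j _ => (hw' i j).mul (key j i)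

lemma mul_mul_apply_eq_sum {k l : Type*} (P : Matrix k n ℂ) (Q : Matrix n m ℂ) (R : Matrix m l ℂ)
    (i : k) (j : l) : (P * Q * R) i j = ∑ b, (∑ a, P i a * Q a b) * R b j := by
  simp only [Matrix.mul_apply]

lemma hasDerivAt_trPair_logSlope_right {b : ℂ → m → n → ℂ} {w Z b' : m → n → ℂ} {t : ℂ}
    (hb : HasDerivAt b b' t) (h : polNorm Z (b t) ≠ 0) :
    HasDerivAt (fun s => trPair w (logSlope Z (b s)))
      (trPair w ((1 - (of (b t))ᵀ * of Z)⁻¹ * (of b')ᵀ * (1 - of Z * (of (b t))ᵀ)⁻¹)) t := by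
  have hev : ∀ᶠ s in 𝓝 t, polNorm Z (b s) ≠ 0 := by
    have := (differentiableAt_polNorm (differentiableAt_const Z) hb.differentiableAt).continuousAt
    exact this.eventually_ne h
  have hI : ∀ i j, DifferentiableAt ℂ (fun s => ((1 - (of (b s))ᵀ * of Z)⁻¹ : Matrix n n ℂ) i j) t := by
    have := hb.differentiableAt
    refine differentiableAt_inv_apply (fun i j => ?_) (isUnit_det_right h).ne_zero
    simp only [Matrix.sub_apply, mul_apply, transpose_apply, of_apply]
    fun_prop
  have key : ∀ j i, HasDerivAt (fun s => logSlope Z (b s) j i)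
      (((1 - (of (b t))ᵀ * of Z)⁻¹ * (of b')ᵀ * (1 - of Z * (of (b t))ᵀ)⁻¹ : Matrix n m ℂ) j i) t := by
    intro j i
    have e : (fun s => logSlope Z (b s) j i) =ᶠ[𝓝 t]
        fun s => logSlope Z (b t) j i + ∑ k, (∑ l, ((1 - (of (b s))ᵀ * of Z)⁻¹ : Matrix n n ℂ) j l *
          (b s k l - b t k l)) * ((1 - of Z * (of (b t))ᵀ)⁻¹ : Matrix m m ℂ) k i := by
      filter_upwards [hev] with s hs
      have := congrFun (congrFun (logSlope_sub_logSlope_right h hs) j) i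
      rw [Matrix.sub_apply] at this
      rw [eq_add_of_sub_eq' this]
      rw [mul_mul_apply_eq_sum]
      rfl
    refine HasDerivAt.congr_of_eventuallyEq ?_ e
    refine HasDerivAt.const_add _ ?_
    rw [mul_mul_apply_eq_sum]
    refine HasDerivAt.fun_sum fun k _ => ?_
    refine HasDerivAt.mul_const ?_ _
    refine HasDerivAt.fun_sum fun l _ => ?_
    have h1 := (hI j l).hasDerivAt
    have h2 : HasDerivAt (fun s => b s k l - b t k l) (b' k l) t :=
      ((hasDerivAt_pi.1 (hasDerivAt_pi.1 hb k)) l).sub_const _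
    simpa using h1.fun_mul h2
  simp only [trPair_eq_sum]
  exact HasDerivAt.fun_sum fun i _ => HasDerivAt.fun_sum fun j _ => (key j i).const_mul _

/-- Every matrix near `logSlope Z W₀` is of the form `logSlope Z W` with `W` near `W₀`. -/
lemma eventually_exists_logSlope_eq {Z W₀ : m → n → ℂ} (h : polNorm Z W₀ ≠ 0)
    {P : (m → n → ℂ) → Prop} (hP : ∀ᶠ W in 𝓝 W₀, P W) :
    ∀ᶠ S in 𝓝 (logSlope Z W₀), ∃ W, P W ∧ logSlope Z W = S := by
  let w : Matrix n m ℂ → m → n → ℂ := fun S i j => ((1 + S * of Z)⁻¹ * S : Matrix n m ℂ) j i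
  have hwt : ∀ S, (of (w S))ᵀ = (1 + S * of Z)⁻¹ * S := fun S => rfl
  have hunit := isUnit_det_right h
  have hinv : (1 + logSlope Z W₀ * of Z) = (1 - (of W₀)ᵀ * of Z)⁻¹ := by
    have : (1 + logSlope Z W₀ * of Z) * (1 - (of W₀)ᵀ * of Z) = 1 := by
      rw [logSlope_eq_inv_mul h, Matrix.add_mul, Matrix.mul_assoc, Matrix.mul_assoc]
      have e : (of W₀)ᵀ * (of Z * (1 - (of W₀)ᵀ * of Z)) =
          (1 - (of W₀)ᵀ * of Z) * ((of W₀)ᵀ * of Z) := by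
        simp [Matrix.sub_mul, Matrix.mul_sub, Matrix.mul_assoc]
      rw [e, ← Matrix.mul_assoc, nonsing_inv_mul _ hunit]
      simp
    exact (inv_eq_left_inv this).symm
  have hdet : (1 + logSlope Z W₀ * of Z).det ≠ 0 := by
    rw [hinv]
    exact (isUnit_nonsing_inv_det _ hunit).ne_zero
  have hw0 : w (logSlope Z W₀) = W₀ := by
    have : (of (w (logSlope Z W₀)))ᵀ = (of W₀)ᵀ := by
      rw [hwt, hinv, nonsing_inv_nonsing_inv _ hunit, logSlope_eq_inv_mul h, ← Matrix.mul_assoc,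
        mul_nonsing_inv _ hunit, Matrix.one_mul]
    exact transpose_injective this
  have hdc : Continuous fun S : Matrix n m ℂ => (1 + S * of Z).det := by fun_prop
  have hcont : ContinuousAt w (logSlope Z W₀) := by
    have e : ∀ S, w S = fun i j =>
        ((1 + S * of Z).det⁻¹ • ((1 + S * of Z).adjugate * S)) j i := by
      intro S
      funext i j
      simp only [w, Matrix.inv_def, Ring.inverse_eq_inv', Matrix.smul_mul]
    rw [show w = _ from funext e]
    have h1 : ContinuousAt (fun S : Matrix n m ℂ => (1 + S * of Z).det⁻¹) (logSlope Z W₀) :=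
      hdc.continuousAt.inv₀ hdet
    have h2 : Continuous fun S : Matrix n m ℂ => (1 + S * of Z).adjugate * S := by fun_prop
    have h3 := h1.smul h2.continuousAt
    refine continuousAt_pi.2 fun i => continuousAt_pi.2 fun j => ?_
    exact continuousAt_pi.1 (continuousAt_pi.1 h3 j) i
  have hP' : ∀ᶠ S in 𝓝 (logSlope Z W₀), P (w S) := by
    refine hcont.eventually ?_
    rwa [hw0]
  filter_upwards [hP', hdc.continuousAt.eventually_ne hdet] with S hS hd
  refine ⟨w S, hS, ?_⟩
  have hu : IsUnit (1 + S * of Z).det := isUnit_iff_ne_zero.2 hd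
  have hi : (1 - of Z * (of (w S))ᵀ)⁻¹ = 1 + of Z * S := by
    refine inv_eq_right_inv ?_
    have e : S * (1 + of Z * S) = (1 + S * of Z) * S := by
      simp [Matrix.add_mul, Matrix.mul_add, Matrix.mul_assoc]
    rw [hwt, Matrix.sub_mul, Matrix.mul_assoc (of Z), Matrix.mul_assoc _ S, e,
      ← Matrix.mul_assoc _ _ S, nonsing_inv_mul _ hu]
    simp
  have e : S * (1 + of Z * S) = (1 + S * of Z) * S := by
    simp [Matrix.add_mul, Matrix.mul_add, Matrix.mul_assoc]
  rw [logSlope, hi, hwt, Matrix.mul_assoc, e, ← Matrix.mul_assoc, nonsing_inv_mul _ hu, Matrix.one_mul]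

lemma logSlope_star_star (Z W : m → n → ℂ) (j : n) (i : m) :
    logSlope (star Z) (star W) j i = star (logSlope Z W j i) := by
  have h1 : (1 - of (star Z) * (of (star W))ᵀ)⁻¹ = ((1 - of Z * (of W)ᵀ)⁻¹)ᴴᵀ := by
    rw [conjTranspose_nonsing_inv, transpose_nonsing_inv]
    congr 1
    ext i j
    simp [mul_apply, Matrix.one_apply, eq_comm, mul_comm]
  simp only [logSlope, h1, mul_apply]
  simp

lemma trPair_star_logSlope_star (v Z W : m → n → ℂ) :
    trPair (star v) (logSlope (star Z) (star W)) = star (trPair v (logSlope Z W)) := by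
  simp [trPair_eq_sum, logSlope_star_star]

end MatrixCalculus

section LogCircle

variable {p q : ℕ}

lemma polNorm_star_eq_genNormI {Z : Fin p → Fin q → ℂ} (hZ : Z ∈ typeIDomain p q) :
    polNorm Z (star Z) = (genNormI Z : ℂ) := by
  have h : (0 : ℂ) < polNorm Z (star Z) := PosDef.det_pos hZ
  apply Complex.ext
  · rfl
  · simpa using (Complex.pos_iff.1 h).2.symm

lemma genNormI_pos {Z : Fin p → Fin q → ℂ} (hZ : Z ∈ typeIDomain p q) : 0 < genNormI Z :=
  (Complex.pos_iff.1 (PosDef.det_pos hZ)).1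

lemma polNorm_star_mem_slitPlane {Z : Fin p → Fin q → ℂ} (hZ : Z ∈ typeIDomain p q) :
    polNorm Z (star Z) ∈ slitPlane := by
  rw [polNorm_star_eq_genNormI hZ]
  exact ofReal_mem_slitPlane.2 (genNormI_pos hZ)

lemma isHermitian_one_sub (Z : Fin p → Fin q → ℂ) : (1 - of Z * (of Z)ᴴ).IsHermitian :=
  isHermitian_one.sub (isHermitian_mul_conjTranspose_self _)

lemma isOpen_typeIDomain : IsOpen (typeIDomain p q) := by
  rw [isOpen_iff_mem_nhds]
  intro Z hZ
  let f : (Fin p → Fin q → ℂ) → (Fin p → ℂ) → ℝ :=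
    fun Y x => (star x ⬝ᵥ ((1 - of Y * (of Y)ᴴ) *ᵥ x)).re
  have hcont : Continuous fun y : (Fin p → Fin q → ℂ) × (Fin p → ℂ) => f y.1 y.2 := by
    simp only [f, dotProduct, mulVec, Matrix.sub_apply, Matrix.mul_apply, conjTranspose_apply,
      of_apply, Pi.star_apply]
    fun_prop
  have hpos : ∀ x ∈ Metric.sphere (0 : Fin p → ℂ) 1, ∀ᶠ y in 𝓝 (Z, x), 0 < f y.1 y.2 := by
    intro x hx
    have hx0 : x ≠ 0 := by rintro rfl; simp at hx
    have : 0 < f Z x := (Complex.pos_iff.1 ((posDef_iff_dotProduct_mulVec.1 hZ).2 hx0)).1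
    exact hcont.continuousAt.eventually (lt_mem_nhds this)
  have h := (isCompact_sphere (0 : Fin p → ℂ) 1).eventually_forall_of_forall_eventually
    (P := fun Y x => 0 < f Y x) hpos
  filter_upwards [h] with Y hY
  refine posDef_iff_dotProduct_mulVec.2 ⟨isHermitian_one_sub Y, fun x hx => ?_⟩
  have him := (isHermitian_one_sub Y).im_star_dotProduct_mulVec_self x
  refine Complex.pos_iff.2 ⟨?_, him.symm⟩
  have hn : 0 < ‖x‖ := norm_pos_iff.2 hx
  have h1 := hY ((‖x‖⁻¹ : ℂ) • x) (by simp [norm_smul, hn.ne'])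
  have h2 : f Y ((‖x‖⁻¹ : ℂ) • x) = ‖x‖⁻¹ ^ 2 * f Y x := by
    simp only [f, mulVec_smul, star_smul, smul_dotProduct, dotProduct_smul, smul_eq_mul]
    rw [← ofReal_inv, star_def, conj_ofReal, ← mul_assoc, ← ofReal_mul, re_ofReal_mul, sq]
  rw [h2] at h1
  exact pos_of_mul_pos_right h1 (by positivity)

variable (p q) in
/-- The circle bundle in the logarithmic fiber coordinate `u = log ξ`. -/
def logCirc : Set ((Fin p → Fin q → ℂ) × ℂ) :=
  {e | e.1 ∈ typeIDomain p q ∧ 2 * e.2.re = Real.log (genNormI e.1)}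

lemma log_polNorm_star {Z : Fin p → Fin q → ℂ} (hZ : Z ∈ typeIDomain p q) :
    log (polNorm Z (star Z)) = (Real.log (genNormI Z) : ℂ) := by
  rw [polNorm_star_eq_genNormI hZ, ofReal_log (genNormI_pos hZ).le]

lemma log_polNorm_of_mem_logCirc {e : (Fin p → Fin q → ℂ) × ℂ} (he : e ∈ logCirc p q) :
    log (polNorm e.1 (star e.1)) = e.2 + star e.2 := by
  rw [log_polNorm_star he.1, ← he.2, star_def, add_conj]

/-- Conjugation on `V × V × ℂ` exchanging the two copies of `V`. -/
def swapConj {V : Type*} [NormedAddCommGroup V] [StarAddMonoid V] [NormedStarGroup V]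
    [NormedSpace ℂ V] [StarModule ℂ V] : ((V × V) × ℂ) ≃ₗᵢ⋆[ℂ] ((V × V) × ℂ) where
  toFun x := ((star x.1.2, star x.1.1), star x.2)
  invFun x := ((star x.1.2, star x.1.1), star x.2)
  map_add' x y := by simp
  map_smul' c x := by simp [star_smul]
  left_inv x := by simp
  right_inv x := by simp
  norm_map' x := by simp [Prod.norm_def, max_comm]

/-- A holomorphic function of `(Z, u, W)` that vanishes on the totally real set `W = star Z`,
`(Z, u) ∈ logCirc` vanishes identically. -/
lemma eventually_eq_zero_of_logCirc {F : Type*} [NormedAddCommGroup F] [NormedSpace ℂ F]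
    [CompleteSpace F] {e₀ : (Fin p → Fin q → ℂ) × ℂ} (he₀ : e₀ ∈ logCirc p q)
    {K : ((Fin p → Fin q → ℂ) × ℂ) × (Fin p → Fin q → ℂ) → F}
    (hK : ∀ᶠ x in 𝓝 (e₀, star e₀.1), DifferentiableAt ℂ K x)
    (h0 : ∀ᶠ e in 𝓝 e₀, e ∈ logCirc p q → K (e, star e.1) = 0) :
    ∀ᶠ x in 𝓝 (e₀, star e₀.1), K x = 0 := by
  let θ : ((Fin p → Fin q → ℂ) × (Fin p → Fin q → ℂ)) × ℂ →
      ((Fin p → Fin q → ℂ) × ℂ) × (Fin p → Fin q → ℂ) :=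
    fun x => ((x.1.1, log (polNorm x.1.1 x.1.2) / 2 + I * x.2), x.1.2)
  let χ : ((Fin p → Fin q → ℂ) × ℂ) × (Fin p → Fin q → ℂ) →
      ((Fin p → Fin q → ℂ) × (Fin p → Fin q → ℂ)) × ℂ :=
    fun y => ((y.1.1, y.2), -I * (y.1.2 - log (polNorm y.1.1 y.2) / 2))
  have hθχ : ∀ y, θ (χ y) = y := by
    intro y
    have : log (polNorm y.1.1 y.2) / 2 + I * (-I * (y.1.2 - log (polNorm y.1.1 y.2) / 2)) =
        y.1.2 := by
      linear_combination -(y.1.2 - log (polNorm y.1.1 y.2) / 2) * I_mul_I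
    simp only [θ, χ, this]
  let x₀ : ((Fin p → Fin q → ℂ) × (Fin p → Fin q → ℂ)) × ℂ := ((e₀.1, star e₀.1), e₀.2.im)
  have hχ₀ : χ (e₀, star e₀.1) = x₀ := by
    simp only [χ, x₀, log_polNorm_of_mem_logCirc he₀]
    congr 1
    have := re_add_im e₀.2
    have h2 : e₀.2 - (e₀.2 + star e₀.2) / 2 = e₀.2.im * I := by
      rw [star_def, add_conj]
      push_cast
      linear_combination -this
    rw [h2]
    linear_combination -(e₀.2.im : ℂ) * I_mul_I
  have hθ₀ : θ x₀ = (e₀, star e₀.1) := by rw [← hχ₀, hθχ]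
  have hslit₀ : polNorm x₀.1.1 x₀.1.2 ∈ slitPlane := polNorm_star_mem_slitPlane he₀.1
  have hpd : ∀ x : ((Fin p → Fin q → ℂ) × (Fin p → Fin q → ℂ)) × ℂ,
      DifferentiableAt ℂ (fun x : ((Fin p → Fin q → ℂ) × (Fin p → Fin q → ℂ)) × ℂ =>
        polNorm x.1.1 x.1.2) x := fun x =>
    differentiableAt_polNorm (by fun_prop) (by fun_prop)
  have hslit : ∀ᶠ x in 𝓝 x₀, polNorm x.1.1 x.1.2 ∈ slitPlane :=
    (hpd x₀).continuousAt.eventually (isOpen_slitPlane.mem_nhds hslit₀)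
  have hθd : ∀ x, polNorm x.1.1 x.1.2 ∈ slitPlane → DifferentiableAt ℂ θ x := by
    intro x hx
    have := (hpd x).clog hx
    fun_prop
  have hθc : Tendsto θ (𝓝 x₀) (𝓝 (e₀, star e₀.1)) := hθ₀ ▸ (hθd x₀ hslit₀).continuousAt
  have key : ∀ᶠ x in 𝓝 x₀, K (θ x) = 0 := by
    refine eventually_eq_zero_of_fixed (K := fun x => K (θ x)) swapConj ?_ (x₀ := x₀) ?_ ?_ ?_
    · intro x; simp [swapConj]
    · simp [swapConj, x₀]
    · filter_upwards [hθc.eventually hK, hslit] with x hx hs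
      exact DifferentiableAt.comp x hx (hθd x hs)
    · have h1 : Tendsto (fun x => (θ x).1) (𝓝 x₀) (𝓝 e₀) := by
        have := (continuous_fst.tendsto (e₀, star e₀.1)).comp hθc
        exact this
      have hΩ : ∀ᶠ x in 𝓝 x₀, x.1.1 ∈ typeIDomain p q := by
        have : Tendsto (fun x : ((Fin p → Fin q → ℂ) × (Fin p → Fin q → ℂ)) × ℂ => x.1.1) (𝓝 x₀)
          (𝓝 e₀.1) := by
          have : Continuous (fun x : ((Fin p → Fin q → ℂ) × (Fin p → Fin q → ℂ)) × ℂ => x.1.1) := by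
            fun_prop
          exact this.tendsto x₀
        exact this.eventually (isOpen_typeIDomain.mem_nhds he₀.1)
      filter_upwards [h1.eventually h0, hΩ] with x hx hΩx hfix
      have hW : star x.1.1 = x.1.2 := congrArg (fun y => y.1.2) hfix
      have hτ : star x.2 = x.2 := congrArg (fun y => y.2) hfix
      have hmem : (θ x).1 ∈ logCirc p q := by
        refine ⟨hΩx, ?_⟩
        have him : x.2.im = 0 := conj_eq_iff_im.1 hτ
        simp only [θ, ← hW, log_polNorm_star hΩx]
        rw [← ofReal_ofNat, ← ofReal_div, add_re, ofReal_re, mul_re, I_re, I_im, him]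
        ring
      have := hx hmem
      have he : θ x = ((θ x).1, star (θ x).1.1) := by
        simp only [θ, hW]
      rw [he]
      exact this
  have hχc : Tendsto χ (𝓝 (e₀, star e₀.1)) (𝓝 x₀) := by
    rw [← hχ₀]
    have h1 : ContinuousAt (fun y : ((Fin p → Fin q → ℂ) × ℂ) × (Fin p → Fin q → ℂ) =>
        log (polNorm y.1.1 y.2)) (e₀, star e₀.1) := by
      have := differentiableAt_polNorm (E := ((Fin p → Fin q → ℂ) × ℂ) × (Fin p → Fin q → ℂ))
        (a := fun y => y.1.1) (b := fun y => y.2) (x := (e₀, star e₀.1)) (by fun_prop) (by fun_prop)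
      exact (this.clog hslit₀).continuousAt
    have : ContinuousAt χ (e₀, star e₀.1) := by fun_prop
    exact this
  filter_upwards [hχc.eventually key] with y hy
  rwa [hθχ] at hy

end LogCircle

section LogMap

variable {p q : ℕ}

/-- The ambient space of the circle bundle. -/
abbrev BundleSpace (p q : ℕ) : Type := (Fin p → Fin q → ℂ) × ℂ

/-- The polarized reflection of `(Z, u)` across the Segre variety at `W`. -/
def mirror (x : BundleSpace p q × (Fin p → Fin q → ℂ)) : BundleSpace p q :=
  (x.2, log (polNorm x.1.1 x.2) - x.1.2)

/-- The conjugate of a map, evaluated at the reflected point. -/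
def mirrorImage (Φ : BundleSpace p q → BundleSpace p q)
    (x : BundleSpace p q × (Fin p → Fin q → ℂ)) : BundleSpace p q :=
  star (Φ (star (mirror x)))

lemma mirror_of_mem_logCirc {e : BundleSpace p q} (he : e ∈ logCirc p q) :
    mirror (e, star e.1) = star e := by
  simp only [mirror, log_polNorm_of_mem_logCirc he]
  ext <;> simp

lemma mirrorImage_of_mem_logCirc (Φ : BundleSpace p q → BundleSpace p q) {e : BundleSpace p q}
    (he : e ∈ logCirc p q) : mirrorImage Φ (e, star e.1) = star (Φ e) := by
  rw [mirrorImage, mirror_of_mem_logCirc he, star_star]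

/-- `Φ` is holomorphic near `e₀` and preserves the circle bundle in logarithmic coordinates. -/
structure IsLogMap (Φ : BundleSpace p q → BundleSpace p q) (e₀ : BundleSpace p q) : Prop where
  mem : e₀ ∈ logCirc p q
  diff : ∀ᶠ e in 𝓝 e₀, DifferentiableAt ℂ Φ e
  maps : ∀ᶠ e in 𝓝 e₀, e ∈ logCirc p q → Φ e ∈ logCirc p q

lemma IsLogMap.eventually {Φ : BundleSpace p q → BundleSpace p q} {e₀ : BundleSpace p q}
    (h : IsLogMap Φ e₀) : ∀ᶠ e in 𝓝 e₀, e ∈ logCirc p q → IsLogMap Φ e := by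
  filter_upwards [h.diff.eventually_nhds, h.maps.eventually_nhds] with e h1 h2 he
  exact ⟨he, h1, h2⟩

/-- `Φ` satisfies the polarized bundle equation near `x`. -/
structure IsPolarized (Φ : BundleSpace p q → BundleSpace p q)
    (x : BundleSpace p q × (Fin p → Fin q → ℂ)) : Prop where
  slit : polNorm x.1.1 x.2 ∈ slitPlane
  slit_map : polNorm (Φ x.1).1 (mirrorImage Φ x).1 ∈ slitPlane
  diff : ∀ᶠ e in 𝓝 x.1, DifferentiableAt ℂ Φ e
  diff_mirror : DifferentiableAt ℂ (mirrorImage Φ) x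
  eqn : ∀ᶠ y in 𝓝 x, (Φ y.1).2 + (mirrorImage Φ y).2 =
    log (polNorm (Φ y.1).1 (mirrorImage Φ y).1)

lemma differentiableAt_mirror {x : BundleSpace p q × (Fin p → Fin q → ℂ)}
    (h : polNorm x.1.1 x.2 ∈ slitPlane) : DifferentiableAt ℂ mirror x := by
  have h1 := differentiableAt_polNorm (E := BundleSpace p q × (Fin p → Fin q → ℂ))
    (a := fun y => y.1.1) (b := fun y => y.2) (x := x) (by fun_prop) (by fun_prop)
  have h2 := h1.clog h
  unfold mirror
  fun_prop

lemma eventually_polNorm_mem_slitPlane {x : BundleSpace p q × (Fin p → Fin q → ℂ)}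
    (h : polNorm x.1.1 x.2 ∈ slitPlane) : ∀ᶠ y in 𝓝 x, polNorm y.1.1 y.2 ∈ slitPlane := by
  have h1 := differentiableAt_polNorm (E := BundleSpace p q × (Fin p → Fin q → ℂ))
    (a := fun y => y.1.1) (b := fun y => y.2) (x := x) (by fun_prop) (by fun_prop)
  exact h1.continuousAt.eventually (isOpen_slitPlane.mem_nhds h)

lemma IsLogMap.isPolarized {Φ : BundleSpace p q → BundleSpace p q} {e₀ : BundleSpace p q}
    (h : IsLogMap Φ e₀) : ∀ᶠ x in 𝓝 (e₀, star e₀.1), IsPolarized Φ x := by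
  have hs₀ : polNorm e₀.1 (star e₀.1) ∈ slitPlane := polNorm_star_mem_slitPlane h.mem.1
  have hs := eventually_polNorm_mem_slitPlane (x := (e₀, star e₀.1)) hs₀
  have hmir : Tendsto (fun x => star (mirror x)) (𝓝 (e₀, star e₀.1)) (𝓝 e₀) := by
    have h1 := (differentiableAt_mirror (x := (e₀, star e₀.1)) hs₀).continuousAt.star
    have h2 : star (mirror (e₀, star e₀.1)) = e₀ := by
      rw [mirror_of_mem_logCirc h.mem, star_star]
    simpa only [ContinuousAt, h2] using h1
  have hdM : ∀ᶠ x in 𝓝 (e₀, star e₀.1), DifferentiableAt ℂ (mirrorImage Φ) x := by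
    filter_upwards [hmir.eventually h.diff, hs] with x hx hsx
    have h1 := hx.star_star
    rw [star_star] at h1
    exact h1.comp x (differentiableAt_mirror hsx)
  have hfst : Tendsto (fun x : BundleSpace p q × (Fin p → Fin q → ℂ) => x.1)
      (𝓝 (e₀, star e₀.1)) (𝓝 e₀) := continuous_fst.tendsto _
  have hdΦ : ∀ᶠ x in 𝓝 (e₀, star e₀.1), DifferentiableAt ℂ
      (fun y : BundleSpace p q × (Fin p → Fin q → ℂ) => Φ y.1) x := by
    filter_upwards [hfst.eventually h.diff] with x hx
    exact hx.comp x differentiableAt_fst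
  have hdP : ∀ᶠ x in 𝓝 (e₀, star e₀.1), DifferentiableAt ℂ
      (fun y => polNorm (Φ y.1).1 (mirrorImage Φ y).1) x := by
    filter_upwards [hdM, hdΦ] with x h1 h2
    exact differentiableAt_polNorm h2.fst h1.fst
  have hsM : ∀ᶠ x in 𝓝 (e₀, star e₀.1), polNorm (Φ x.1).1 (mirrorImage Φ x).1 ∈ slitPlane := by
    refine hdP.self_of_nhds.continuousAt.eventually (isOpen_slitPlane.mem_nhds ?_)
    simp only [mirrorImage_of_mem_logCirc Φ h.mem]
    exact polNorm_star_mem_slitPlane (h.maps.self_of_nhds h.mem).1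
  have heq : ∀ᶠ y in 𝓝 (e₀, star e₀.1), (Φ y.1).2 + (mirrorImage Φ y).2 -
      log (polNorm (Φ y.1).1 (mirrorImage Φ y).1) = 0 := by
    refine eventually_eq_zero_of_logCirc (K := fun y => (Φ y.1).2 + (mirrorImage Φ y).2 -
      log (polNorm (Φ y.1).1 (mirrorImage Φ y).1)) h.mem ?_ ?_
    · filter_upwards [hdM, hdΦ, hdP, hsM] with x h1 h2 h3 h4
      exact (h2.snd.add h1.snd).sub (h3.clog h4)
    · filter_upwards [h.maps] with e he hmem
      have h1 := log_polNorm_of_mem_logCirc (he hmem)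
      rw [mirrorImage_of_mem_logCirc Φ hmem]
      exact sub_eq_zero.2 h1.symm
  filter_upwards [hs, hsM, hfst.eventually h.diff.eventually_nhds, hdM, heq.eventually_nhds]
    with x h1 h2 h3 h4 h5
  exact ⟨h1, h2, h3, h4, h5.mono fun y hy => sub_eq_zero.1 hy⟩

/-- The slope to which `Φ` carries the slope at `x`. -/
def imageSlope (Φ : BundleSpace p q → BundleSpace p q)
    (x : BundleSpace p q × (Fin p → Fin q → ℂ)) : Matrix (Fin q) (Fin p) ℂ :=
  logSlope (Φ x.1).1 (mirrorImage Φ x).1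

/-- The first component of the second differential of `Φ`. -/
def hessFst (Φ : BundleSpace p q → BundleSpace p q) (e : BundleSpace p q) :
    BundleSpace p q →ₗ[ℂ] BundleSpace p q →ₗ[ℂ] (Fin p → Fin q → ℂ) :=
  (fderiv ℂ (fderiv ℂ Φ) e).toLinearMap₁₂.compr₂ (LinearMap.fst ℂ _ _)

/-- The second component of the second differential of `Φ`. -/
def hessSnd (Φ : BundleSpace p q → BundleSpace p q) (e : BundleSpace p q) :
    BundleSpace p q →ₗ[ℂ] BundleSpace p q →ₗ[ℂ] ℂ :=
  (fderiv ℂ (fderiv ℂ Φ) e).toLinearMap₁₂.compr₂ (LinearMap.snd ℂ _ _)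

lemma hessFst_apply (Φ : BundleSpace p q → BundleSpace p q) (e x y : BundleSpace p q) :
    hessFst Φ e x y = (fderiv ℂ (fderiv ℂ Φ) e x y).1 := rfl

lemma hessSnd_apply (Φ : BundleSpace p q → BundleSpace p q) (e x y : BundleSpace p q) :
    hessSnd Φ e x y = (fderiv ℂ (fderiv ℂ Φ) e x y).2 := rfl

/-- The curve through `x.1` in direction `v` along which the reflected point is constant. -/
def segreCurve (x : BundleSpace p q × (Fin p → Fin q → ℂ)) (v : Fin p → Fin q → ℂ) (t : ℂ) :
    BundleSpace p q :=
  (x.1.1 + t • v, log (polNorm (x.1.1 + t • v) x.2) - (mirror x).2)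

lemma segreCurve_zero (x : BundleSpace p q × (Fin p → Fin q → ℂ)) (v : Fin p → Fin q → ℂ) :
    segreCurve x v 0 = x.1 := by
  simp [segreCurve, mirror]

lemma mirror_segreCurve (x : BundleSpace p q × (Fin p → Fin q → ℂ)) (v : Fin p → Fin q → ℂ)
    (t : ℂ) : mirror (segreCurve x v t, x.2) = mirror x := by
  simp [segreCurve, mirror]

lemma HasDerivAt.prod_fst {A B : Type*} [NormedAddCommGroup A] [NormedSpace ℂ A]
    [NormedAddCommGroup B] [NormedSpace ℂ B] {f : ℂ → A × B} {f' : A × B} {t : ℂ}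
    (h : HasDerivAt f f' t) : HasDerivAt (fun s => (f s).1) f'.1 t :=
  (ContinuousLinearMap.fst ℂ A B).hasFDerivAt.comp_hasDerivAt t h

lemma HasDerivAt.prod_snd {A B : Type*} [NormedAddCommGroup A] [NormedSpace ℂ A]
    [NormedAddCommGroup B] [NormedSpace ℂ B] {f : ℂ → A × B} {f' : A × B} {t : ℂ}
    (h : HasDerivAt f f' t) : HasDerivAt (fun s => (f s).2) f'.2 t :=
  (ContinuousLinearMap.snd ℂ A B).hasFDerivAt.comp_hasDerivAt t h

lemma hasDerivAt_line (Z v : Fin p → Fin q → ℂ) (t : ℂ) :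
    HasDerivAt (fun s : ℂ => Z + s • v) v t := by
  simpa using ((hasDerivAt_id t).smul_const v).const_add Z

lemma hasDerivAt_segreCurve {x : BundleSpace p q × (Fin p → Fin q → ℂ)} {v : Fin p → Fin q → ℂ}
    {t : ℂ} (h : polNorm (x.1.1 + t • v) x.2 ∈ slitPlane) :
    HasDerivAt (segreCurve x v) (graphVec v (logSlope (x.1.1 + t • v) x.2)) t := by
  have h1 := hasDerivAt_line x.1.1 v t
  exact h1.prodMk ((hasDerivAt_log_polNorm h1 h).sub_const _)

lemma IsPolarized.isTransformed {Φ : BundleSpace p q → BundleSpace p q}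
    {x : BundleSpace p q × (Fin p → Fin q → ℂ)} (h : IsPolarized Φ x) :
    IsTransformed (fderiv ℂ Φ x.1 : BundleSpace p q →ₗ[ℂ] BundleSpace p q) (hessFst Φ x.1)
      (hessSnd Φ x.1) (logSlope x.1.1 x.2) (imageSlope Φ x) := by
  set w := mirrorImage Φ x with hw
  suffices H : ∀ v, (∀ᶠ t in 𝓝 (0 : ℂ),
      (fderiv ℂ Φ (segreCurve x v t) (graphVec v (logSlope (x.1.1 + t • v) x.2))).2 +
        trPair (fderiv ℂ Φ (segreCurve x v t) (graphVec v (logSlope (x.1.1 + t • v) x.2))).1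
          (logSlope (Φ (segreCurve x v t)).1 w.1) = 0) by
    refine ⟨fun v => ?_, fun v => ?_⟩
    · have := (H v).self_of_nhds
      simp only [segreCurve_zero, zero_smul, add_zero] at this
      exact this
    · have hs0 : polNorm (x.1.1 + (0 : ℂ) • v) x.2 ∈ slitPlane := by simpa using h.slit
      have hγ := hasDerivAt_segreCurve (x := x) (v := v) (t := 0) hs0
      have hS := hasDerivAt_trPair_logSlope (W := x.2) (hasDerivAt_const (0 : ℂ) v)
        (hasDerivAt_line x.1.1 v 0) (slitPlane_ne_zero hs0)
      have hγ' : HasDerivAt (fun t : ℂ => graphVec v (logSlope (x.1.1 + t • v) x.2))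
          ((0, -(of v * logSlope x.1.1 x.2 * (of v * logSlope x.1.1 x.2)).trace) :
            BundleSpace p q) 0 := by
        have h1 := (hasDerivAt_const (0 : ℂ) v).prodMk hS.neg
        simp only [zero_smul, add_zero, map_zero, LinearMap.zero_apply, zero_add] at h1
        exact h1
      have hD : HasFDerivAt (fderiv ℂ Φ) (fderiv ℂ (fderiv ℂ Φ) x.1) (segreCurve x v 0) := by
        rw [segreCurve_zero]
        exact (differentiableAt_fderiv_of_eventually h.diff).hasFDerivAt
      have hy := (hD.comp_hasDerivAt (0 : ℂ) hγ).clm_apply hγ'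
      have hΦ : HasFDerivAt Φ (fderiv ℂ Φ x.1) (segreCurve x v 0) := by
        rw [segreCurve_zero]; exact h.diff.self_of_nhds.hasFDerivAt
      have hΦγ := hΦ.comp_hasDerivAt (0 : ℂ) hγ
      have hR : polNorm ((Φ ∘ segreCurve x v) 0).1 w.1 ≠ 0 := by
        rw [Function.comp_apply, segreCurve_zero]
        exact slitPlane_ne_zero h.slit_map
      have hfin := hy.prod_snd.add (hasDerivAt_trPair_logSlope (W := w.1) hy.prod_fst hΦγ.prod_fst hR)
      have hz := hfin.unique ((hasDerivAt_const (0 : ℂ) (0 : ℂ)).congr_of_eventuallyEq (H v))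
      simp only [Function.comp_apply, segreCurve_zero, zero_smul, add_zero] at hz
      set S := logSlope x.1.1 x.2
      set τ := (of v * S * (of v * S)).trace
      have e1 : (fderiv ℂ Φ x.1) ((0, -τ) : BundleSpace p q) = -τ • fderiv ℂ Φ x.1 (0, 1) := by
        rw [← map_smul]
        simp
      rw [e1] at hz
      simp only [hessFst_apply, hessSnd_apply, ContinuousLinearMap.coe_coe, imageSlope, ← hw]
      rw [← hz]
      simp only [Prod.fst_add, Prod.snd_add, Prod.smul_fst, Prod.smul_snd, Prod.fst_neg,
        Prod.snd_neg, smul_eq_mul, neg_smul, sub_eq_add_neg]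
      ring
  intro v
  have hγc : Tendsto (segreCurve x v) (𝓝 0) (𝓝 x.1) := by
    have hs0 : polNorm (x.1.1 + (0 : ℂ) • v) x.2 ∈ slitPlane := by simpa using h.slit
    have := (hasDerivAt_segreCurve (x := x) (v := v) (t := 0) hs0).continuousAt
    unfold ContinuousAt at this
    rwa [segreCurve_zero] at this
  have hγx : Tendsto (fun t => (segreCurve x v t, x.2)) (𝓝 0) (𝓝 x) :=
    hγc.prodMk_nhds tendsto_const_nhds
  have hmi : ∀ t, mirrorImage Φ (segreCurve x v t, x.2) = w := by
    intro t; rw [mirrorImage, mirror_segreCurve]; rfl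
  have hslit : ∀ᶠ t in 𝓝 (0 : ℂ), polNorm (x.1.1 + t • v) x.2 ∈ slitPlane :=
    hγx.eventually (eventually_polNorm_mem_slitPlane h.slit)
  have hslitM : ∀ᶠ t in 𝓝 (0 : ℂ), polNorm (Φ (segreCurve x v t)).1 w.1 ∈ slitPlane := by
    have h1 : ContinuousAt (fun Y : Fin p → Fin q → ℂ => polNorm Y w.1) (Φ x.1).1 :=
      (differentiableAt_polNorm differentiableAt_id (differentiableAt_const _)).continuousAt
    have h2 : Tendsto (fun t => (Φ (segreCurve x v t)).1) (𝓝 0) (𝓝 (Φ x.1).1) :=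
      (h.diff.self_of_nhds.continuousAt.fst).tendsto.comp hγc
    exact (h1.tendsto.comp h2).eventually (isOpen_slitPlane.mem_nhds h.slit_map)
  have heqn := (hγx.eventually h.eqn).eventually_nhds
  filter_upwards [hslit, hslitM, heqn, hγc.eventually h.diff] with t h1 h2 h3 h4
  have hΦγ := h4.hasFDerivAt.comp_hasDerivAt t (hasDerivAt_segreCurve h1)
  have hr := hasDerivAt_log_polNorm (W := w.1) hΦγ.prod_fst h2
  have hl := hΦγ.prod_snd.add_const w.2
  have := hl.unique (hr.congr_of_eventuallyEq (h3.mono fun s hs => by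
    simp only [hmi] at hs; exact hs))
  rw [this]
  simp

end LogMap

section PositiveMatrices

variable {m n : Type*} [Fintype m] [Fintype n] [DecidableEq m] [DecidableEq n]

lemma Matrix.PosDef.exists_eq_conjTranspose_mul_self {A : Matrix n n ℂ} (hA : A.PosDef) :
    ∃ c : Matrix n n ℂ, IsUnit c.det ∧ A = cᴴ * c := by
  let U : Matrix n n ℂ := hA.1.eigenvectorUnitary
  let s : n → ℂ := fun i => (Real.sqrt (hA.1.eigenvalues i) : ℂ)
  have hs : star (diagonal s) = diagonal s := by
    rw [star_eq_conjTranspose, diagonal_conjTranspose]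
    congr 1
    ext i
    simp [s]
  have hss : diagonal s * diagonal s = diagonal (RCLike.ofReal ∘ hA.1.eigenvalues) := by
    rw [diagonal_mul_diagonal]
    congr 1
    ext i
    simp only [s, Function.comp_apply, ← ofReal_mul, Real.mul_self_sqrt (hA.eigenvalues_pos i).le]
    rfl
  have hAc : A = (diagonal s * star U)ᴴ * (diagonal s * star U) := by
    rw [conjTranspose_mul, ← star_eq_conjTranspose, ← star_eq_conjTranspose, hs, star_star,
      Matrix.mul_assoc, ← Matrix.mul_assoc (diagonal s), hss]
    conv_lhs => rw [hA.1.spectral_theorem, Unitary.conjStarAlgAut_apply]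
    rw [Matrix.mul_assoc]
  refine ⟨diagonal s * star U, ?_, hAc⟩
  have hdet := hA.det_pos.ne'
  rw [hAc, det_mul] at hdet
  exact isUnit_iff_ne_zero.2 (right_ne_zero_of_mul hdet)

lemma Matrix.PosDef.exists_mul_mul_conjTranspose_eq_one {A : Matrix n n ℂ} (hA : A.PosDef) :
    ∃ b : Matrix n n ℂ, b * A * bᴴ = 1 := by
  obtain ⟨c, hc, rfl⟩ := hA.exists_eq_conjTranspose_mul_self
  refine ⟨(c⁻¹)ᴴ, ?_⟩
  rw [conjTranspose_conjTranspose, ← Matrix.mul_assoc, ← conjTranspose_mul, mul_nonsing_inv _ hc,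
    conjTranspose_one, Matrix.one_mul, mul_nonsing_inv _ hc]

lemma posDef_one_sub_conjTranspose_mul {Z : Matrix m n ℂ} (h : (1 - Z * Zᴴ).PosDef) :
    (1 - Zᴴ * Z).PosDef := by
  have hu : IsUnit (1 - Z * Zᴴ).det := isUnit_iff_ne_zero.2 h.det_pos.ne'
  have h1 : (1 + Zᴴ * (1 - Z * Zᴴ)⁻¹ * Z).PosDef :=
    PosDef.one.add_posSemidef (h.inv.posSemidef.conjTranspose_mul_mul_same Z)
  have h2 : (1 - Zᴴ * Z) = (1 + Zᴴ * (1 - Z * Zᴴ)⁻¹ * Z)⁻¹ := by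
    refine (inv_eq_left_inv ?_).symm
    have e : (1 - Zᴴ * Z) * Zᴴ = Zᴴ * (1 - Z * Zᴴ) := by
      simp [Matrix.sub_mul, Matrix.mul_sub, Matrix.mul_assoc]
    rw [Matrix.mul_add, ← Matrix.mul_assoc, ← Matrix.mul_assoc, e, Matrix.mul_assoc Zᴴ,
      mul_nonsing_inv _ hu]
    simp
  rw [h2]
  exact h1.inv

lemma posDef_one_sub_mul_conjTranspose_iff {Z : Matrix m n ℂ} :
    (1 - Z * Zᴴ).PosDef ↔ (1 - Zᴴ * Z).PosDef := by
  refine ⟨posDef_one_sub_conjTranspose_mul, fun h => ?_⟩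
  have := posDef_one_sub_conjTranspose_mul (Z := Zᴴ) (by rwa [conjTranspose_conjTranspose])
  rwa [conjTranspose_conjTranspose] at this

lemma eq_zero_of_trace_mul_eq_zero {A : Matrix n n ℂ} {B : Matrix m m ℂ} (hA : A.PosDef)
    (hB : B.PosDef) {a : Matrix m n ℂ} (h : (a * (A * aᴴ * B)).trace = 0) : a = 0 := by
  obtain ⟨c, hc, rfl⟩ := hA.exists_eq_conjTranspose_mul_self
  obtain ⟨b, hb, rfl⟩ := hB.exists_eq_conjTranspose_mul_self
  have e : (a * (cᴴ * c * aᴴ * (bᴴ * b))).trace = ((b * a * cᴴ) * (b * a * cᴴ)ᴴ).trace := by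
    rw [conjTranspose_mul, conjTranspose_mul, conjTranspose_conjTranspose, Matrix.mul_assoc b,
      Matrix.mul_assoc b, trace_mul_comm b]
    simp only [Matrix.mul_assoc]
  rw [e, trace_mul_conjTranspose_self_eq_zero_iff] at h
  have h1 : b⁻¹ * (b * a * cᴴ) * (c⁻¹)ᴴ = a := by
    rw [Matrix.mul_assoc, Matrix.mul_assoc _ cᴴ, ← conjTranspose_mul, nonsing_inv_mul _ hc,
      conjTranspose_one, Matrix.mul_one, ← Matrix.mul_assoc, nonsing_inv_mul _ hb, Matrix.one_mul]
  rw [← h1, h]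
  simp

end PositiveMatrices

section Dichotomy

variable {p q : ℕ} {Φ : BundleSpace p q → BundleSpace p q} {e₀ : BundleSpace p q}

/-- The factor by which `Φ` scales the contact form of the Segre family at `x`. -/
def contactFactor (Φ : BundleSpace p q → BundleSpace p q)
    (x : BundleSpace p q × (Fin p → Fin q → ℂ)) : ℂ :=
  (fderiv ℂ Φ x.1 (0, 1)).2 + trPair (fderiv ℂ Φ x.1 (0, 1)).1 (imageSlope Φ x)

lemma eventually_diag {P : BundleSpace p q × (Fin p → Fin q → ℂ) → Prop}
    (h : ∀ᶠ x in 𝓝 (e₀, star e₀.1), P x) : ∀ᶠ e in 𝓝 e₀, P (e, star e.1) := by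
  have hc : Continuous fun e : BundleSpace p q => (e, star e.1) := by fun_prop
  exact (hc.tendsto e₀).eventually h

lemma eventually_slice {P : BundleSpace p q × (Fin p → Fin q → ℂ) → Prop}
    {x : BundleSpace p q × (Fin p → Fin q → ℂ)}
    (h : ∀ᶠ y in 𝓝 x, P y) : ∀ᶠ W in 𝓝 x.2, P (x.1, W) := by
  have hc : Continuous fun W : Fin p → Fin q → ℂ => (x.1, W) := by fun_prop
  exact (hc.tendsto x.2).eventually h

lemma eventually_fst_of_eventually {P : BundleSpace p q → Prop} {W : Fin p → Fin q → ℂ}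
    (h : ∀ᶠ y : BundleSpace p q × (Fin p → Fin q → ℂ) in 𝓝 (e₀, W), P y.1) :
    ∀ᶠ e in 𝓝 e₀, P e := by
  have hc : Continuous fun e : BundleSpace p q => (e, W) := by fun_prop
  exact (hc.tendsto e₀).eventually h

namespace IsPolarized

variable {x : BundleSpace p q × (Fin p → Fin q → ℂ)}

lemma differentiableAt_fderiv_apply (h : IsPolarized Φ x)
    {g : BundleSpace p q × (Fin p → Fin q → ℂ) → BundleSpace p q} (hg : DifferentiableAt ℂ g x) :
    DifferentiableAt ℂ (fun y => fderiv ℂ Φ y.1 (g y)) x := by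
  have h1 : DifferentiableAt ℂ (fun y : BundleSpace p q × (Fin p → Fin q → ℂ) =>
      fderiv ℂ Φ y.1) x :=
    (differentiableAt_fderiv_of_eventually h.diff).comp x differentiableAt_fst
  exact h1.clm_apply hg

lemma differentiableAt_contactFactor (h : IsPolarized Φ x) :
    DifferentiableAt ℂ (contactFactor Φ) x := by
  have h1 := h.differentiableAt_fderiv_apply (g := fun _ => (0, 1)) (differentiableAt_const _)
  have h2 : DifferentiableAt ℂ (fun y : BundleSpace p q × (Fin p → Fin q → ℂ) => Φ y.1) x :=
    h.diff.self_of_nhds.comp x differentiableAt_fst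
  exact h1.snd.add (differentiableAt_trPair_logSlope h1.fst h2.fst h.diff_mirror.fst
    (slitPlane_ne_zero h.slit_map))

end IsPolarized

lemma hasDerivAt_mirrorImage {e : BundleSpace p q} (he : e ∈ logCirc p q)
    (hd : DifferentiableAt ℂ Φ e) (v : Fin p → Fin q → ℂ) :
    HasDerivAt (fun t : ℂ => mirrorImage Φ (e, star e.1 + t • star v))
      (star (fderiv ℂ Φ e (graphVec v (logSlope e.1 (star e.1))))) 0 := by
  have hline := hasDerivAt_line (star e.1) (star v) 0
  have hs : polNorm (star e.1 + (0 : ℂ) • star v) e.1 ∈ slitPlane := by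
    rw [zero_smul, add_zero, polNorm_comm]
    exact polNorm_star_mem_slitPlane he.1
  have hm : HasDerivAt (fun t : ℂ => mirror (e, star e.1 + t • star v))
      (star (graphVec v (logSlope e.1 (star e.1)))) 0 := by
    have h1 := hline.prodMk ((hasDerivAt_log_polNorm hline hs).sub_const e.2)
    have h2 : star (graphVec v (logSlope e.1 (star e.1))) =
        (star v, -trPair (star v) (logSlope (star e.1 + (0 : ℂ) • star v) e.1)) := by
      have h3 := trPair_star_logSlope_star v e.1 (star e.1)
      rw [star_star] at h3
      rw [zero_smul, add_zero, h3]
      ext <;> simp [graphVec]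
    rw [h2]
    refine h1.congr_of_eventuallyEq (Eventually.of_forall fun t => ?_)
    simp only [mirror]
    rw [polNorm_comm]
  have hΦ := hd.hasFDerivAt.star_star
  rw [← mirror_of_mem_logCirc he] at hΦ
  have hpt : mirror (e, star e.1) = mirror (e, star e.1 + (0 : ℂ) • star v) := by
    rw [zero_smul, add_zero]
  rw [hpt] at hΦ
  have := hΦ.comp_hasDerivAt (0 : ℂ) hm
  refine this.congr_deriv ?_
  simp

/-- Where the contact factor vanishes, `Φ` carries every tangent vector into the image graph. -/
lemma IsLogMap.eventually_apply_eq_zero (h : IsLogMap Φ e₀)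
    (h0 : ∀ᶠ e in 𝓝 e₀, e ∈ logCirc p q → contactFactor Φ (e, star e.1) = 0) :
    ∀ᶠ x in 𝓝 (e₀, star e₀.1), ∀ y,
      (fderiv ℂ Φ x.1 y).2 + trPair (fderiv ℂ Φ x.1 y).1 (imageSlope Φ x) = 0 := by
  have hpol := h.isPolarized
  have hcf : ∀ᶠ x in 𝓝 (e₀, star e₀.1), contactFactor Φ x = 0 :=
    eventually_eq_zero_of_logCirc h.mem (hpol.mono fun x hx => hx.differentiableAt_contactFactor) h0
  filter_upwards [hpol, hcf] with x h1 h2 y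
  have h3 := h1.isTransformed.apply y
  simp only [ContinuousLinearMap.coe_coe] at h3
  rw [h3]
  simp only [contactFactor] at h2
  rw [h2, zero_mul]

lemma fderiv_graphVec_eq_zero {e : BundleSpace p q} (he : e ∈ logCirc p q)
    (hd : DifferentiableAt ℂ Φ e) (hΩ : (Φ e).1 ∈ typeIDomain p q)
    (h1 : ∀ᶠ x in 𝓝 (e, star e.1), ∀ y,
      (fderiv ℂ Φ x.1 y).2 + trPair (fderiv ℂ Φ x.1 y).1 (imageSlope Φ x) = 0)
    (v : Fin p → Fin q → ℂ) :
    fderiv ℂ Φ e (graphVec v (logSlope e.1 (star e.1))) = 0 := by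
  have hb := (hasDerivAt_mirrorImage he hd v).prod_fst
  generalize graphVec v (logSlope e.1 (star e.1)) = y at hb ⊢
  obtain ⟨a, ha⟩ : ∃ a, (fderiv ℂ Φ e y).1 = a := ⟨_, rfl⟩
  have hb0 : (mirrorImage Φ (e, star e.1 + (0 : ℂ) • star v)).1 = star (Φ e).1 := by
    rw [zero_smul, add_zero, mirrorImage_of_mem_logCirc Φ he]; rfl
  have hne : polNorm (Φ e).1 (mirrorImage Φ (e, star e.1 + (0 : ℂ) • star v)).1 ≠ 0 := by
    rw [hb0]; exact slitPlane_ne_zero (polNorm_star_mem_slitPlane hΩ)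
  have hD := (hasDerivAt_trPair_logSlope_right (w := a) hb hne).const_add (fderiv ℂ Φ e y).2
  have hev : (fun t : ℂ => (fderiv ℂ Φ e y).2 + trPair a
      (logSlope (Φ e).1 (mirrorImage Φ (e, star e.1 + t • star v)).1)) =ᶠ[𝓝 0] fun _ => 0 := by
    have hc : Tendsto (fun t : ℂ => (e, star e.1 + t • star v)) (𝓝 0) (𝓝 (e, star e.1)) := by
      have : Continuous (fun t : ℂ => (e, star e.1 + t • star v)) := by fun_prop
      simpa using this.tendsto 0
    filter_upwards [hc.eventually h1] with t ht
    rw [← ha]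
    exact ht y
  have hz := hD.unique ((hasDerivAt_const (0 : ℂ) (0 : ℂ)).congr_of_eventuallyEq hev)
  rw [hb0] at hz
  have hst : (star (fderiv ℂ Φ e y)).1 = star a := by rw [← ha]; rfl
  rw [hst] at hz
  have ha0 : a = 0 := by
    have := eq_zero_of_trace_mul_eq_zero (posDef_one_sub_conjTranspose_mul hΩ).inv
      (PosDef.inv hΩ) (a := of a) hz
    exact of.injective this
  have hy2 := h1.self_of_nhds y
  simp only [ha, ha0, map_zero, LinearMap.zero_apply, add_zero] at hy2
  exact Prod.ext (ha.trans ha0) hy2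

lemma IsPolarized.differentiableAt_fderiv_graphVec
    {x : BundleSpace p q × (Fin p → Fin q → ℂ)} (h : IsPolarized Φ x) (v : Fin p → Fin q → ℂ) :
    DifferentiableAt ℂ (fun y : BundleSpace p q × (Fin p → Fin q → ℂ) =>
      fderiv ℂ Φ y.1 (graphVec v (logSlope y.1.1 y.2))) x := by
  have h1 : DifferentiableAt ℂ (fun y : BundleSpace p q × (Fin p → Fin q → ℂ) =>
      trPair v (logSlope y.1.1 y.2)) x :=
    differentiableAt_trPair_logSlope (differentiableAt_const v)
      (a := fun y : BundleSpace p q × (Fin p → Fin q → ℂ) => y.1.1) (b := fun y => y.2)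
      (by fun_prop) (by fun_prop) (slitPlane_ne_zero h.slit)
  have h2 : DifferentiableAt ℂ (fun y : BundleSpace p q × (Fin p → Fin q → ℂ) =>
      (v, -trPair v (logSlope y.1.1 y.2))) x :=
    (differentiableAt_const v).prodMk h1.neg
  exact h.differentiableAt_fderiv_apply h2

lemma eq_zero_of_forall_graphVec [Nonempty (Fin p)] [Nonempty (Fin q)]
    {L : BundleSpace p q →L[ℂ] BundleSpace p q} {S₀ : Matrix (Fin q) (Fin p) ℂ}
    (hS : ∀ᶠ S in 𝓝 S₀, ∀ i j, L (graphVec (elem i j) S) = 0) : L = 0 := by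
  obtain ⟨i⟩ := ‹Nonempty (Fin p)›
  obtain ⟨j⟩ := ‹Nonempty (Fin q)›
  obtain ⟨t, ht, ht0⟩ : ∃ t : ℂ, L (graphVec (elem i j) (S₀ + t • Matrix.single j i 1)) = 0 ∧
      t ≠ 0 := by
    have hc : Continuous fun t : ℂ => S₀ + t • (Matrix.single j i 1 : Matrix (Fin q) (Fin p) ℂ) := by
      fun_prop
    have h1 : ∀ᶠ t : ℂ in 𝓝 0, ∀ i' j', L (graphVec (elem i' j')
        (S₀ + t • (Matrix.single j i 1 : Matrix (Fin q) (Fin p) ℂ))) = 0 := by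
      refine (hc.tendsto 0).eventually
        (p := fun S => ∀ i' j', L (graphVec (elem i' j') S) = 0) ?_
      simpa using hS
    have h2 : ∀ᶠ t : ℂ in 𝓝[≠] 0, L (graphVec (elem i j)
        (S₀ + t • (Matrix.single j i 1 : Matrix (Fin q) (Fin p) ℂ))) = 0 :=
      (h1.filter_mono nhdsWithin_le_nhds).mono fun t ht => ht i j
    exact (h2.and self_mem_nhdsWithin).exists
  have hv1 : L (0, 1) = 0 := by
    have h1 := hS.self_of_nhds i j
    have h2 : graphVec (elem i j) S₀ - graphVec (elem i j) (S₀ + t • Matrix.single j i 1) =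
        t • ((0, 1) : BundleSpace p q) := by
      ext <;> simp [graphVec, trPair_single, elem]
    have h3 : t • L (0, 1) = 0 := by
      rw [← map_smul, ← h2, map_sub, h1, ht, sub_zero]
    exact (smul_eq_zero.1 h3).resolve_left ht0
  have hv : ∀ i j, L (elem i j, 0) = 0 := by
    intro i j
    have h1 := hS.self_of_nhds i j
    have h2 : graphVec (elem i j) S₀ =
        (elem i j, 0) + (-trPair (elem i j) S₀) • ((0, 1) : BundleSpace p q) := by
      ext <;> simp [graphVec]
    rw [h2, map_add, map_smul, hv1, smul_zero, add_zero] at h1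
    exact h1
  have hlin : ∀ w : Fin p → Fin q → ℂ, L (w, 0) = 0 := by
    intro w
    have : (L ∘L ContinuousLinearMap.inl ℂ (Fin p → Fin q → ℂ) ℂ) w = 0 := by
      rw [sum_elem w]
      simp only [map_sum, map_smul]
      simp [hv]
    simpa using this
  refine ContinuousLinearMap.ext fun y => ?_
  have : y = (y.1, 0) + y.2 • ((0, 1) : BundleSpace p q) := by ext <;> simp
  rw [this, map_add, map_smul, hv1, hlin]
  simp

/-- A map whose contact factor vanishes on the circle bundle is locally constant. -/
lemma IsLogMap.fderiv_eq_zero [Nonempty (Fin p)] [Nonempty (Fin q)] (h : IsLogMap Φ e₀)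
    (h0 : ∀ᶠ e in 𝓝 e₀, e ∈ logCirc p q → contactFactor Φ (e, star e.1) = 0) :
    ∀ᶠ e in 𝓝 e₀, fderiv ℂ Φ e = 0 := by
  have hpol := h.isPolarized
  have hall := h.eventually_apply_eq_zero h0
  have hgraph : ∀ᶠ x in 𝓝 (e₀, star e₀.1), ∀ i j,
      fderiv ℂ Φ x.1 (graphVec (elem i j) (logSlope x.1.1 x.2)) = 0 := by
    refine eventually_all.2 fun i => eventually_all.2 fun j => ?_
    refine eventually_eq_zero_of_logCirc (K := fun x =>
      fderiv ℂ Φ x.1 (graphVec (elem i j) (logSlope x.1.1 x.2))) h.mem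
      (hpol.mono fun x hx => hx.differentiableAt_fderiv_graphVec _) ?_
    filter_upwards [eventually_diag hall.eventually_nhds, h.diff, h.maps] with e h1 h2 h3 he
    exact fderiv_graphVec_eq_zero he h2 (h3 he).1 h1 _
  filter_upwards [(hgraph.and hpol).curry_nhds] with e he
  have hne : polNorm e.1 (star e₀.1) ≠ 0 := slitPlane_ne_zero he.self_of_nhds.2.slit
  refine eq_zero_of_forall_graphVec (S₀ := logSlope e.1 (star e₀.1)) ?_
  filter_upwards [eventually_exists_logSlope_eq hne he] with S hS
  obtain ⟨W, ⟨h1, -⟩, rfl⟩ := hS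
  exact h1

/-- A map whose contact factor does not vanish preserves the vertical vector field. -/
lemma IsLogMap.fderiv_vertical [Nontrivial (Fin p)] [Nontrivial (Fin q)] (h : IsLogMap Φ e₀)
    (h0 : contactFactor Φ (e₀, star e₀.1) ≠ 0) :
    ∀ᶠ e in 𝓝 e₀, fderiv ℂ Φ e (0, 1) = (0, 1) := by
  have hpol := h.isPolarized
  have hcf : ∀ᶠ x in 𝓝 (e₀, star e₀.1), contactFactor Φ x ≠ 0 :=
    hpol.self_of_nhds.differentiableAt_contactFactor.continuousAt.eventually_ne h0
  have hdv : ∀ᶠ x in 𝓝 (e₀, star e₀.1), DifferentiableAt ℂ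
      (fun y : BundleSpace p q × (Fin p → Fin q → ℂ) => fderiv ℂ Φ y.1 (0, 1)) x :=
    hpol.mono fun x hx => hx.differentiableAt_fderiv_apply (differentiableAt_const _)
  have hT : ∀ᶠ e in 𝓝 e₀, e ∈ logCirc p q → ∀ᶠ S in 𝓝 (logSlope e.1 (star e.1)), ∃ R,
      IsTransformed (fderiv ℂ Φ e : BundleSpace p q →ₗ[ℂ] BundleSpace p q) (hessFst Φ e)
        (hessSnd Φ e) S R ∧ (fderiv ℂ Φ e (0, 1)).2 + trPair (fderiv ℂ Φ e (0, 1)).1 R ≠ 0 := by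
    filter_upwards [eventually_diag (hpol.and hcf).eventually_nhds] with e h1 he
    have hne := slitPlane_ne_zero (polNorm_star_mem_slitPlane he.1)
    filter_upwards [eventually_exists_logSlope_eq hne (eventually_slice h1)] with S hS
    obtain ⟨W, ⟨h2, h3⟩, rfl⟩ := hS
    exact ⟨_, h2.isTransformed, h3⟩
  have hfst : ∀ᶠ e in 𝓝 e₀, (fderiv ℂ Φ e (0, 1)).1 = 0 := by
    refine eventually_fst_of_eventually (W := star e₀.1) (eventually_eq_zero_of_logCirc
      (K := fun x => (fderiv ℂ Φ x.1 (0, 1)).1) h.mem (hdv.mono fun x hx => hx.fst) ?_)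
    filter_upwards [hT] with e h1 he
    exact fst_vertical_eq_zero_of_isTransformed (h1 he)
  have hsnd : ∀ᶠ e in 𝓝 e₀, (fderiv ℂ Φ e (0, 1)).2 - 1 = 0 := by
    refine eventually_fst_of_eventually (W := star e₀.1) (eventually_eq_zero_of_logCirc
      (K := fun x => (fderiv ℂ Φ x.1 (0, 1)).2 - 1) h.mem
      (hdv.mono fun x hx => hx.snd.sub_const _) ?_)
    filter_upwards [hT, hfst.eventually_nhds, h.diff.eventually_nhds] with e h1 h2 h3 he
    have hD := (differentiableAt_fderiv_of_eventually h3).hasFDerivAt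
    have hB2 : ∀ x, hessFst Φ e x (0, 1) = 0 := by
      intro x
      have h4 := (hD.clm_apply (hasFDerivAt_const ((0, 1) : BundleSpace p q) e)).fst
      have h5 := h4.unique ((hasFDerivAt_const (0 : Fin p → Fin q → ℂ) e).congr_of_eventuallyEq h2)
      have h6 := congrArg (fun T => T x) h5
      simpa [hessFst_apply] using h6
    have hsym := second_derivative_symmetric_of_eventually
      (h3.mono fun y hy => hy.hasFDerivAt) hD
    refine sub_eq_zero.2 (snd_vertical_eq_one_of_isTransformed (h1 he) (fun x => ?_) hB2)
    rw [hessFst_apply, hsym, ← hessFst_apply]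
    exact hB2 x
  filter_upwards [hfst, hsnd] with e h1 h2
  exact Prod.ext h1 (sub_eq_zero.1 h2)

end Dichotomy

section LocalForm

variable {p q : ℕ} {Φ : BundleSpace p q → BundleSpace p q} {e₀ : BundleSpace p q}

lemma eventually_eq_const_of_fderiv_eq_zero (hd : ∀ᶠ e in 𝓝 e₀, DifferentiableAt ℂ Φ e)
    (h0 : ∀ᶠ e in 𝓝 e₀, fderiv ℂ Φ e = 0) : ∀ᶠ e in 𝓝 e₀, Φ e = Φ e₀ := by
  obtain ⟨r, hr, hball⟩ := Metric.eventually_nhds_iff_ball.1 (hd.and h0)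
  filter_upwards [Metric.ball_mem_nhds e₀ hr] with e he
  refine Metric.isOpen_ball.is_const_of_fderiv_eq_zero (convex_ball e₀ r).isPreconnected
    (fun x hx => (hball x hx).1.differentiableWithinAt) (fun x hx => (hball x hx).2) he
    (Metric.mem_ball_self hr)

/-- A map preserving the vertical vector field is a translation in the vertical direction. -/
lemma eventually_eq_add_of_fderiv_vertical (hd : ∀ᶠ e in 𝓝 e₀, DifferentiableAt ℂ Φ e)
    (h1 : ∀ᶠ e in 𝓝 e₀, fderiv ℂ Φ e (0, 1) = (0, 1)) :
    ∀ᶠ e in 𝓝 e₀, Φ e = Φ (e.1, e₀.2) + (0, e.2 - e₀.2) := by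
  obtain ⟨r, hr, hball⟩ := Metric.eventually_nhds_iff_ball.1 (hd.and h1)
  filter_upwards [Metric.ball_mem_nhds e₀ hr] with e he
  have hmem : ∀ u ∈ Metric.ball e₀.2 r, (e.1, u) ∈ Metric.ball e₀ r := by
    intro u hu
    rw [Metric.mem_ball, Prod.dist_eq] at he ⊢
    exact max_lt (max_lt_iff.1 he).1 hu
  have hD : ∀ u ∈ Metric.ball e₀.2 r,
      HasDerivAt (fun u : ℂ => Φ (e.1, u) - (0, u)) 0 u := by
    intro u hu
    have h2 := hball _ (hmem u hu)
    have h3 : HasDerivAt (fun u : ℂ => ((e.1, u) : BundleSpace p q)) (0, 1) u :=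
      (hasDerivAt_const u e.1).prodMk (hasDerivAt_id u)
    have h4 : HasDerivAt (fun u : ℂ => ((0, u) : BundleSpace p q)) (0, 1) u :=
      (hasDerivAt_const u (0 : Fin p → Fin q → ℂ)).prodMk (hasDerivAt_id u)
    have h5 := (h2.1.hasFDerivAt.comp_hasDerivAt u h3).sub h4
    rw [h2.2, sub_self] at h5
    exact h5
  have he2 : e.2 ∈ Metric.ball e₀.2 r := by
    rw [Metric.mem_ball, Prod.dist_eq] at he
    exact (max_lt_iff.1 he).2
  have h := Metric.isOpen_ball.is_const_of_deriv_eq_zero (convex_ball e₀.2 r).isPreconnected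
    (fun u hu => (hD u hu).differentiableAt.differentiableWithinAt) (fun u hu => (hD u hu).deriv)
    he2 (Metric.mem_ball_self hr)
  have h' : Φ e = Φ (e.1, e₀.2) - (0, e₀.2) + (0, e.2) := by
    rw [← h]; simp
  rw [h']
  ext <;> simp [sub_add_eq_add_sub, add_sub_assoc]

lemma mem_logCirc_iff {e : BundleSpace p q} :
    e ∈ logCirc p q ↔ (e.1, exp e.2) ∈ circTypeI p q := by
  refine and_congr_right fun h => ?_
  have h1 : normSq (exp e.2) = Real.exp (2 * e.2.re) := by
    rw [normSq_eq_norm_sq, norm_exp, sq, ← Real.exp_add]; ring_nf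
  simp only [h1]
  constructor
  · intro h2; rw [h2, Real.exp_log (genNormI_pos h)]
  · intro h2; rw [← h2, Real.log_exp]

lemma snd_ne_zero_of_mem_circTypeI {P : BundleSpace p q} (hP : P ∈ circTypeI p q) : P.2 ≠ 0 := by
  intro h
  have h1 := hP.2
  rw [h, map_zero] at h1
  exact (genNormI_pos hP.1).ne h1

/-- The lift of a map to the logarithmic fiber coordinate, near a point whose image has fiber
coordinate `g`. -/
def logLift (F : BundleSpace p q → BundleSpace p q) (g : ℂ) (e : BundleSpace p q) :
    BundleSpace p q :=
  ((F (e.1, exp e.2)).1, log ((F (e.1, exp e.2)).2 / g) + log g)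

variable {F : BundleSpace p q → BundleSpace p q} {P₀ : BundleSpace p q}

lemma exists_logLift (hP₀ : P₀ ∈ circTypeI p q) (hd : ∀ᶠ P in 𝓝 P₀, DifferentiableAt ℂ F P)
    (hm : ∀ᶠ P in 𝓝 P₀, P ∈ circTypeI p q → F P ∈ circTypeI p q) :
    ∃ Φ e₀, IsLogMap Φ e₀ ∧ (e₀.1, exp e₀.2) = P₀ ∧
      ∀ᶠ e in 𝓝 e₀, F (e.1, exp e.2) = ((Φ e).1, exp (Φ e).2) := by
  have hξ := snd_ne_zero_of_mem_circTypeI hP₀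
  have hg := snd_ne_zero_of_mem_circTypeI (hm.self_of_nhds hP₀)
  set g := (F P₀).2 with hgdef
  have he : (P₀.1, exp (log P₀.2)) = P₀ := by rw [exp_log hξ]
  have hexp : Differentiable ℂ fun e : BundleSpace p q => ((e.1, exp e.2) : BundleSpace p q) := by
    fun_prop
  have ht : Tendsto (fun e : BundleSpace p q => ((e.1, exp e.2) : BundleSpace p q))
      (𝓝 (P₀.1, log P₀.2)) (𝓝 P₀) := by
    have := hexp.continuous.tendsto (P₀.1, log P₀.2)
    simpa only [he] using this
  have hdiv : ∀ᶠ e in 𝓝 (P₀.1, log P₀.2), (F (e.1, exp e.2)).2 / g ∈ slitPlane := by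
    have h1 : Tendsto (fun P => (F P).2 / g) (𝓝 P₀) (𝓝 1) := by
      have h2 : ContinuousAt (fun P => (F P).2 / g) P₀ :=
        (hd.self_of_nhds.snd.continuousAt).div_const g
      simpa only [ContinuousAt, ← hgdef, div_self hg] using h2
    exact ht.eventually (h1.eventually (isOpen_slitPlane.mem_nhds one_mem_slitPlane))
  have heq : ∀ᶠ e in 𝓝 (P₀.1, log P₀.2),
      F (e.1, exp e.2) = ((logLift F g e).1, exp (logLift F g e).2) := by
    filter_upwards [hdiv] with e h1
    refine Prod.ext rfl ?_
    simp only [logLift]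
    rw [exp_add, exp_log (slitPlane_ne_zero h1), exp_log hg, div_mul_cancel₀ _ hg]
  refine ⟨logLift F g, (P₀.1, log P₀.2), ⟨?_, ?_, ?_⟩, he, heq⟩
  · rw [mem_logCirc_iff, he]; exact hP₀
  · filter_upwards [ht.eventually hd, hdiv] with e h1 h2
    have h3 := h1.comp e (hexp e)
    have h4 : DifferentiableAt ℂ (fun e : BundleSpace p q => (F (e.1, exp e.2)).2 / g) e := by
      simp only [div_eq_mul_inv]
      exact h3.snd.mul_const g⁻¹
    exact h3.fst.prodMk ((h4.clog h2).add_const _)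
  · filter_upwards [ht.eventually hm, heq] with e h1 h2 h3
    rw [mem_logCirc_iff, ← h2]
    exact h1 (mem_logCirc_iff.1 h3)

lemma continuous_genNormI : Continuous (genNormI : (Fin p → Fin q → ℂ) → ℝ) := by
  unfold genNormI
  refine continuous_re.comp (Continuous.matrix_det ?_)
  refine continuous_const.sub (Continuous.matrix_mul ?_ ?_)
  · exact continuous_id
  · exact Continuous.matrix_conjTranspose continuous_id

lemma tendsto_logChart {e₁ : BundleSpace p q} :
    Tendsto (fun P : BundleSpace p q => ((P.1, log (P.2 / exp e₁.2) + e₁.2) : BundleSpace p q))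
      (𝓝 (e₁.1, exp e₁.2)) (𝓝 e₁) := by
  have h1 : ContinuousAt (fun P : BundleSpace p q => log (P.2 / exp e₁.2))
      (e₁.1, exp e₁.2) := by
    refine ContinuousAt.clog (by fun_prop) ?_
    simp [exp_ne_zero]
  have h2 : ContinuousAt (fun P : BundleSpace p q =>
      ((P.1, log (P.2 / exp e₁.2) + e₁.2) : BundleSpace p q)) (e₁.1, exp e₁.2) := by
    fun_prop
  simpa [ContinuousAt, exp_ne_zero] using h2

lemma eventually_exp_logChart {e₁ : BundleSpace p q} :
    ∀ᶠ P : BundleSpace p q in 𝓝 (e₁.1, exp e₁.2), exp (log (P.2 / exp e₁.2) + e₁.2) = P.2 := by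
  have : ∀ᶠ P : BundleSpace p q in 𝓝 (e₁.1, exp e₁.2), P.2 ≠ 0 :=
    continuousAt_snd.eventually_ne (exp_ne_zero _)
  filter_upwards [this] with P hP
  rw [exp_add, exp_log (div_ne_zero hP (exp_ne_zero _)), div_mul_cancel₀ _ (exp_ne_zero _)]

/-- A nonconstant map preserving the circle bundle has bundle form near some point of it. -/
theorem exists_bundle_form [Nontrivial (Fin p)] [Nontrivial (Fin q)]
    {U : Set (BundleSpace p q)} (hU : IsOpen U) (hUc : IsConnected U)
    (hUS : (U ∩ circTypeI p q).Nonempty) (hF : DifferentiableOn ℂ F U)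
    (hFnc : ¬ ∃ c, Set.EqOn F (fun _ => c) U)
    (hFmap : Set.MapsTo F (U ∩ circTypeI p q) (circTypeI p q)) :
    ∃ (P₁ : BundleSpace p q) (f : (Fin p → Fin q → ℂ) → (Fin p → Fin q → ℂ))
      (φ : (Fin p → Fin q → ℂ) → ℂ), P₁ ∈ U ∩ circTypeI p q ∧
      (∀ᶠ Z in 𝓝 P₁.1, DifferentiableAt ℂ f Z ∧ DifferentiableAt ℂ φ Z) ∧
      ∀ᶠ P in 𝓝 P₁, F P = (f P.1, P.2 * φ P.1) := by
  obtain ⟨P₀, hP₀U, hP₀⟩ := hUS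
  have hd : ∀ᶠ P in 𝓝 P₀, DifferentiableAt ℂ F P := by
    filter_upwards [hU.mem_nhds hP₀U] with P hP using hF.differentiableAt (hU.mem_nhds hP)
  have hm : ∀ᶠ P in 𝓝 P₀, P ∈ circTypeI p q → F P ∈ circTypeI p q := by
    filter_upwards [hU.mem_nhds hP₀U] with P hP hP' using hFmap ⟨hP, hP'⟩
  obtain ⟨Φ, e₀, hΦ, he₀, heq⟩ := exists_logLift hP₀ hd hm
  have hnc : ¬ ∀ᶠ e in 𝓝 e₀, e ∈ logCirc p q → contactFactor Φ (e, star e.1) = 0 := by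
    intro h0
    have h1 := eventually_eq_const_of_fderiv_eq_zero hΦ.diff (hΦ.fderiv_eq_zero h0)
    refine hFnc ⟨((Φ e₀).1, exp (Φ e₀).2), eqOn_const_of_eventually hU hUc.isPreconnected hF hP₀U ?_⟩
    rw [← he₀]
    filter_upwards [tendsto_logChart.eventually (heq.and h1), eventually_exp_logChart]
      with P ⟨h2, h3⟩ h4
    rw [h3] at h2
    simpa only [h4] using h2
  have hUt : ∀ᶠ e in 𝓝 e₀, (e.1, exp e.2) ∈ U := by
    have hc : Continuous fun e : BundleSpace p q => ((e.1, exp e.2) : BundleSpace p q) := by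
      fun_prop
    exact (hc.tendsto e₀).eventually (hU.mem_nhds (by rwa [he₀]))
  obtain ⟨e₁, hne, hlog, heq₁, hU₁⟩ := ((not_eventually.1 hnc).and_eventually
    (hΦ.eventually.and (heq.eventually_nhds.and hUt))).exists
  push Not at hne
  obtain ⟨hmem, hne⟩ := hne
  have hΦ₁ := hlog hmem
  have hadd := eventually_eq_add_of_fderiv_vertical hΦ₁.diff (hΦ₁.fderiv_vertical hne)
  refine ⟨(e₁.1, exp e₁.2), fun Z => (Φ (Z, e₁.2)).1, fun Z => exp ((Φ (Z, e₁.2)).2 - e₁.2),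
    ⟨hU₁, mem_logCirc_iff.1 hmem⟩, ?_, ?_⟩
  · have hc : Continuous fun Z : Fin p → Fin q → ℂ => ((Z, e₁.2) : BundleSpace p q) := by fun_prop
    filter_upwards [(hc.tendsto e₁.1).eventually hΦ₁.diff] with Z hZ
    have h1 : DifferentiableAt ℂ (fun Z : Fin p → Fin q → ℂ => Φ (Z, e₁.2)) Z :=
      hZ.comp Z (by fun_prop)
    exact ⟨h1.fst, (h1.snd.sub_const _).cexp⟩
  · filter_upwards [tendsto_logChart.eventually (heq₁.and hadd), eventually_exp_logChart]
      with P ⟨h2, h3⟩ h4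
    rw [h3] at h2
    simp only [h4] at h2
    rw [h2]
    refine Prod.ext (by simp) ?_
    conv_rhs => rw [← h4]
    simp only [Prod.snd_add]
    rw [← exp_add]
    congr 1
    ring

/-- The norm identity for the components of a map in bundle form. -/
lemma eventually_genNormI_eq_of_bundle_form {P₁ : BundleSpace p q} {U : Set (BundleSpace p q)}
    (hU : IsOpen U) (hP₁ : P₁ ∈ U ∩ circTypeI p q)
    {f : (Fin p → Fin q → ℂ) → (Fin p → Fin q → ℂ)} {φ : (Fin p → Fin q → ℂ) → ℂ}
    (hFmap : Set.MapsTo F (U ∩ circTypeI p q) (circTypeI p q))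
    (h : ∀ᶠ P in 𝓝 P₁, F P = (f P.1, P.2 * φ P.1)) :
    ∀ᶠ Z in 𝓝 P₁.1, f Z ∈ typeIDomain p q ∧ genNormI (f Z) = normSq (φ Z) * genNormI Z := by
  have hN := genNormI_pos hP₁.2.1
  let s : (Fin p → Fin q → ℂ) → BundleSpace p q :=
    fun Z => (Z, (Real.sqrt (genNormI Z / genNormI P₁.1) : ℂ) * P₁.2)
  have hs : Tendsto s (𝓝 P₁.1) (𝓝 P₁) := by
    have hc : Continuous s := by
      have := continuous_genNormI (p := p) (q := q)
      fun_prop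
    have h1 := hc.tendsto P₁.1
    have h2 : s P₁.1 = P₁ := by simp [s, div_self hN.ne']
    rwa [h2] at h1
  filter_upwards [hs.eventually (h.and (hU.mem_nhds hP₁.1)),
    isOpen_typeIDomain.mem_nhds hP₁.2.1] with Z ⟨h1, h2⟩ h3
  have hn : normSq (s Z).2 = genNormI Z := by
    have h4 : 0 ≤ genNormI Z / genNormI P₁.1 := (div_pos (genNormI_pos h3) hN).le
    simp only [s, map_mul, normSq_ofReal, Real.mul_self_sqrt h4, hP₁.2.2]
    exact div_mul_cancel₀ _ hN.ne'
  have h5 := hFmap ⟨h2, h3, hn⟩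
  rw [h1] at h5
  refine ⟨h5.1, ?_⟩
  have h6 := h5.2
  simp only [map_mul, hn] at h6
  rw [← h6, mul_comm]

end LocalForm

section Automorphisms

variable {p q : ℕ}

/-- `ψ` is an automorphism of the type I domain with inverse `ψ'`, which multiplies the generic
norm by `|φ|²` with `φ` holomorphic and zero free. -/
structure IsNormAut (ψ ψ' : (Fin p → Fin q → ℂ) → (Fin p → Fin q → ℂ))
    (φ : (Fin p → Fin q → ℂ) → ℂ) : Prop where
  diff : DifferentiableOn ℂ ψ (typeIDomain p q)
  maps : Set.MapsTo ψ (typeIDomain p q) (typeIDomain p q)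
  diff_inv : DifferentiableOn ℂ ψ' (typeIDomain p q)
  maps_inv : Set.MapsTo ψ' (typeIDomain p q) (typeIDomain p q)
  left_inv : Set.LeftInvOn ψ' ψ (typeIDomain p q)
  right_inv : Set.RightInvOn ψ' ψ (typeIDomain p q)
  diff_factor : DifferentiableOn ℂ φ (typeIDomain p q)
  factor_ne_zero : ∀ Z ∈ typeIDomain p q, φ Z ≠ 0
  norm_eq : ∀ Z ∈ typeIDomain p q, genNormI (ψ Z) = normSq (φ Z) * genNormI Z

namespace IsNormAut

variable {ψ ψ' ψ₁ ψ₁' ψ₂ ψ₂' : (Fin p → Fin q → ℂ) → (Fin p → Fin q → ℂ)}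
  {φ φ₁ φ₂ : (Fin p → Fin q → ℂ) → ℂ}

lemma comp (h₁ : IsNormAut ψ₁ ψ₁' φ₁) (h₂ : IsNormAut ψ₂ ψ₂' φ₂) :
    IsNormAut (ψ₁ ∘ ψ₂) (ψ₂' ∘ ψ₁') (fun Z => φ₁ (ψ₂ Z) * φ₂ Z) where
  diff := h₁.diff.comp h₂.diff h₂.maps
  maps := h₁.maps.comp h₂.maps
  diff_inv := h₂.diff_inv.comp h₁.diff_inv h₁.maps_inv
  maps_inv := h₂.maps_inv.comp h₁.maps_inv
  left_inv := h₂.left_inv.comp h₁.left_inv h₂.maps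
  right_inv := h₂.right_inv.comp h₁.right_inv h₁.maps_inv
  diff_factor := (h₁.diff_factor.comp h₂.diff h₂.maps).mul h₂.diff_factor
  factor_ne_zero Z hZ := mul_ne_zero (h₁.factor_ne_zero _ (h₂.maps hZ)) (h₂.factor_ne_zero Z hZ)
  norm_eq Z hZ := by
    rw [Function.comp_apply, h₁.norm_eq _ (h₂.maps hZ), h₂.norm_eq Z hZ, map_mul, mul_assoc]

lemma symm (h : IsNormAut ψ ψ' φ) : IsNormAut ψ' ψ (fun Z => (φ (ψ' Z))⁻¹) where
  diff := h.diff_inv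
  maps := h.maps_inv
  diff_inv := h.diff
  maps_inv := h.maps
  left_inv := h.right_inv
  right_inv := h.left_inv
  diff_factor := (h.diff_factor.comp h.diff_inv h.maps_inv).inv
    fun Z hZ => h.factor_ne_zero _ (h.maps_inv hZ)
  factor_ne_zero Z hZ := inv_ne_zero (h.factor_ne_zero _ (h.maps_inv hZ))
  norm_eq Z hZ := by
    have h1 := h.norm_eq _ (h.maps_inv hZ)
    rw [h.right_inv hZ] at h1
    rw [h1, map_inv₀, inv_mul_cancel_left₀]
    exact (map_ne_zero normSq).2 (h.factor_ne_zero _ (h.maps_inv hZ))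

lemma biholo (h : IsNormAut ψ ψ' φ) : Biholo ψ (typeIDomain p q) (typeIDomain p q) :=
  ⟨h.diff, h.maps, ψ', h.diff_inv, h.maps_inv, h.left_inv, h.right_inv⟩

lemma differentiableOn_disc (h : IsNormAut ψ ψ' φ) :
    DifferentiableOn ℂ (fun P : BundleSpace p q => ((ψ P.1, P.2 * φ P.1) : BundleSpace p q))
      (discTypeI p q) := by
  have h1 : Set.MapsTo Prod.fst (discTypeI p q) (typeIDomain p q) := fun P hP => hP.1
  have h2 : DifferentiableOn ℂ (Prod.fst : BundleSpace p q → _) (discTypeI p q) :=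
    differentiableOn_fst
  exact (h.diff.comp h2 h1).prodMk (differentiableOn_snd.mul (h.diff_factor.comp h2 h1))

lemma mapsTo_disc (h : IsNormAut ψ ψ' φ) :
    Set.MapsTo (fun P : BundleSpace p q => ((ψ P.1, P.2 * φ P.1) : BundleSpace p q))
      (discTypeI p q) (discTypeI p q) := by
  rintro P ⟨hP, hlt⟩
  refine ⟨h.maps hP, ?_⟩
  simp only [map_mul, h.norm_eq _ hP]
  rw [mul_comm]
  exact mul_lt_mul_of_pos_left hlt (normSq_pos.2 (h.factor_ne_zero _ hP))

lemma biholo_disc (h : IsNormAut ψ ψ' φ) :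
    Biholo (fun P : BundleSpace p q => ((ψ P.1, P.2 * φ P.1) : BundleSpace p q))
      (discTypeI p q) (discTypeI p q) := by
  refine ⟨h.differentiableOn_disc, h.mapsTo_disc, _, h.symm.differentiableOn_disc,
    h.symm.mapsTo_disc, fun P hP => ?_, fun P hP => ?_⟩
  · refine Prod.ext (h.left_inv hP.1) ?_
    simp only [h.left_inv hP.1]
    exact mul_inv_cancel_right₀ (h.factor_ne_zero _ hP.1) _
  · refine Prod.ext (h.right_inv hP.1) ?_
    exact inv_mul_cancel_right₀ (h.factor_ne_zero _ (h.maps_inv hP.1)) _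

end IsNormAut

/-- The block matrix with blocks `a, b, c, d` preserves the Hermitian form of signature `(p, q)`. -/
structure IsPseudoUnitary (a : Matrix (Fin p) (Fin p) ℂ) (b : Matrix (Fin p) (Fin q) ℂ)
    (c : Matrix (Fin q) (Fin p) ℂ) (d : Matrix (Fin q) (Fin q) ℂ) : Prop where
  left : aᴴ * a - cᴴ * c = 1
  mid : aᴴ * b = cᴴ * d
  right : dᴴ * d - bᴴ * b = 1

/-- The linear fractional action of a block matrix on `p × q` matrices. -/
def linFrac (a : Matrix (Fin p) (Fin p) ℂ) (b : Matrix (Fin p) (Fin q) ℂ)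
    (c : Matrix (Fin q) (Fin p) ℂ) (d : Matrix (Fin q) (Fin q) ℂ) (Z : Fin p → Fin q → ℂ) :
    Fin p → Fin q → ℂ :=
  of.symm ((a * of Z + b) * (c * of Z + d)⁻¹)

lemma mem_typeIDomain_iff {Z : Fin p → Fin q → ℂ} :
    Z ∈ typeIDomain p q ↔ (1 - (of Z)ᴴ * of Z).PosDef :=
  posDef_one_sub_mul_conjTranspose_iff

lemma genNormI_eq_right (Z : Fin p → Fin q → ℂ) :
    genNormI Z = ((1 - (of Z)ᴴ * of Z).det).re := by
  rw [genNormI, det_one_sub_mul_comm]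

namespace IsPseudoUnitary

variable {a : Matrix (Fin p) (Fin p) ℂ} {b : Matrix (Fin p) (Fin q) ℂ}
  {c : Matrix (Fin q) (Fin p) ℂ} {d : Matrix (Fin q) (Fin q) ℂ}

lemma mid' (h : IsPseudoUnitary a b c d) : bᴴ * a = dᴴ * c := by
  have := congrArg conjTranspose h.mid
  simpa using this

lemma symm (h : IsPseudoUnitary a b c d) : IsPseudoUnitary aᴴ (-cᴴ) (-bᴴ) dᴴ := by
  have h1 : fromBlocks aᴴ (-cᴴ) (-bᴴ) dᴴ * fromBlocks a b c d = 1 := by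
    rw [fromBlocks_multiply, ← fromBlocks_one]
    congr 1
    · rw [← h.left]; simp [sub_eq_add_neg]
    · rw [h.mid]; simp
    · rw [Matrix.neg_mul, h.mid']; simp
    · rw [← h.right]; simp [sub_eq_neg_add]
  rw [mul_eq_one_comm, fromBlocks_multiply, ← fromBlocks_one, fromBlocks_inj] at h1
  obtain ⟨h2, h3, -, h5⟩ := h1
  refine ⟨?_, ?_, ?_⟩
  · simpa [sub_eq_add_neg] using h2
  · rw [Matrix.mul_neg, neg_add_eq_zero] at h3
    simpa using h3
  · simpa [sub_eq_neg_add] using h5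

lemma form_eq (h : IsPseudoUnitary a b c d) (Z : Matrix (Fin p) (Fin q) ℂ) :
    (c * Z + d)ᴴ * (c * Z + d) - (a * Z + b)ᴴ * (a * Z + b) = 1 - Zᴴ * Z := by
  have e : (c * Z + d)ᴴ * (c * Z + d) - (a * Z + b)ᴴ * (a * Z + b) =
      Zᴴ * (cᴴ * d - aᴴ * b) + (dᴴ * c - bᴴ * a) * Z + (dᴴ * d - bᴴ * b)
        - Zᴴ * (aᴴ * a - cᴴ * c) * Z := by
    simp only [conjTranspose_add, conjTranspose_mul, Matrix.mul_add, Matrix.add_mul,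
      Matrix.mul_sub, Matrix.sub_mul, Matrix.mul_assoc]
    abel
  rw [e, h.left, h.mid, h.mid', h.right]
  simp

lemma isUnit_det (h : IsPseudoUnitary a b c d) {Z : Fin p → Fin q → ℂ}
    (hZ : Z ∈ typeIDomain p q) : IsUnit (c * of Z + d).det := by
  have h1 : ((c * of Z + d)ᴴ * (c * of Z + d)).PosDef := by
    have h2 := h.form_eq (of Z)
    rw [sub_eq_iff_eq_add] at h2
    rw [h2]
    exact (mem_typeIDomain_iff.1 hZ).add_posSemidef (posSemidef_conjTranspose_mul_self _)
  have h3 := h1.det_pos.ne'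
  rw [det_mul] at h3
  exact isUnit_iff_ne_zero.2 (right_ne_zero_of_mul h3)

lemma one_sub_linFrac (h : IsPseudoUnitary a b c d) {Z : Fin p → Fin q → ℂ}
    (hZ : Z ∈ typeIDomain p q) :
    1 - (of (linFrac a b c d Z))ᴴ * of (linFrac a b c d Z) =
      ((c * of Z + d)⁻¹)ᴴ * (1 - (of Z)ᴴ * of Z) * (c * of Z + d)⁻¹ := by
  have hu := h.isUnit_det hZ
  rw [← h.form_eq (of Z)]
  have e : of (linFrac a b c d Z) = (a * of Z + b) * (c * of Z + d)⁻¹ := rfl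
  rw [e]
  have h1 : ((c * of Z + d)⁻¹)ᴴ * (c * of Z + d)ᴴ = 1 := by
    rw [← conjTranspose_mul, mul_nonsing_inv _ hu, conjTranspose_one]
  rw [Matrix.mul_sub, Matrix.sub_mul, ← Matrix.mul_assoc _ (c * of Z + d)ᴴ, h1, Matrix.one_mul,
    mul_nonsing_inv _ hu, conjTranspose_mul]
  simp only [Matrix.mul_assoc]

lemma mapsTo_linFrac (h : IsPseudoUnitary a b c d) :
    Set.MapsTo (linFrac a b c d) (typeIDomain p q) (typeIDomain p q) := by
  intro Z hZ
  rw [mem_typeIDomain_iff, h.one_sub_linFrac hZ]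
  have hu : IsUnit (c * of Z + d)⁻¹ :=
    (isUnit_iff_isUnit_det _).2 (isUnit_nonsing_inv_det _ (h.isUnit_det hZ))
  exact (IsUnit.posDef_star_left_conjugate_iff hu).2 (mem_typeIDomain_iff.1 hZ)

lemma genNormI_linFrac (h : IsPseudoUnitary a b c d) {Z : Fin p → Fin q → ℂ}
    (hZ : Z ∈ typeIDomain p q) :
    genNormI (linFrac a b c d Z) = normSq (c * of Z + d).det⁻¹ * genNormI Z := by
  rw [genNormI_eq_right, h.one_sub_linFrac hZ, det_mul, det_mul, det_conjTranspose, mul_right_comm,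
    det_nonsing_inv, Ring.inverse_eq_inv', star_def, ← normSq_eq_conj_mul_self, re_ofReal_mul,
    ← genNormI_eq_right]

lemma linFrac_linFrac (h : IsPseudoUnitary a b c d) {Z : Fin p → Fin q → ℂ}
    (hZ : Z ∈ typeIDomain p q) :
    linFrac aᴴ (-cᴴ) (-bᴴ) dᴴ (linFrac a b c d Z) = Z := by
  have hu := h.isUnit_det hZ
  set Y := c * of Z + d with hY
  set X := a * of Z + b with hX
  have e : of (linFrac a b c d Z) = X * Y⁻¹ := rfl
  have h1 : aᴴ * (X * Y⁻¹) + -cᴴ = of Z * Y⁻¹ := by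
    have h2 : aᴴ * X - cᴴ * Y = of Z := by
      have : aᴴ * X - cᴴ * Y = (aᴴ * a - cᴴ * c) * of Z + (aᴴ * b - cᴴ * d) := by
        simp only [hX, hY, Matrix.mul_add, Matrix.sub_mul, Matrix.mul_assoc]; abel
      rw [this, h.left, h.mid]; simp
    calc aᴴ * (X * Y⁻¹) + -cᴴ = (aᴴ * X - cᴴ * Y) * Y⁻¹ := by
          rw [Matrix.sub_mul, Matrix.mul_assoc cᴴ, mul_nonsing_inv _ hu, Matrix.mul_assoc,
            Matrix.mul_one, sub_eq_add_neg]
      _ = of Z * Y⁻¹ := by rw [h2]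
  have h3 : -bᴴ * (X * Y⁻¹) + dᴴ = Y⁻¹ := by
    have h2 : dᴴ * Y - bᴴ * X = 1 := by
      have : dᴴ * Y - bᴴ * X = (dᴴ * c - bᴴ * a) * of Z + (dᴴ * d - bᴴ * b) := by
        simp only [hX, hY, Matrix.mul_add, Matrix.sub_mul, Matrix.mul_assoc]; abel
      rw [this, h.right, h.mid']; simp
    calc -bᴴ * (X * Y⁻¹) + dᴴ = (dᴴ * Y - bᴴ * X) * Y⁻¹ := by
          rw [Matrix.sub_mul, Matrix.mul_assoc dᴴ, mul_nonsing_inv _ hu, Matrix.mul_assoc bᴴ,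
            Matrix.mul_one, Matrix.neg_mul, neg_add_eq_sub]
      _ = Y⁻¹ := by rw [h2, Matrix.one_mul]
  have hdY : IsUnit (Y⁻¹).det := isUnit_nonsing_inv_det _ hu
  rw [linFrac, e, h1, h3, Matrix.mul_assoc, mul_nonsing_inv _ hdY, Matrix.mul_one]
  rfl

lemma differentiableAt_linFrac (h : IsPseudoUnitary a b c d) {Z : Fin p → Fin q → ℂ}
    (hZ : Z ∈ typeIDomain p q) : DifferentiableAt ℂ (linFrac a b c d) Z := by
  have h1 : ∀ i j, DifferentiableAt ℂ (fun Y : Fin p → Fin q → ℂ => (c * of Y + d)⁻¹ i j) Z := by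
    refine differentiableAt_inv_apply (fun i j => ?_) (h.isUnit_det hZ).ne_zero
    simp only [Matrix.add_apply, Matrix.mul_apply, of_apply]
    fun_prop
  have h2 : ∀ i j, DifferentiableAt ℂ (fun Y : Fin p → Fin q → ℂ => (a * of Y + b) i j) Z := by
    intro i j
    simp only [Matrix.add_apply, Matrix.mul_apply, of_apply]
    fun_prop
  have h3 : ∀ (Y : Fin p → Fin q → ℂ) i j, linFrac a b c d Y i j =
      ∑ k, (a * of Y + b) i k * (c * of Y + d)⁻¹ k j := by
    intro Y i j
    rw [← Matrix.mul_apply]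
    rfl
  refine differentiableAt_pi.2 fun i => differentiableAt_pi.2 fun j => ?_
  simp only [h3]
  exact DifferentiableAt.fun_sum fun k _ => (h2 i k).fun_mul (h1 k j)

lemma isNormAut (h : IsPseudoUnitary a b c d) :
    IsNormAut (linFrac a b c d) (linFrac aᴴ (-cᴴ) (-bᴴ) dᴴ)
      (fun Z => (c * of Z + d).det⁻¹) where
  diff Z hZ := (h.differentiableAt_linFrac hZ).differentiableWithinAt
  maps := h.mapsTo_linFrac
  diff_inv Z hZ := (h.symm.differentiableAt_linFrac hZ).differentiableWithinAt
  maps_inv := h.symm.mapsTo_linFrac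
  left_inv Z hZ := h.linFrac_linFrac hZ
  right_inv Z hZ := by simpa using h.symm.linFrac_linFrac hZ
  diff_factor Z hZ := by
    have h1 : DifferentiableAt ℂ (fun Y : Fin p → Fin q → ℂ => (c * of Y + d).det) Z :=
      differentiableAt_det fun i j => by
        simp only [Matrix.add_apply, Matrix.mul_apply, of_apply]
        fun_prop
    exact (h1.inv (h.isUnit_det hZ).ne_zero).differentiableWithinAt
  factor_ne_zero Z hZ := inv_ne_zero (h.isUnit_det hZ).ne_zero
  norm_eq Z hZ := h.genNormI_linFrac hZ

end IsPseudoUnitary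

/-- Every point of the type I domain can be moved to the origin. -/
lemma exists_isNormAut_apply_eq_zero {A : Fin p → Fin q → ℂ} (hA : A ∈ typeIDomain p q) :
    ∃ ψ ψ' φ, IsNormAut (p := p) (q := q) ψ ψ' φ ∧ ψ A = 0 := by
  obtain ⟨a, ha⟩ := PosDef.exists_mul_mul_conjTranspose_eq_one hA
  obtain ⟨d, hd⟩ := (mem_typeIDomain_iff.1 hA).exists_mul_mul_conjTranspose_eq_one
  have h : IsPseudoUnitary aᴴ (-(-(d * (of A)ᴴ))ᴴ) (-(-(a * of A))ᴴ) dᴴ := by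
    refine ⟨?_, ?_, ?_⟩
    · rw [← ha]
      simp [Matrix.mul_sub, Matrix.sub_mul, Matrix.mul_assoc]
    · simp [Matrix.mul_assoc]
    · rw [← hd]
      simp [Matrix.mul_sub, Matrix.sub_mul, Matrix.mul_assoc]
  refine ⟨_, _, _, h.symm.isNormAut, ?_⟩
  simp [linFrac]

end Automorphisms

section OriginRigidity

variable {p q : ℕ} {f : (Fin p → Fin q → ℂ) → (Fin p → Fin q → ℂ)} {φ : (Fin p → Fin q → ℂ) → ℂ}

lemma polNorm_zero_left (W : Fin p → Fin q → ℂ) : polNorm 0 W = 1 := by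
  simp [polNorm]

lemma polNorm_zero_right (Z : Fin p → Fin q → ℂ) : polNorm Z 0 = 1 := by
  rw [polNorm_comm, polNorm_zero_left]

lemma logSlope_zero_left (W : Fin p → Fin q → ℂ) : logSlope 0 W = (of W)ᵀ := by
  simp [logSlope]

lemma zero_mem_typeIDomain : (0 : Fin p → Fin q → ℂ) ∈ typeIDomain p q := by
  have : (1 - of (0 : Fin p → Fin q → ℂ) * (of (0 : Fin p → Fin q → ℂ))ᴴ) =
      (1 : Matrix (Fin p) (Fin p) ℂ) := by simp
  rw [typeIDomain, Set.mem_ofPred_eq, this]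
  exact PosDef.one

lemma zero_mem_logCirc : (0 : BundleSpace p q) ∈ logCirc p q := by
  refine ⟨zero_mem_typeIDomain, ?_⟩
  simp [genNormI]

lemma differentiableAt_star_comp_star {E F : Type*} [NormedAddCommGroup E] [NormedSpace ℂ E]
    [StarAddMonoid E] [NormedStarGroup E] [StarModule ℂ E] [NormedAddCommGroup F] [NormedSpace ℂ F]
    [StarAddMonoid F] [NormedStarGroup F] [StarModule ℂ F] {g : E → F} {x : E}
    (h : DifferentiableAt ℂ g (star x)) : DifferentiableAt ℂ (fun y => star (g (star y))) x := by
  have := h.star_star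
  rwa [star_star] at this

/-- The norm identity, polarized. -/
lemma eventually_polNorm_eq (hd : ∀ᶠ Z in 𝓝 0, DifferentiableAt ℂ f Z ∧ DifferentiableAt ℂ φ Z)
    (hN : ∀ᶠ Z in 𝓝 0, f Z ∈ typeIDomain p q ∧ genNormI (f Z) = normSq (φ Z) * genNormI Z) :
    ∀ᶠ x : (Fin p → Fin q → ℂ) × (Fin p → Fin q → ℂ) in 𝓝 (0, 0),
      polNorm (f x.1) (star (f (star x.2))) = φ x.1 * star (φ (star x.2)) * polNorm x.1 x.2 := by
  have hz : ((0 : BundleSpace p q), star (0 : BundleSpace p q).1) =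
      ((0 : BundleSpace p q), (0 : Fin p → Fin q → ℂ)) := by simp
  have h := eventually_eq_zero_of_logCirc zero_mem_logCirc (K := fun x =>
    polNorm (f x.1.1) (star (f (star x.2))) -
      φ x.1.1 * star (φ (star x.2)) * polNorm x.1.1 x.2) ?_ ?_
  · rw [hz] at h
    have hc : Continuous fun x : (Fin p → Fin q → ℂ) × (Fin p → Fin q → ℂ) =>
        (((x.1, 0), x.2) : BundleSpace p q × (Fin p → Fin q → ℂ)) := by fun_prop
    filter_upwards [(hc.tendsto (0, 0)).eventually h] with x hx
    exact sub_eq_zero.1 hx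
  · rw [hz]
    have h1 : Tendsto (fun x : BundleSpace p q × (Fin p → Fin q → ℂ) => x.1.1) (𝓝 (0, 0)) (𝓝 0) :=
      (show Continuous fun x : BundleSpace p q × (Fin p → Fin q → ℂ) => x.1.1 by
        fun_prop).tendsto (0, 0)
    have h2 : Tendsto (fun x : BundleSpace p q × (Fin p → Fin q → ℂ) => star x.2) (𝓝 (0, 0))
        (𝓝 0) := by
      have := (show Continuous fun x : BundleSpace p q × (Fin p → Fin q → ℂ) => star x.2 by
        fun_prop).tendsto (0, 0)
      simpa using this
    filter_upwards [h1.eventually hd, h2.eventually hd] with x ⟨h3, h4⟩ ⟨h5, h6⟩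
    have hx1 : DifferentiableAt ℂ
        (fun y : BundleSpace p q × (Fin p → Fin q → ℂ) => y.1.1) x := by fun_prop
    have h3' : DifferentiableAt ℂ
        (fun y : BundleSpace p q × (Fin p → Fin q → ℂ) => f y.1.1) x := h3.comp x hx1
    have h4' : DifferentiableAt ℂ
        (fun y : BundleSpace p q × (Fin p → Fin q → ℂ) => φ y.1.1) x := h4.comp x hx1
    have h5' : DifferentiableAt ℂ (fun y : BundleSpace p q × (Fin p → Fin q → ℂ) =>
        star (f (star y.2))) x := (differentiableAt_star_comp_star h5).comp x differentiableAt_snd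
    have h6' : DifferentiableAt ℂ (fun y : BundleSpace p q × (Fin p → Fin q → ℂ) =>
        star (φ (star y.2))) x := (differentiableAt_star_comp_star h6).comp x differentiableAt_snd
    exact (differentiableAt_polNorm h3' h5').sub
      ((h4'.mul h6').mul (differentiableAt_polNorm hx1 differentiableAt_snd))
  · have h1 : Tendsto (fun e : BundleSpace p q => e.1) (𝓝 0) (𝓝 0) :=
      continuous_fst.tendsto (0 : BundleSpace p q)
    filter_upwards [h1.eventually hN] with e ⟨h2, h3⟩ he
    rw [sub_eq_zero, star_star, polNorm_star_eq_genNormI h2, polNorm_star_eq_genNormI he.1, h3,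
      star_def, mul_conj]
    push_cast
    rfl

lemma eventually_factor_eq (h0 : f 0 = 0)
    (h : ∀ᶠ x : (Fin p → Fin q → ℂ) × (Fin p → Fin q → ℂ) in 𝓝 (0, 0),
      polNorm (f x.1) (star (f (star x.2))) = φ x.1 * star (φ (star x.2)) * polNorm x.1 x.2) :
    normSq (φ 0) = 1 ∧ ∀ᶠ Z in 𝓝 0, φ Z = φ 0 := by
  have hc : Continuous fun Z : Fin p → Fin q → ℂ => (Z, (0 : Fin p → Fin q → ℂ)) := by fun_prop
  have h1 : ∀ᶠ Z in 𝓝 0, 1 = φ Z * star (φ 0) := by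
    filter_upwards [(hc.tendsto 0).eventually h] with Z hZ
    simpa [h0, polNorm_zero_right] using hZ
  have h2 := h1.self_of_nhds
  refine ⟨?_, ?_⟩
  · rw [star_def, mul_conj] at h2
    exact_mod_cast h2.symm
  · filter_upwards [h1] with Z hZ
    exact mul_right_cancel₀ (right_ne_zero_of_mul (h2 ▸ one_ne_zero)) (hZ.symm.trans h2)

lemma trPair_transpose_comm (v w : Fin p → Fin q → ℂ) :
    trPair v (of w)ᵀ = trPair w (of v)ᵀ := by
  simp [trPair_eq_sum, mul_comm]

/-- A map preserving the polarized norm near the origin preserves the trace pairing with its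
differential. -/
lemma eventually_trPair_fderiv (h0 : f 0 = 0) (hd : DifferentiableAt ℂ f 0)
    (h : ∀ᶠ x : (Fin p → Fin q → ℂ) × (Fin p → Fin q → ℂ) in 𝓝 (0, 0),
      polNorm (f x.1) (star (f (star x.2))) = polNorm x.1 x.2) :
    ∀ᶠ Z in 𝓝 0, ∀ w, trPair (f Z) (of (star (fderiv ℂ f 0 w)))ᵀ = trPair Z (of (star w))ᵀ := by
  filter_upwards [h.curry_nhds] with Z hZ w
  have hl : HasDerivAt (fun t : ℂ => t • star w) (star w) 0 := by
    simpa using (hasDerivAt_id (0 : ℂ)).smul_const (star w)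
  have hl0 : (0 : ℂ) • star w = 0 := zero_smul _ _
  have hf : HasDerivAt (fun t : ℂ => star (f (star (t • star w)))) (star (fderiv ℂ f 0 w)) 0 := by
    have h1 := hd.hasFDerivAt.star_star
    have h2 : star (0 : Fin p → Fin q → ℂ) = (0 : ℂ) • star w := by simp
    rw [h2] at h1
    refine (h1.comp_hasDerivAt (0 : ℂ) hl).congr_deriv ?_
    simp
  have hf0 : star (f (star ((0 : ℂ) • star w))) = 0 := by simp [h0]
  have hD1 := hasDerivAt_log_polNorm (W := f Z) hf
    (by rw [hf0, polNorm_zero_left]; exact one_mem_slitPlane)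
  have hD2 := hasDerivAt_log_polNorm (W := Z) hl
    (by rw [hl0, polNorm_zero_left]; exact one_mem_slitPlane)
  have hev : (fun t : ℂ => log (polNorm (star (f (star (t • star w)))) (f Z))) =ᶠ[𝓝 0]
      fun t => log (polNorm (t • star w) Z) := by
    have hc : Tendsto (fun t : ℂ => t • star w) (𝓝 0) (𝓝 0) := by
      simpa using hl.continuousAt.tendsto
    filter_upwards [hc.eventually hZ] with t ht
    rw [polNorm_comm, ht, polNorm_comm]
  have := hD1.unique (hD2.congr_of_eventuallyEq hev)
  rw [hf0, hl0, logSlope_zero_left, logSlope_zero_left, neg_inj] at this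
  rw [trPair_transpose_comm, this, trPair_transpose_comm]

lemma eq_zero_of_forall_trPair_star {v : Fin p → Fin q → ℂ}
    (h : ∀ w : Fin p → Fin q → ℂ, trPair v (of (star w))ᵀ = 0) : v = 0 := by
  refine eq_zero_of_trPair_eq_zero fun S => ?_
  have := h (star (of.symm Sᵀ))
  rwa [star_star] at this

lemma exists_linearEquiv_eventually_eq (h0 : f 0 = 0) (hd : DifferentiableAt ℂ f 0)
    (h : ∀ᶠ x : (Fin p → Fin q → ℂ) × (Fin p → Fin q → ℂ) in 𝓝 (0, 0),
      polNorm (f x.1) (star (f (star x.2))) = polNorm x.1 x.2) :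
    ∃ T : (Fin p → Fin q → ℂ) ≃ₗ[ℂ] (Fin p → Fin q → ℂ), ∀ᶠ Z in 𝓝 0, f Z = T Z := by
  have hpair := eventually_trPair_fderiv h0 hd h
  set T := fderiv ℂ f 0 with hT
  have hiso : ∀ v w, trPair (T v) (of (star (T w)))ᵀ = trPair v (of (star w))ᵀ := by
    intro v w
    let l : Matrix (Fin q) (Fin p) ℂ → (Fin p → Fin q → ℂ) →L[ℂ] ℂ :=
      fun S => LinearMap.toContinuousLinearMap (trPair.flip S)
    have h1 : HasFDerivAt (fun Z => l (of (star (T w)))ᵀ (f Z)) ((l (of (star (T w)))ᵀ).comp T) 0 :=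
      (l (of (star (T w)))ᵀ).hasFDerivAt.comp 0 hd.hasFDerivAt
    have h2 : (fun Z => l (of (star (T w)))ᵀ (f Z)) =ᶠ[𝓝 0] l (of (star w))ᵀ :=
      hpair.mono fun Z hZ => hZ w
    exact congrArg (fun L => L v)
      (h1.unique ((l (of (star w))ᵀ).hasFDerivAt.congr_of_eventuallyEq h2))
  have hinj : Function.Injective (T : (Fin p → Fin q → ℂ) →ₗ[ℂ] (Fin p → Fin q → ℂ)) := by
    refine (injective_iff_map_eq_zero _).2 fun v hv => ?_
    refine eq_zero_of_forall_trPair_star fun w => ?_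
    rw [← hiso]
    simp only [ContinuousLinearMap.coe_coe] at hv
    rw [hv, map_zero, LinearMap.zero_apply]
  let e := LinearEquiv.ofInjectiveEndo _ hinj
  refine ⟨e, hpair.mono fun Z hZ => ?_⟩
  have hZ' : f Z - T Z = 0 := by
    refine eq_zero_of_forall_trPair_star fun w => ?_
    have hw : T (e.symm w) = w := e.apply_symm_apply w
    rw [← hw, map_sub, LinearMap.sub_apply, hZ, hiso, sub_self]
  exact sub_eq_zero.1 hZ'

lemma polNorm_apply_apply {T : (Fin p → Fin q → ℂ) ≃ₗ[ℂ] (Fin p → Fin q → ℂ)}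
    (h : ∀ᶠ x : (Fin p → Fin q → ℂ) × (Fin p → Fin q → ℂ) in 𝓝 (0, 0),
      polNorm (T x.1) (star (T (star x.2))) = polNorm x.1 x.2) (Z W : Fin p → Fin q → ℂ) :
    polNorm (T Z) (star (T (star W))) = polNorm Z W := by
  have hT : Differentiable ℂ T := T.toContinuousLinearEquiv.differentiable
  have hd : Differentiable ℂ fun x : (Fin p → Fin q → ℂ) × (Fin p → Fin q → ℂ) =>
      polNorm (T x.1) (star (T (star x.2))) - polNorm x.1 x.2 := fun x =>
    (differentiableAt_polNorm ((hT _).comp x differentiableAt_fst)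
      ((differentiableAt_star_comp_star (hT _)).comp x differentiableAt_snd)).sub
      (differentiableAt_polNorm differentiableAt_fst differentiableAt_snd)
  have := eqOn_const_of_eventually isOpen_univ isPreconnected_univ hd.differentiableOn
    (Set.mem_univ (0, 0)) (c := 0) (h.mono fun x hx => sub_eq_zero.2 hx) (Set.mem_univ (Z, W))
  exact sub_eq_zero.1 this

lemma polNorm_smul_star (t : ℂ) (Z : Fin p → Fin q → ℂ) :
    polNorm (t • Z) (star Z) = (1 - t • (of Z * (of Z)ᴴ)).det := by
  rw [← Matrix.smul_mul]
  rfl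

/-- Membership in the type I domain in terms of the polarized norm. -/
lemma mem_typeIDomain_iff_polNorm_ne_zero {Z : Fin p → Fin q → ℂ} :
    Z ∈ typeIDomain p q ↔ ∀ t ∈ Set.Icc (0 : ℝ) 1, polNorm ((t : ℂ) • Z) (star Z) ≠ 0 := by
  constructor
  · rintro hZ t ⟨ht0, ht1⟩
    rw [polNorm_smul_star]
    have h1 : (1 - (t : ℂ) • (of Z * (of Z)ᴴ)) =
        ((1 - t : ℝ) : ℂ) • (1 : Matrix (Fin p) (Fin p) ℂ) + (t : ℂ) • (1 - of Z * (of Z)ᴴ) := by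
      push_cast
      module
    have h2 : (1 - (t : ℂ) • (of Z * (of Z)ᴴ)).PosDef := by
      rcases ht0.eq_or_lt with rfl | ht
      · simpa using PosDef.one
      · rw [h1, add_comm]
        refine PosDef.add_posSemidef (PosDef.smul hZ ?_) (PosSemidef.one.smul ?_)
        · exact_mod_cast ht
        · exact_mod_cast sub_nonneg.2 ht1
    exact h2.det_pos.ne'
  · intro h
    rw [typeIDomain, Set.mem_ofPred_eq, (isHermitian_one_sub Z).posDef_iff_eigenvalues_pos]
    intro i
    by_contra! hi
    set μ := (isHermitian_one_sub Z).eigenvalues i with hμ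
    have hv := (isHermitian_one_sub Z).mulVec_eigenvectorBasis i
    set x := ((isHermitian_one_sub Z).eigenvectorBasis i).ofLp with hx
    have hx0 : x ≠ 0 := by
      intro h0
      have := (isHermitian_one_sub Z).eigenvectorBasis.orthonormal.ne_zero i
      exact this (by ext j; exact congrFun h0 j)
    have hμ1 : 0 < 1 - μ := by linarith
    refine h (1 - μ)⁻¹ ⟨by positivity, inv_le_one_of_one_le₀ (by linarith)⟩ ?_
    rw [polNorm_smul_star]
    refine exists_mulVec_eq_zero_iff.1 ⟨x, hx0, ?_⟩
    have h3 : (of Z * (of Z)ᴴ) *ᵥ x = ((1 - μ : ℝ) : ℂ) • x := by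
      rw [sub_mulVec, one_mulVec, ← hμ] at hv
      have h4 : (of Z * (of Z)ᴴ) *ᵥ x = x - μ • x := by rw [← hv]; abel
      rw [h4]
      ext j
      simp [sub_mul]
    rw [sub_mulVec, one_mulVec, smul_mulVec, h3, smul_smul, ← ofReal_mul,
      inv_mul_cancel₀ hμ1.ne', ofReal_one, one_smul, sub_self]

lemma mapsTo_typeIDomain_of_polNorm {T : (Fin p → Fin q → ℂ) ≃ₗ[ℂ] (Fin p → Fin q → ℂ)}
    (h : ∀ Z W, polNorm (T Z) (star (T (star W))) = polNorm Z W) :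
    Set.MapsTo T (typeIDomain p q) (typeIDomain p q) := by
  intro Z hZ
  rw [mem_typeIDomain_iff_polNorm_ne_zero] at hZ ⊢
  intro t ht
  have h1 := h ((t : ℂ) • Z) (star Z)
  rw [map_smul, star_star] at h1
  rw [h1]
  exact hZ t ht

lemma isNormAut_of_polNorm {T : (Fin p → Fin q → ℂ) ≃ₗ[ℂ] (Fin p → Fin q → ℂ)}
    (h : ∀ Z W, polNorm (T Z) (star (T (star W))) = polNorm Z W) {κ : ℂ} (hκ : normSq κ = 1) :
    IsNormAut T T.symm (fun _ => κ) where
  diff := T.toContinuousLinearEquiv.differentiable.differentiableOn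
  maps := mapsTo_typeIDomain_of_polNorm h
  diff_inv := T.symm.toContinuousLinearEquiv.differentiable.differentiableOn
  maps_inv := mapsTo_typeIDomain_of_polNorm fun Z W => by
    have := h (T.symm Z) (star (T.symm (star W)))
    simpa using this.symm
  left_inv Z _ := T.symm_apply_apply Z
  right_inv Z _ := T.apply_symm_apply Z
  diff_factor := differentiableOn_const κ
  factor_ne_zero _ _ := by
    rintro rfl
    simp at hκ
  norm_eq Z _ := by
    have := h Z (star Z)
    rw [star_star] at this
    rw [hκ, one_mul]
    exact congrArg re this

/-- A germ at the origin which fixes it and preserves the norm up to a factor is linear. -/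
lemma exists_isNormAut_of_map_zero (h0 : f 0 = 0)
    (hd : ∀ᶠ Z in 𝓝 0, DifferentiableAt ℂ f Z ∧ DifferentiableAt ℂ φ Z)
    (hN : ∀ᶠ Z in 𝓝 0, f Z ∈ typeIDomain p q ∧ genNormI (f Z) = normSq (φ Z) * genNormI Z) :
    ∃ ψ ψ' φ', IsNormAut (p := p) (q := q) ψ ψ' φ' ∧ ∀ᶠ Z in 𝓝 0, f Z = ψ Z ∧ φ Z = φ' Z := by
  have hpol := eventually_polNorm_eq hd hN
  obtain ⟨hκ, hφ⟩ := eventually_factor_eq h0 hpol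
  have hstar : Tendsto (fun x : (Fin p → Fin q → ℂ) × (Fin p → Fin q → ℂ) => star x.2)
      (𝓝 (0, 0)) (𝓝 0) := by
    have := (show Continuous fun x : (Fin p → Fin q → ℂ) × (Fin p → Fin q → ℂ) => star x.2 by
      fun_prop).tendsto (0, 0)
    simpa using this
  have hfst : Tendsto (fun x : (Fin p → Fin q → ℂ) × (Fin p → Fin q → ℂ) => x.1)
      (𝓝 (0, 0)) (𝓝 0) := continuous_fst.tendsto _
  have hpol' : ∀ᶠ x : (Fin p → Fin q → ℂ) × (Fin p → Fin q → ℂ) in 𝓝 (0, 0),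
      polNorm (f x.1) (star (f (star x.2))) = polNorm x.1 x.2 := by
    filter_upwards [hpol, hfst.eventually hφ, hstar.eventually hφ] with x h1 h2 h3
    rw [h1, h2, h3, star_def, mul_conj, hκ, ofReal_one, one_mul]
  obtain ⟨T, hT⟩ := exists_linearEquiv_eventually_eq h0 hd.self_of_nhds.1 hpol'
  have hTpol : ∀ᶠ x : (Fin p → Fin q → ℂ) × (Fin p → Fin q → ℂ) in 𝓝 (0, 0),
      polNorm (T x.1) (star (T (star x.2))) = polNorm x.1 x.2 := by
    filter_upwards [hpol', hfst.eventually hT, hstar.eventually hT] with x h1 h2 h3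
    rw [← h2, ← h3, h1]
  exact ⟨T, T.symm, _, isNormAut_of_polNorm (polNorm_apply_apply hTpol) hκ, hT.and hφ⟩

/-- A germ that preserves the norm up to a factor extends to an automorphism. -/
theorem exists_isNormAut_of_germ {Z₁ : Fin p → Fin q → ℂ} (hZ₁ : Z₁ ∈ typeIDomain p q)
    (hd : ∀ᶠ Z in 𝓝 Z₁, DifferentiableAt ℂ f Z ∧ DifferentiableAt ℂ φ Z)
    (hN : ∀ᶠ Z in 𝓝 Z₁, f Z ∈ typeIDomain p q ∧ genNormI (f Z) = normSq (φ Z) * genNormI Z) :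
    ∃ ψ ψ' φ', IsNormAut (p := p) (q := q) ψ ψ' φ' ∧ ∀ᶠ Z in 𝓝 Z₁, f Z = ψ Z ∧ φ Z = φ' Z := by
  obtain ⟨α, α', a, hα, hα0⟩ := exists_isNormAut_apply_eq_zero hN.self_of_nhds.1
  obtain ⟨β, β', b, hβ, hβ0⟩ := exists_isNormAut_apply_eq_zero hZ₁
  have hβ'0 : β' 0 = Z₁ := by rw [← hβ0, hβ.left_inv hZ₁]
  have hΩ0 : ∀ᶠ Z in 𝓝 (0 : Fin p → Fin q → ℂ), Z ∈ typeIDomain p q :=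
    isOpen_typeIDomain.mem_nhds zero_mem_typeIDomain
  have hat : ∀ {E : Type} [NormedAddCommGroup E] [NormedSpace ℂ E]
      {g : (Fin p → Fin q → ℂ) → E} {Z : Fin p → Fin q → ℂ},
      DifferentiableOn ℂ g (typeIDomain p q) → Z ∈ typeIDomain p q → DifferentiableAt ℂ g Z :=
    fun hg hZ => hg.differentiableAt (isOpen_typeIDomain.mem_nhds hZ)
  have hβ't : Tendsto β' (𝓝 0) (𝓝 Z₁) := by
    have := (hat hβ.diff_inv zero_mem_typeIDomain).continuousAt.tendsto
    rwa [hβ'0] at this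
  have hβt : Tendsto β (𝓝 Z₁) (𝓝 0) := by
    have := (hat hβ.diff hZ₁).continuousAt.tendsto
    rwa [hβ0] at this
  obtain ⟨ψ, ψ', κ, hψ, heq⟩ := exists_isNormAut_of_map_zero
    (f := fun Z => α (f (β' Z))) (φ := fun Z => a (f (β' Z)) * φ (β' Z) * (b (β' Z))⁻¹)
    (by rw [hβ'0, hα0]) (by
      filter_upwards [hβ't.eventually (hd.and hN), hΩ0] with Z ⟨⟨h1, h2⟩, h3, _⟩ h4
      have hβd := hat hβ.diff_inv h4
      have h5 : DifferentiableAt ℂ (fun Z => f (β' Z)) Z := h1.comp Z hβd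
      have h6 : DifferentiableAt ℂ (fun Z => a (f (β' Z))) Z := (hat hα.diff_factor h3).comp Z h5
      have h7 : DifferentiableAt ℂ (fun Z => φ (β' Z)) Z := h2.comp Z hβd
      exact ⟨(hat hα.diff h3).comp Z h5, (h6.mul h7).mul (hat hβ.symm.diff_factor h4)⟩) (by
      filter_upwards [hβ't.eventually hN, hΩ0] with Z ⟨h3, h5⟩ h4
      refine ⟨hα.maps h3, ?_⟩
      rw [hα.norm_eq _ h3, h5, hβ.symm.norm_eq _ h4, map_mul, map_mul]
      ring)
  refine ⟨_, _, _, (hα.symm.comp hψ).comp hβ, ?_⟩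
  filter_upwards [hβt.eventually heq, hN, isOpen_typeIDomain.mem_nhds hZ₁] with Z ⟨h1, h2⟩ ⟨h3, _⟩ h4
  rw [hβ.left_inv h4] at h1 h2
  have h5 : α' (ψ (β Z)) = f Z := by rw [← h1, hα.left_inv h3]
  refine ⟨h5.symm, ?_⟩
  simp only [h5, ← h2]
  have h6 := hα.factor_ne_zero _ h3
  have h7 := hβ.factor_ne_zero _ h4
  field_simp

end OriginRigidity

/-- Parts (1) and (3) of the main theorem for `Ω₁ = Ω₂ = D^I_{p,q}` with
`min(p,q) ≥ 2`: a nonconstant holomorphic map defined near a piece of the circle bundle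
`Σ` and sending it into `Σ` coincides, on a nonempty open set, with a norm-preserving
holomorphic isomorphism `(Z,ξ) ↦ (ψ(Z), ξ·φ(Z))`; in particular the latter is a
biholomorphism of the disc bundle `D` onto itself. -/
theorem typeI_circle_bundle_rigidity (p q : ℕ) (hpq : 2 ≤ min p q)
    (U : Set ((Fin p → Fin q → ℂ) × ℂ)) (hUopen : IsOpen U) (hUconn : IsConnected U)
    (hUS : (U ∩ circTypeI p q).Nonempty)
    (F : ((Fin p → Fin q → ℂ) × ℂ) → ((Fin p → Fin q → ℂ) × ℂ))
    (hF : DifferentiableOn ℂ F U)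
    (hFnc : ¬ ∃ c, Set.EqOn F (fun _ => c) U)
    (hFmap : Set.MapsTo F (U ∩ circTypeI p q) (circTypeI p q)) :
    ∃ (ψ : (Fin p → Fin q → ℂ) → (Fin p → Fin q → ℂ)) (φ : (Fin p → Fin q → ℂ) → ℂ),
      Biholo ψ (typeIDomain p q) (typeIDomain p q) ∧
      DifferentiableOn ℂ φ (typeIDomain p q) ∧
      (∀ Z ∈ typeIDomain p q, φ Z ≠ 0) ∧
      (∀ Z ∈ typeIDomain p q, genNormI (ψ Z) = Complex.normSq (φ Z) * genNormI Z) ∧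
      (∃ V : Set ((Fin p → Fin q → ℂ) × ℂ), IsOpen V ∧ V.Nonempty ∧ V ⊆ U ∧
        Set.EqOn F (fun P => (ψ P.1, P.2 * φ P.1)) V) ∧
      Biholo (fun P : (Fin p → Fin q → ℂ) × ℂ => (ψ P.1, P.2 * φ P.1))
        (discTypeI p q) (discTypeI p q) := by
  have : Nontrivial (Fin p) := Fin.nontrivial_iff_two_le.2 (hpq.trans (min_le_left p q))
  have : Nontrivial (Fin q) := Fin.nontrivial_iff_two_le.2 (hpq.trans (min_le_right p q))
  obtain ⟨P₁, f, φ₁, hP₁, hd, hform⟩ := exists_bundle_form hUopen hUconn hUS hF hFnc hFmap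
  obtain ⟨ψ, ψ', φ, h, hgerm⟩ := exists_isNormAut_of_germ hP₁.2.1 hd
    (eventually_genNormI_eq_of_bundle_form hUopen hP₁ hFmap hform)
  refine ⟨ψ, φ, h.biholo, h.diff_factor, h.factor_ne_zero, h.norm_eq, ?_, h.biholo_disc⟩
  have hev : ∀ᶠ P in 𝓝 P₁, P ∈ U ∧ F P = (ψ P.1, P.2 * φ P.1) := by
    filter_upwards [hUopen.mem_nhds hP₁.1, hform,
      (continuous_fst.tendsto P₁).eventually hgerm] with P h1 h2 ⟨h3, h4⟩
    exact ⟨h1, by rw [h2, h3, h4]⟩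
  obtain ⟨V, hV, hVo, hPV⟩ := eventually_nhds_iff.1 hev
  exact ⟨V, hVo, ⟨P₁, hPV⟩, fun P hP => (hV P hP).1, fun P hP => (hV P hP).2⟩
end
end

section
/- Let n ≥ 1 and let k₁,…,kₙ be positive integers; set ρ(z,w) = ∏_{j=1}^n (1 − z_j w_j)^{k_j} for z,w ∈ ℂⁿ. Let U ⊆ ℂⁿ be a nonempty open set, let b be a nonconstant polynomial in the n+1 variables (w,η) ∈ ℂⁿ × ℂ, and let V be a nonempty subset of the zero set Z(b) = {(w,η) : b(w,η)=0} that is relatively open in Z(b) and satisfies η ≠ 0 for every (w,η) ∈ V. Then the set W = {(z, ρ(z,w)/η) : z ∈ U, (w,η) ∈ V} ⊆ ℂⁿ × ℂ has nonempty interior in ℂ^{n+1}. -/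
noncomputable section

open Complex

/-- The complexified generic norm `ρ(z,w) = ∏_j (1 − z_j w_j)^{k_j}` of the polydisc. -/
def rhoC {n : ℕ} (k : Fin n → ℕ) (z w : Fin n → ℂ) : ℂ :=
  ∏ j, (1 - z j * w j) ^ (k j)

/-- The zero set in `ℂⁿ × ℂ` of a polynomial `b` in the variables `(w, η)`. -/
def zeroSet {n : ℕ} (b : MvPolynomial (Fin n ⊕ Unit) ℂ) : Set ((Fin n → ℂ) × ℂ) :=
  {P | MvPolynomial.eval (Sum.elim P.1 (fun _ => P.2)) b = 0}

open Filter Topology Metric Set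

/-- A nonzero polynomial over `ℂ` does not vanish identically on a nonempty open set. -/
lemma MvPolynomial.exists_mem_eval_ne_zero_of_isOpen {σ : Type*} [Finite σ]
    {p : MvPolynomial σ ℂ} (hp : p ≠ 0) {U : Set (σ → ℂ)} (hU : IsOpen U) (hne : U.Nonempty) :
    ∃ z ∈ U, MvPolynomial.eval z p ≠ 0 := by
  obtain ⟨x, hx⟩ := hne
  by_contra! h
  have hUx := hU.mem_nhds hx
  rw [nhds_pi, Filter.mem_pi] at hUx
  obtain ⟨I, -, t, ht, htU⟩ := hUx
  refine hp (MvPolynomial.funext_set t (fun i => infinite_of_mem_nhds (x i) (ht i)) fun y hy => ?_)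
  rw [h y (htU fun i _ => hy i (mem_univ i)), map_zero]

/-- Persistence of zeros (Hurwitz) for a family of entire functions depending continuously on a
parameter: an isolated zero at the origin moves to a nearby zero. -/
lemma eventually_exists_zero_of_differentiable {X : Type*} [TopologicalSpace X] {x₀ : X}
    {G : X → ℂ → ℂ} (hcont : ∀ t, ContinuousAt (Function.uncurry G) (x₀, t))
    (hdiff : ∀ x, Differentiable ℂ (G x)) (hzero : G x₀ 0 = 0) {s : ℂ} (hs : G x₀ s ≠ 0)
    {N : Set (X × ℂ)} (hN : N ∈ 𝓝 (x₀, (0 : ℂ))) :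
    ∀ᶠ x in 𝓝 x₀, ∃ t, (x, t) ∈ N ∧ G x t = 0 := by
  have han (x : X) : AnalyticOnNhd ℂ (G x) univ := fun t _ => (hdiff x).analyticAt t
  have hiso : ∀ᶠ t in 𝓝[≠] (0 : ℂ), G x₀ t ≠ 0 :=
    ((han x₀) 0 trivial).eventually_eq_zero_or_eventually_ne_zero.resolve_left fun h =>
      hs ((han x₀).eqOn_zero_of_preconnected_of_eventuallyEq_zero isPreconnected_univ trivial h
        trivial)
  rw [nhds_prod_eq, mem_prod_iff] at hN
  obtain ⟨A, hA, B, hB, hAB⟩ := hN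
  obtain ⟨r, hr, hrB⟩ := nhds_basis_closedBall.mem_iff.1
    (inter_mem hB (eventually_nhdsWithin_iff.1 hiso))
  have hsphere : ∀ t ∈ sphere (0 : ℂ) r, G x₀ t ≠ 0 := fun t ht =>
    (hrB (sphere_subset_closedBall ht)).2 (ne_of_mem_sphere ht hr.ne')
  have hcompact := isCompact_sphere (0 : ℂ) r
  obtain ⟨t₁, ht₁, hmin⟩ := hcompact.exists_isMinOn (NormedSpace.sphere_nonempty.2 hr.le)
    (hdiff x₀).continuous.norm.continuousOn
  obtain ⟨ε, hε, hεt⟩ := exists_between (norm_pos_iff.2 (hsphere t₁ ht₁))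
  have hcont₀ : ContinuousAt (fun x => G x 0) x₀ :=
    (hcont 0).comp (f := fun x => (x, (0 : ℂ))) (by fun_prop)
  have hlarge : ∀ᶠ x in 𝓝 x₀, ∀ t ∈ sphere (0 : ℂ) r, ε ≤ ‖G x t - G x 0‖ := by
    refine hcompact.eventually_forall_of_forall_eventually fun t ht => ?_
    have h₀ : ContinuousAt (fun q : X × ℂ => G q.1 0) (x₀, t) :=
      ContinuousAt.comp (f := Prod.fst) (g := fun x => G x 0) hcont₀ continuousAt_fst
    have hlim : ε < ‖Function.uncurry G (x₀, t) - G x₀ 0‖ := by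
      rw [hzero, sub_zero]
      exact hεt.trans_le (hmin ht)
    exact (((hcont t).sub h₀).norm.eventually (lt_mem_nhds hlim)).mono fun q hq => hq.le
  have hsmall : ∀ᶠ x in 𝓝 x₀, ‖G x 0‖ < ε / 2 :=
    hcont₀.norm.eventually (gt_mem_nhds (by simpa [hzero] using hε))
  filter_upwards [hA, hlarge, hsmall] with x hxA hxl hxs
  have hfreq : ∃ᶠ t in 𝓝 (0 : ℂ), G x t ≠ G x 0 := by
    intro h
    have heq := (han x).eqOn_of_preconnected_of_eventuallyEq (analyticOnNhd_const (v := G x 0))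
      isPreconnected_univ (mem_univ 0) (h.mono fun t ht => not_not.1 ht)
    have := hxl t₁ ht₁
    rw [heq (mem_univ t₁), sub_self, norm_zero] at this
    exact this.not_gt hε
  obtain ⟨t, ht, htz⟩ := (hdiff x).diffContOnCl.ball_subset_image_closedBall hr hxl hfreq
    (show (0 : ℂ) ∈ ball (G x 0) (ε / 2) by rwa [mem_ball, dist_zero_left])
  exact ⟨t, hAB ⟨hxA, (hrB ht).1⟩, htz⟩

/-- The map `z ↦ ρ(z,w)` as a polynomial. -/
def rhoPoly {n : ℕ} (k : Fin n → ℕ) (w : Fin n → ℂ) : MvPolynomial (Fin n) ℂ :=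
  ∏ j, (1 - MvPolynomial.X j * MvPolynomial.C (w j)) ^ k j

lemma eval_rhoPoly {n : ℕ} (k : Fin n → ℕ) (z w : Fin n → ℂ) :
    MvPolynomial.eval z (rhoPoly k w) = rhoC k z w := by
  simp [rhoPoly, rhoC]

lemma rhoC_zero_left {n : ℕ} (k : Fin n → ℕ) (w : Fin n → ℂ) : rhoC k 0 w = 1 := by
  simp [rhoC]

lemma rhoC_single_left {n : ℕ} (k : Fin n → ℕ) (w : Fin n → ℂ) (i : Fin n) (t : ℂ) :
    rhoC k (Pi.single i t) w = (1 - t * w i) ^ k i := by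
  rw [rhoC, Finset.prod_eq_single i]
  · simp
  · intro j _ hj
    simp [hj]
  · simp

lemma rhoPoly_ne_zero {n : ℕ} (k : Fin n → ℕ) (w : Fin n → ℂ) : rhoPoly k w ≠ 0 := fun h => by
  simpa [h, rhoC_zero_left] using eval_rhoPoly k 0 w

lemma rhoPoly_injective {n : ℕ} {k : Fin n → ℕ} (hk : ∀ j, 0 < k j) :
    Function.Injective (rhoPoly k) := by
  intro w w' h
  have key (i : Fin n) (t : ℂ) : (1 - t * w i) ^ k i = (1 - t * w' i) ^ k i := by
    rw [← rhoC_single_left, ← rhoC_single_left, ← eval_rhoPoly, ← eval_rhoPoly, h]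
  have aux {a a' : ℂ} {m : ℕ} (hm : 0 < m) (ha : a ≠ 0)
      (h : ∀ t : ℂ, (1 - t * a) ^ m = (1 - t * a') ^ m) : a = a' := by
    have h1 := h a⁻¹
    rw [inv_mul_cancel₀ ha, sub_self, zero_pow hm.ne'] at h1
    have h2 := sub_eq_zero.1 (eq_zero_of_pow_eq_zero h1.symm)
    field_simp at h2
    exact h2
  funext i
  by_cases hi : w i = 0
  · by_cases hi' : w' i = 0
    · rw [hi, hi']
    · exact (aux (hk i) hi' fun t => (key i t).symm).symm
  · exact aux (hk i) hi (key i)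

/-- For `w ≠ w₀` and a nonzero univariate polynomial `p`, the quotient
`η₀ ρ(z,w) / ρ(z,w₀)` avoids the roots of `p` for some `z` in any nonempty open set. -/
lemma exists_mem_eval_rhoC_div_ne_zero {n : ℕ} {k : Fin n → ℕ} (hk : ∀ j, 0 < k j)
    {U : Set (Fin n → ℂ)} (hU : IsOpen U) (hne : U.Nonempty) {w w₀ : Fin n → ℂ} (hw : w ≠ w₀)
    {η₀ : ℂ} (hη₀ : η₀ ≠ 0) {p : Polynomial ℂ} (hp : p ≠ 0) :
    ∃ z ∈ U, rhoC k z w₀ ≠ 0 ∧ p.eval (rhoC k z w / (rhoC k z w₀ / η₀)) ≠ 0 := by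
  classical
  have hfactor (r : ℂ) :
      MvPolynomial.C η₀ * rhoPoly k w - MvPolynomial.C r * rhoPoly k w₀ ≠ 0 := by
    intro h
    have hr : η₀ = r := by
      have := congrArg (MvPolynomial.eval 0) h
      simpa only [map_sub, map_mul, map_zero, MvPolynomial.eval_C, eval_rhoPoly, rhoC_zero_left,
        mul_one, sub_eq_zero] using this
    rw [← hr, ← mul_sub] at h
    have hC : (MvPolynomial.C η₀ : MvPolynomial (Fin n) ℂ) ≠ 0 := by simpa using hη₀
    exact hw (rhoPoly_injective hk (sub_eq_zero.1 ((mul_eq_zero.1 h).resolve_left hC)))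
  have hQ : rhoPoly k w₀ * ∏ r ∈ p.roots.toFinset,
      (MvPolynomial.C η₀ * rhoPoly k w - MvPolynomial.C r * rhoPoly k w₀) ≠ 0 :=
    mul_ne_zero (rhoPoly_ne_zero k w₀) (Finset.prod_ne_zero_iff.2 fun r _ => hfactor r)
  obtain ⟨z, hz, hzQ⟩ := MvPolynomial.exists_mem_eval_ne_zero_of_isOpen hQ hU hne
  simp only [map_mul, map_prod, map_sub, MvPolynomial.eval_C, eval_rhoPoly] at hzQ
  have hρ := left_ne_zero_of_mul hzQ
  refine ⟨z, hz, hρ, fun hroot => ?_⟩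
  refine Finset.prod_ne_zero_iff.1 (right_ne_zero_of_mul hzQ) _
    (Multiset.mem_toFinset.2 ((Polynomial.mem_roots hp).2 hroot)) ?_
  field_simp
  ring

/-- A nonzero polynomial in `(w, η)` is nonzero at some point with `w ≠ w₀`. -/
lemma exists_eval_ne_zero_of_ne {n : ℕ} (hn : 1 ≤ n) {b : MvPolynomial (Fin n ⊕ Unit) ℂ}
    (hb : b ≠ 0) (w₀ : Fin n → ℂ) :
    ∃ (w : Fin n → ℂ) (η : ℂ), w ≠ w₀ ∧ MvPolynomial.eval (Sum.elim w fun _ => η) b ≠ 0 := by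
  let i : Fin n := ⟨0, hn⟩
  have hX : (MvPolynomial.X (Sum.inl i) - MvPolynomial.C (w₀ i) :
      MvPolynomial (Fin n ⊕ Unit) ℂ) ≠ 0 := fun h => by
    simpa using congrArg (MvPolynomial.eval fun _ => w₀ i + 1) h
  obtain ⟨x, -, hx⟩ := MvPolynomial.exists_mem_eval_ne_zero_of_isOpen (mul_ne_zero hX hb)
    isOpen_univ univ_nonempty
  rw [map_mul] at hx
  refine ⟨fun j => x (Sum.inl j), x (Sum.inr ()), fun h => left_ne_zero_of_mul hx ?_, ?_⟩
  · simp [← congrFun h i]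
  · convert right_ne_zero_of_mul hx using 3
    ext (j | j) <;> rfl

/-- Lemma 3.3 of the paper, specialized to the polydisc: the set
`W = {(z, ρ(z,w)/η) : z ∈ U, (w,η) ∈ V}` has nonempty interior, whenever `U` is a
nonempty open subset of `ℂⁿ` and `V` is a nonempty relatively open subset of the zero set
of a nonconstant polynomial `b(w,η)` on which `η ≠ 0`. -/
theorem reflection_sweeps_open_set (n : ℕ) (hn : 1 ≤ n)
    (k : Fin n → ℕ) (hk : ∀ j, 0 < k j)
    (U : Set (Fin n → ℂ)) (hUopen : IsOpen U) (hUne : U.Nonempty)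
    (b : MvPolynomial (Fin n ⊕ Unit) ℂ) (hb : ¬ ∃ c : ℂ, b = MvPolynomial.C c)
    (V : Set ((Fin n → ℂ) × ℂ)) (hVne : V.Nonempty)
    (hVopen : ∃ O : Set ((Fin n → ℂ) × ℂ), IsOpen O ∧ V = zeroSet b ∩ O)
    (hVeta : ∀ P ∈ V, P.2 ≠ 0) :
    (interior ((fun x : (Fin n → ℂ) × ((Fin n → ℂ) × ℂ) =>
      ((x.1, rhoC k x.1 x.2.1 / x.2.2) : (Fin n → ℂ) × ℂ)) '' (U ×ˢ V))).Nonempty := by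
  obtain ⟨O, hO, rfl⟩ := hVopen
  obtain ⟨⟨w₀, η₀⟩, hP⟩ := hVne
  have hη₀ : η₀ ≠ 0 := hVeta _ hP
  have hb₀ : b ≠ 0 := fun h => hb ⟨0, by rw [h, map_zero]⟩
  obtain ⟨w, η, hw, hbw⟩ := exists_eval_ne_zero_of_ne hn hb₀ w₀
  let p : Polynomial ℂ :=
    MvPolynomial.aeval (Sum.elim (fun j => Polynomial.C (w j)) fun _ => Polynomial.X) b
  have hp_eval (t : ℂ) : p.eval t = MvPolynomial.eval (Sum.elim w fun _ => t) b := by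
    rw [← Polynomial.coe_aeval_eq_eval, ← AlgHom.comp_apply, MvPolynomial.comp_aeval,
      ← MvPolynomial.aeval_eq_eval]
    congr 2
    ext (j | j) <;> simp
  have hp : p ≠ 0 := fun h => hbw (by rw [← hp_eval, h, Polynomial.eval_zero])
  obtain ⟨z₀, hz₀, hρ₀, hpz⟩ := exists_mem_eval_rhoC_div_ne_zero hk hUopen hUne hw hη₀ hp
  set c₀ : ℂ := rhoC k z₀ w₀ / η₀ with hc₀_def
  have hc₀ : c₀ ≠ 0 := div_ne_zero hρ₀ hη₀
  -- The hypersurface point over `(z, c)` on the line `t ↦ w₀ + t (w - w₀)`.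
  let line : ℂ → Fin n → ℂ := fun t => w₀ + t • (w - w₀)
  let Φ : ((Fin n → ℂ) × ℂ) → ℂ → (Fin n → ℂ) × ℂ := fun x t =>
    (line t, rhoC k x.1 (line t) / x.2)
  let G : ((Fin n → ℂ) × ℂ) → ℂ → ℂ := fun x t =>
    MvPolynomial.eval (Sum.elim (Φ x t).1 fun _ => (Φ x t).2) b
  have hΦ (t : ℂ) : ContinuousAt (Function.uncurry Φ) ((z₀, c₀), t) := by
    have hρ : Continuous fun q : ((Fin n → ℂ) × ℂ) × ℂ => rhoC k q.1.1 (line q.2) := by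
      simp only [rhoC, line]
      fun_prop
    have hline : Continuous fun q : ((Fin n → ℂ) × ℂ) × ℂ => line q.2 := by
      simp only [line]
      fun_prop
    exact hline.continuousAt.prodMk
      (hρ.continuousAt.div (continuous_snd.comp continuous_fst).continuousAt hc₀)
  have hG (t : ℂ) : ContinuousAt (Function.uncurry G) ((z₀, c₀), t) := by
    have hev : Continuous fun P : (Fin n → ℂ) × ℂ =>
        MvPolynomial.eval (Sum.elim P.1 fun _ => P.2) b := by
      refine (MvPolynomial.continuous_eval b).comp (continuous_pi ?_)
      rintro (j | j) <;> simp only [Sum.elim_inl, Sum.elim_inr] <;> fun_prop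
    exact hev.continuousAt.comp (hΦ t)
  have hGdiff (x : (Fin n → ℂ) × ℂ) : Differentiable ℂ (G x) := by
    have hcoord : ∀ i, AnalyticOnNhd ℂ
        (fun t => (Sum.elim (Φ x t).1 fun _ => (Φ x t).2 : Fin n ⊕ Unit → ℂ) i) univ := by
      rintro (j | j) <;> refine DifferentiableOn.analyticOnNhd ?_ isOpen_univ <;>
        simp only [Sum.elim_inl, Sum.elim_inr, Φ, line, rhoC, Pi.add_apply, Pi.smul_apply] <;>
        fun_prop
    exact differentiableOn_univ.1 (AnalyticOnNhd.aeval_mvPolynomial hcoord b).differentiableOn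
  have hΦ₀ : Φ (z₀, c₀) 0 = (w₀, η₀) := by
    have hline₀ : line 0 = w₀ := by simp [line]
    refine Prod.ext hline₀ ?_
    change rhoC k z₀ (line 0) / c₀ = η₀
    rw [hline₀, hc₀_def, div_div_cancel₀ hρ₀]
  have hG₀ : G (z₀, c₀) 0 = 0 := by
    simp only [G, hΦ₀]
    exact hP.1
  have hG₁ : G (z₀, c₀) 1 ≠ 0 := by
    have hline₁ : line 1 = w := by simp [line]
    rw [hp_eval] at hpz
    simpa only [G, Φ, hline₁] using hpz
  have hN : Function.uncurry Φ ⁻¹' O ∈ 𝓝 ((z₀, c₀), (0 : ℂ)) :=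
    (hΦ 0).preimage_mem_nhds (hO.mem_nhds (by
      change Φ (z₀, c₀) 0 ∈ O
      rw [hΦ₀]
      exact hP.2))
  refine ⟨(z₀, c₀), mem_interior_iff_mem_nhds.2 ?_⟩
  filter_upwards [eventually_exists_zero_of_differentiable hG hGdiff hG₀ hG₁ hN,
    continuousAt_fst.preimage_mem_nhds (hUopen.mem_nhds hz₀)] with x ⟨t, htO, htG⟩ hxU
  have hV : Φ x t ∈ zeroSet b ∩ O := ⟨htG, htO⟩
  refine ⟨(x.1, Φ x t), ⟨hxU, hV⟩, Prod.ext rfl ?_⟩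
  have hne : rhoC k x.1 (line t) ≠ 0 := fun h =>
    hVeta _ hV (by simp only [Φ, h, zero_div])
  exact div_div_cancel₀ hne
end
end
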